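/- arXiv:2210.04649 — 4 statements merged into one kernel-verified Lean document; each statement's English description precedes it below -/
import Mathlib

section
/- Every decomposable claw-free graph G with maximum degree 3 satisfies χ'_irr(G) ≤ 3, i.e., G admits a locally irregular edge-coloring using at most 3 colors. -/
/-- A graph is *locally irregular* if no two adjacent vertices have the same degree. -/
def LocallyIrregular {V : Type*} (G : SimpleGraph V) : Prop :=
  ∀ ⦃u v : V⦄, G.Adj u v → (G.neighborSet u).ncard ≠ (G.neighborSet v).ncard

/-- `HasLIEC G k` : `G` admits a locally irregular edge-coloring using at most `k` colors,
i.e. an assignment of one of `k` colors to every edge such that the edges of each fixed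
color induce a locally irregular graph. -/
def HasLIEC {V : Type*} (G : SimpleGraph V) (k : ℕ) : Prop :=
  ∃ c : Sym2 V → Fin k, ∀ i : Fin k,
    LocallyIrregular (SimpleGraph.fromEdgeSet {e | e ∈ G.edgeSet ∧ c e = i})

/-- A graph is *decomposable* if it admits a locally irregular edge-coloring. -/
def Decomposable {V : Type*} (G : SimpleGraph V) : Prop :=
  ∃ k : ℕ, HasLIEC G k

/-- A graph is *claw-free* if it contains no induced subgraph isomorphic to `K_{1,3}`. -/
def ClawFree {V : Type*} (G : SimpleGraph V) : Prop :=
  ¬ ∃ v a b c : V, a ≠ b ∧ a ≠ c ∧ b ≠ c ∧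
      G.Adj v a ∧ G.Adj v b ∧ G.Adj v c ∧ ¬ G.Adj a b ∧ ¬ G.Adj a c ∧ ¬ G.Adj b c

/-- `G` has maximum degree at most `d`. -/
def MaxDegreeLE {V : Type*} (G : SimpleGraph V) (d : ℕ) : Prop :=
  ∀ v : V, (G.neighborSet v).ncard ≤ d

set_option linter.unusedSectionVars false
set_option linter.unusedVariables false
namespace LI

def extc (st : Option (Fin 3 × Fin 4)) (i : Fin 3) : ℕ :=
  match st with
  | none => 0
  | some (j, _) => if j = i then 1 else 0

def okm (m : Fin 4) (D : ℕ) : Bool :=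
  match m with
  | 0 => D == 2
  | 1 => D == 3
  | 2 => D != 2
  | 3 => D != 3

def okst (st : Option (Fin 3 × Fin 4)) (D : Fin 3 → ℕ) : Bool :=
  match st with
  | none => true
  | some (i, m) => okm m (D i)

def dT (x z : Fin 3) (st : Option (Fin 3 × Fin 4)) (i : Fin 3) : ℕ :=
  (if x = i then 1 else 0) + (if z = i then 1 else 0) + extc st i

def triC (sa sb sc : Option (Fin 3 × Fin 4)) (x y z : Fin 3) : Bool :=
  (dT x z sa x != dT x y sb x) && (dT x y sb y != dT z y sc y) && (dT x z sa z != dT z y sc z) &&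
  okst sa (dT x z sa) && okst sb (dT x y sb) && okst sc (dT z y sc)

def diaC (sp sq : Option (Fin 3 × Fin 4)) (a b c d e : Fin 3) : Bool :=
  let dm := dT a c (some (d, 0))
  let dn := dT b c (some (e, 0))
  (dT a b sp a != dm a) && (dT a b sp b != dn b) && (dm c != dn c) &&
  (dm d != dT d e sq d) && (dn e != dT d e sq e) && okst sp (dT a b sp) && okst sq (dT d e sq)

def tri (sa sb sc : Option (Fin 3 × Fin 4)) : Prop := ∃ x y z, triC sa sb sc x y z = true
def dia (sp sq : Option (Fin 3 × Fin 4)) : Prop := ∃ a b c d e, diaC sp sq a b c d e = true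
instance (sa sb sc) : Decidable (tri sa sb sc) := by unfold tri; infer_instance
instance (sa sb) : Decidable (dia sa sb) := by unfold dia; infer_instance

def two (i j k : Fin 3) : Prop := (i = j ∧ i ≠ k) ∨ (i ≠ j ∧ (i = k ∨ j = k))
instance (i j k) : Decidable (two i j k) := by unfold two; infer_instance

section
set_option maxRecDepth 100000
set_option maxHeartbeats 4000000
theorem t1_full : ∀ i j k : Fin 3, ∀ m m' : Fin 4, 2 ≤ m → 2 ≤ m' → two j k i →
   tri (some (i,0)) (some (j,m)) (some (k,m')) := by decide
theorem t1_none2 : ∀ i j : Fin 3, ∀ m : Fin 4, 2 ≤ m → 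
   tri (some (i,0)) (some (j,m)) none ∧ tri (some (i,0)) none (some (j,m)) := by decide
theorem t1_none : ∀ i : Fin 3, tri (some (i,0)) none none := by decide
theorem t2_none : ∀ i j : Fin 3, i ≠ j → tri (some (i,1)) (some (j,0)) none := by decide
theorem t2_rb : ∀ i j k : Fin 3, ∀ m : Fin 4, 2 ≤ m → i ≠ j → k ≠ i → k ≠ j → tri (some (i,1)) (some (j,0)) (some (k,m)) := by decide
theorem t2_s : ∀ i j : Fin 3, i ≠ j → tri (some (i,1)) (some (j,0)) (some (i,3)) := by decide
theorem t2_w : ∀ i j : Fin 3, i ≠ j → tri (some (i,0)) (some (j,0)) (some (i,2)) := by decide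
theorem t3_rb : ∀ i j k : Fin 3, i ≠ j → k ≠ i → k ≠ j → tri (some (i,0)) (some (j,0)) (some (k,0)) := by decide
theorem t3_e : ∀ i k : Fin 3, i ≠ k → tri (some (i,1)) (some (i,0)) (some (k,0)) := by decide

theorem d_nn : dia none none := by decide
theorem d_n : ∀ i : Fin 3, ∀ m : Fin 4, m ≠ 1 → dia (some (i,m)) none ∧ dia none (some (i,m)) := by decide
theorem d_f : ∀ i j : Fin 3, ∀ m m' : Fin 4, m ≠ 1 → m' ≠ 1 → dia (some (i,m)) (some (j,m')) := by decide

end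

/-- Local impossibility. -/
theorem tri_imp {α : Type*} [DecidableEq α] (x y z : α) (pa pb pc : Option α)
  (h1 : (if x = x then 1 else 0) + (if z = x then 1 else 0) + (if pa = some x then 1 else 0) ≠
    (if x = x then 1 else 0) + (if y = x then 1 else 0) + (if pb = some x then 1 else 0))
  (h2 : (if x = y then 1 else 0) + (if y = y then 1 else 0) + (if pb = some y then 1 else 0) ≠
    (if z = y then 1 else 0) + (if y = y then 1 else 0) + (if pc = some y then 1 else 0))
  (h3 : (if x = z then 1 else 0) + (if z = z then 1 else 0) + (if pa = some z then 1 else 0) ≠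
    (if z = z then 1 else 0) + (if y = z then 1 else 0) + (if pc = some z then 1 else 0))
  (ka : ∀ i, pa = some i → (if x = i then 1 else 0) + (if z = i then 1 else 0) + (if pa = some i then 1 else 0) ≠ 2)
  (kb : ∀ i, pb = some i → (if x = i then 1 else 0) + (if y = i then 1 else 0) + (if pb = some i then 1 else 0) ≠ 2)
  (kc : ∀ i, pc = some i → (if z = i then 1 else 0) + (if y = i then 1 else 0) + (if pc = some i then 1 else 0) ≠ 2) : False := by
  rcases pa with _ | pa <;> rcases pb with _ | pb <;> rcases pc with _ | pc <;> simp at * <;> grind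
end LI

namespace LI
section
variable {V : Type*} 

def Inn (G : SimpleGraph V) (u v : V) : Prop := G.Adj u v ∧ ∃ w, G.Adj u w ∧ G.Adj v w
def Outr (G : SimpleGraph V) (u v : V) : Prop := G.Adj u v ∧ ∀ w, G.Adj u w → ¬ G.Adj v w

def Tri (G : SimpleGraph V) (a b c : V) : Prop :=
  G.Adj a b ∧ G.Adj b c ∧ G.Adj a c ∧ (∀ w, G.Adj a w → G.Adj b w → w = c) ∧
  (∀ w, G.Adj b w → G.Adj c w → w = a) ∧ (∀ w, G.Adj a w → G.Adj c w → w = b)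

def Dm (G : SimpleGraph V) (p m n q : V) : Prop :=
  G.Adj p m ∧ G.Adj p n ∧ G.Adj m n ∧ G.Adj q m ∧ G.Adj q n ∧ p ≠ q

/-- Explicit neighbourhood. -/
def Loc (G : SimpleGraph V) (a b c : V) (o : Option V) : Prop :=
  b ≠ c ∧ (∀ t, o = some t → t ≠ b ∧ t ≠ c) ∧ ∀ w, G.Adj a w ↔ (w = b ∨ w = c ∨ o = some w)

def LocO (G : SimpleGraph V) (a b c : V) (o : Option V) : Prop :=
  Loc G a b c o ∧ Inn G a b ∧ Inn G a c ∧ ∀ t, o = some t → Outr G a t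

noncomputable def cdeg {α : Type*} (G : SimpleGraph V) (C : V → V → α) (v : V) (i : α) : ℕ :=
  {w | G.Adj v w ∧ C v w = i}.ncard

variable {G : SimpleGraph V}

theorem Inn.symm {u v : V} (h : Inn G u v) : Inn G v u := by
  obtain ⟨h, w, a, b⟩ := h; exact ⟨h.symm, w, b, a⟩
theorem Outr.symm {u v : V} (h : Outr G u v) : Outr G v u :=
  ⟨h.1.symm, fun w a b => h.2 w b a⟩
theorem outr_of {u v : V} (h : G.Adj u v) (h' : ¬ Inn G u v) : Outr G u v :=
  ⟨h, fun w a b => h' ⟨h, w, a, b⟩⟩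
theorem Inn.not {u v : V} (h : Inn G u v) : ¬ Outr G u v := by
  obtain ⟨h, w, a, b⟩ := h; exact fun h => h.2 w a b
theorem io {u v : V} (h : G.Adj u v) : Inn G u v ∨ Outr G u v := by
  by_cases h' : Inn G u v
  · exact .inl h'
  · exact .inr (outr_of h h')

theorem Tri.rot {a b c : V} (h : Tri G a b c) : Tri G b c a := by
  obtain ⟨h1, h2, h3, h4, h5, h6⟩ := h
  exact ⟨h2, h3.symm, h1.symm, h5, fun w x y => h6 w y x, fun w x y => h4 w y x⟩
theorem Tri.sw {a b c : V} (h : Tri G a b c) : Tri G a c b := by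
  obtain ⟨h1, h2, h3, h4, h5, h6⟩ := h
  exact ⟨h3, h2.symm, h1, h6, fun w x y => h5 w y x, h4⟩

variable [Finite V]

theorem h3 (hdeg : MaxDegreeLE G 3) {v a b c w : V} (ab : a ≠ b) (ac : a ≠ c) (bc : b ≠ c)
    (ha : G.Adj v a) (hb : G.Adj v b) (hc : G.Adj v c) (hw : G.Adj v w) : w = a ∨ w = b ∨ w = c := by
  classical
  by_contra hcon
  push Not at hcon
  have h1 : (({w, a, b, c} : Finset V) : Set V) ⊆ G.neighborSet v := by
    intro x hx; simp at hx; rcases hx with rfl | rfl | rfl | rfl <;> assumption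
  have h2 := Set.ncard_le_ncard h1
  rw [Set.ncard_coe_finset] at h2
  have h4 : ({w, a, b, c} : Finset V).card = 4 := by
    rw [Finset.card_insert_of_notMem, Finset.card_insert_of_notMem, Finset.card_insert_of_notMem] <;> simp <;> grind
  have := hdeg v
  omega

theorem loc_of (hdeg : MaxDegreeLE G 3) {a b c : V} (hb : G.Adj a b) (hc : G.Adj a c) (bc : b ≠ c) :
    ∃ o, Loc G a b c o := by
  by_cases h : ∃ t, G.Adj a t ∧ t ≠ b ∧ t ≠ c
  · obtain ⟨t, ht, tb, tc⟩ := h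
    refine ⟨some t, bc, by simp; grind, fun w => ⟨fun hw => ?_, ?_⟩⟩
    · have := h3 hdeg bc tb.symm tc.symm hb hc ht hw
      grind
    · grind
  · exact ⟨none, bc, by simp, fun w => ⟨fun hw => by grind, by grind⟩⟩

theorem loco_tri (hdeg : MaxDegreeLE G 3) {a b c : V} (h : Tri G a b c) : ∃ o, LocO G a b c o := by
  obtain ⟨h1, h2, h3, h4, h5, h6⟩ := h
  obtain ⟨o, ho⟩ := loc_of hdeg h1 h3 h2.ne
  refine ⟨o, ho, ⟨h1, c, h3, h2⟩, ⟨h3, b, h1, h2.symm⟩, fun t ht => ⟨(ho.2.2 t).2 (by simp [ht]), fun w hw hw' => ?_⟩⟩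
  have := ho.2.1 t ht
  have hat := (ho.2.2 t).2 (by simp [ht])
  rcases (ho.2.2 w).1 hw with rfl | rfl | h
  · exact this.2 (h4 t hat hw'.symm)
  · exact this.1 (h6 t hat hw'.symm)
  · rw [ht] at h; simp at h; subst h; exact hw'.ne rfl

theorem loco_dm (hdeg : MaxDegreeLE G 3) {p m n q : V} (h : Dm G p m n q) (hpq : ¬ G.Adj p q) :
    ∃ o, LocO G p m n o := by
  obtain ⟨h1, h2, h3', h4, h5, h6⟩ := h
  obtain ⟨o, ho⟩ := loc_of hdeg h1 h2 h3'.ne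
  refine ⟨o, ho, ⟨h1, n, h2, h3'⟩, ⟨h2, m, h1, h3'.symm⟩, fun t ht => ⟨(ho.2.2 t).2 (by simp [ht]), fun w hw hw' => ?_⟩⟩
  have := ho.2.1 t ht
  have hat := (ho.2.2 t).2 (by simp [ht])
  have hm := @h3 _ _ _ hdeg m p n q t h2.ne h6 h5.ne.symm h1.symm h3' h4.symm
  have hn := @h3 _ _ _ hdeg n p m q t h1.ne h6 h4.ne.symm h2.symm h3'.symm h5.symm
  rcases (ho.2.2 w).1 hw with rfl | rfl | h
  · rcases hm hw'.symm with rfl | rfl | rfl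
    · exact hat.ne rfl
    · exact this.2 rfl
    · exact hpq hat
  · rcases hn hw'.symm with rfl | rfl | rfl
    · exact hat.ne rfl
    · exact this.1 rfl
    · exact hpq hat
  · rw [ht] at h; simp at h; subst h; exact hw'.ne rfl

theorem loc_mid (hdeg : MaxDegreeLE G 3) {m p n q : V} (hp : G.Adj m p) (hn : G.Adj m n) (hq : G.Adj m q)
   (pn : p ≠ n) (pq : p ≠ q) (nq : n ≠ q) : Loc G m p n (some q) := by
  refine ⟨pn, by simp; grind, fun w => ⟨fun hw => ?_, by grind⟩⟩
  have := h3 hdeg pn pq nq hp hn hq hw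
  grind

theorem outr_two (hdeg : MaxDegreeLE G 3) (hcl : ClawFree G) {u v w x : V} (h : Outr G u v) (h' : Outr G u w)
    (hvw : v ≠ w) (hx : G.Adj u x) : x = v ∨ x = w := by
  by_contra hc
  push Not at hc
  exact hcl ⟨u, v, w, x, hvw, hc.1.symm, hc.2.symm, h.1, h'.1, hx, h.2 _ h'.1, h.2 _ hx, h'.2 _ hx⟩

theorem classify (v : V) : (∀ u, G.Adj v u → Outr G v u) ∨ (∃ b c, Tri G v b c) ∨
    ∃ p m n q, Dm G p m n q ∧ (v = p ∨ v = m ∨ v = n ∨ v = q) := by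
  by_cases h0 : ∃ u, Inn G v u
  · right
    obtain ⟨u, h, w, a, b⟩ := h0
    by_cases ht : Tri G v u w
    · exact .inl ⟨u, w, ht⟩
    · right
      by_cases k1 : ∃ x, G.Adj v x ∧ G.Adj u x ∧ x ≠ w
      · obtain ⟨x, x1, x2, x3⟩ := k1
        exact ⟨w, v, u, x, ⟨a.symm, b.symm, h, x1.symm, x2.symm, x3.symm⟩, by simp⟩
      by_cases k2 : ∃ x, G.Adj u x ∧ G.Adj w x ∧ x ≠ v
      · obtain ⟨x, x1, x2, x3⟩ := k2
        exact ⟨v, u, w, x, ⟨h, a, b, x1.symm, x2.symm, x3.symm⟩, by simp⟩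
      by_cases k3 : ∃ x, G.Adj v x ∧ G.Adj w x ∧ x ≠ u
      · obtain ⟨x, x1, x2, x3⟩ := k3
        exact ⟨u, v, w, x, ⟨h.symm, b, a, x1.symm, x2.symm, x3.symm⟩, by simp⟩
      exact (ht ⟨h, b, a, by grind, by grind, by grind⟩).elim
  · left
    intro u hu
    exact outr_of hu (fun h => h0 ⟨u, h⟩)

theorem cdeg_loc {α : Type*} [DecidableEq α] (C : V → V → α) {a b c : V} {o : Option V} (h : Loc G a b c o) (i : α) :
    cdeg G C a i = (if C a b = i then 1 else 0) + (if C a c = i then 1 else 0) +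
      (if o.map (C a) = some i then 1 else 0) := by
  classical
  obtain ⟨bc, ho, hN⟩ := h
  have : {w | G.Adj a w ∧ C a w = i} = ((((insert b (insert c o.toFinset)) : Finset V).filter (fun w => C a w = i) : Finset V) : Set V) := by
    ext w; simp [hN]
  unfold cdeg
  rw [this, Set.ncard_coe_finset]
  rw [Finset.card_filter]
  rw [Finset.sum_insert, Finset.sum_insert]
  · cases o <;> simp [add_assoc, Finset.sum_singleton, Finset.filter_singleton, apply_ite Finset.card]
  · cases o <;> simp at *; grind
  · cases o <;> simp at * <;> grind

theorem cdeg_two {α : Type*} [DecidableEq α] (C : V → V → α) {a b c : V}  (bc : b ≠ c) (h : ∀ w, G.Adj a w ↔ (w = b ∨ w = c)) (i : α) :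
    cdeg G C a i = (if C a b = i then 1 else 0) + (if C a c = i then 1 else 0) := by
  rw [cdeg_loc C (o := none) ⟨bc, by simp, by simpa using h⟩]; simp

theorem cdeg_one {α : Type*} [DecidableEq α] (C : V → V → α) {a b : V} (h : ∀ w, G.Adj a w ↔ w = b) (i : α) :
    cdeg G C a i = (if C a b = i then 1 else 0) := by
  unfold cdeg
  split_ifs with hh
  · rw [Set.ncard_eq_one]; exact ⟨b, by ext w; simp [h]; grind⟩
  · rw [Set.ncard_eq_zero]; ext w; simp [h]; grind

theorem cdeg_le {α : Type*} (hdeg : MaxDegreeLE G 3) (C : V → V → α) (v : V) (i : α) : cdeg G C v i ≤ 3 :=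
  (Set.ncard_le_ncard (fun w hw => hw.1)).trans (hdeg v)

theorem cdeg_pos {α : Type*} (C : V → V → α) {v w : V} (h : G.Adj v w) : 0 < cdeg G C v (C v w) := by
  unfold cdeg
  rw [Set.ncard_pos]; exact ⟨w, h, rfl⟩

/-! inner graph -/
def IG (G : SimpleGraph V) : SimpleGraph V where
  Adj := Inn G
  symm := ⟨fun _ _ h => h.symm⟩
  loopless := ⟨fun _ h => h.1.ne rfl⟩

def blk (G : SimpleGraph V) (v : V) : (IG G).ConnectedComponent := (IG G).connectedComponentMk v

theorem blk_inn {u v : V} (h : Inn G u v) : blk G u = blk G v :=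
  SimpleGraph.ConnectedComponent.connectedComponentMk_eq_of_adj (G := IG G) h

theorem blk_closed (S : V → Prop) (hS : ∀ u v, S u → Inn G u v → S v) {v w : V} (hv : S v) (h : blk G w = blk G v) : S w := by
  have h := (SimpleGraph.ConnectedComponent.eq (G := IG G)).1 h.symm
  obtain ⟨p⟩ := h
  clear h
  induction p with
  | nil => exact hv
  | cons h' p ih => exact ih (hS _ _ hv h')

end
end LI

namespace LI
section
variable {V : Type*} {G : SimpleGraph V} [Finite V]

structure Ori (G : SimpleGraph V) (O : V → Prop) : Prop where
  o1 : ∀ u v, Outr G u v → (O u ↔ ¬ O v)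
  o3 : ∀ u v, (∀ w, G.Adj v w ↔ w = u) → ¬ O v
  o4 : ∀ a b c, Tri G a b c → O a ∨ O b ∨ O c
  o0 : ∀ v, O v → ∃ w, Outr G v w

theorem exists_ori (hdeg : MaxDegreeLE G 3) (hcl : ClawFree G) (hdec : Decomposable G) : ∃ O, Ori G O := by
  obtain ⟨k, c0, hc0⟩ := hdec
  let C : V → V → Fin k := fun u v => c0 s(u, v)
  have Csym : ∀ u v, C u v = C v u := fun u v => by simp only [C]; rw [Sym2.eq_swap]
  have hirr : ∀ u v, G.Adj u v → cdeg G C u (C u v) ≠ cdeg G C v (C u v) := by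
    intro u v huv
    have h := @hc0 (C u v) u v (by simp [C, huv, huv.ne])
    have e : ∀ x, (SimpleGraph.fromEdgeSet {e | e ∈ G.edgeSet ∧ c0 e = C u v}).neighborSet x = {w | G.Adj x w ∧ C x w = C u v} := by
      intro x; ext w; simp [C]; intro h _; exact h.ne
    rw [e, e] at h; exact h
  let D : V → V → ℕ := fun u v => cdeg G C u (C u v)
  have hD : ∀ u v, G.Adj u v → D u v ≠ D v u := by
    intro u v h; have := hirr u v h; simp only [D]; rwa [Csym v u]
  have hDp : ∀ u v, G.Adj u v → 0 < D u v := fun u v h => cdeg_pos C h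
  have hDl : ∀ u v, D u v ≤ 3 := fun u v => cdeg_le hdeg C u _
  let P : V → V → Prop := fun u v => D u v = 2 ∨ (D u v = 3 ∧ D v u = 1)
  have hP : ∀ u v, G.Adj u v → (P u v ↔ ¬ P v u) := by
    intro u v h
    have := hD u v h; have := hDp u v h; have := hDp v u h.symm; have := hDl u v; have := hDl v u
    simp only [P]; omega
  have hcons : ∀ u v w, Outr G u v → Outr G u w → P u v → P u w := by
    intro u v w hv hw hp
    by_cases hvw : v = w
    · rwa [← hvw]
    have hN : ∀ x, G.Adj u x ↔ (x = v ∨ x = w) := fun x =>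
      ⟨fun hx => outr_two hdeg hcl hv hw hvw hx, by rintro (rfl | rfl); exacts [hv.1, hw.1]⟩
    simp only [P, D] at hp ⊢
    rw [cdeg_two C hvw hN] at hp ⊢
    left
    by_cases e : C u w = C u v
    · simp [e]
    · simp [e] at hp
  have hOP : ∀ u v, Outr G u v → ((∃ w, Outr G u w ∧ P u w) ↔ P u v) := by
    intro u v h
    exact ⟨fun ⟨w, h1, h2⟩ => hcons u w v h1 h h2, fun h' => ⟨v, h, h'⟩⟩
  refine ⟨fun u => ∃ w, Outr G u w ∧ P u w, ?_, ?_, ?_, ?_⟩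
  · intro u v h
    rw [hOP u v h, hOP v u h.symm, hP u v h.1]
  · rintro u v h ⟨w, hw, hp⟩
    have := (h w).1 hw.1
    subst this
    simp only [P, D] at hp
    rw [cdeg_one C h] at hp
    simp at hp
  · intro a b c h
    by_contra hcon
    push Not at hcon
    obtain ⟨oa, la, -, -, ha⟩ := loco_tri hdeg h
    obtain ⟨ob, lb, -, -, hb⟩ := loco_tri hdeg h.rot.sw
    obtain ⟨oc, lc, -, -, hc⟩ := loco_tri hdeg h.rot.rot
    have g1 := hirr _ _ h.1
    have g2 := hirr _ _ h.2.1
    have g3 := hirr _ _ h.2.2.1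
    have key : ∀ (a b c : V) (o : Option V), Loc G a b c o → (∀ t, o = some t → Outr G a t) →
        (∀ w, Outr G a w → ¬ P a w) → ∀ i, o.map (C a) = some i → cdeg G C a i ≠ 2 := by
      intro a b c o l ho hn i hi h2
      cases o with
      | none => simp at hi
      | some t =>
        simp at hi
        subst hi
        exact hn t (ho t rfl) (Or.inl h2)
    have ka := key _ _ _ _ la ha hcon.1
    have kb := key _ _ _ _ lb hb hcon.2.1
    have kc := key _ _ _ _ lc hc hcon.2.2
    simp only [cdeg_loc C la, cdeg_loc C lb, cdeg_loc C lc] at g1 g2 g3 ka kb kc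
    rw [Csym b a] at *
    rw [Csym c a, Csym c b] at *
    exact tri_imp (C a b) (C b c) (C a c) (oa.map (C a)) (ob.map (C b)) (oc.map (C c)) (by simpa using g1) (by simpa using g2)
      (by simpa using g3) ka kb kc
  · rintro v ⟨w, h, -⟩
    exact ⟨w, h⟩

theorem greedy {ι : Type*} [Finite ι] (S : ι → V → Prop) (P : ι → (V → Fin 3) → Prop)
    (dep : ∀ B κ κ', (∀ v, S B v → κ v = κ' v) → P B κ → P B κ')
    (kill : ∀ B v, S B v → ∀ κ : V → Fin 3, ∃ k, ∀ κ', (∀ u, u ≠ v → κ' u = κ u) → κ' v ≠ k → P B κ')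
    (emp : ∀ B, (∀ v, ¬ S B v) → ∀ κ, P B κ)
    (deg : ∀ v, ∃ B1 B2, ∀ B, S B v → B = B1 ∨ B = B2) : ∃ κ, ∀ B, P B κ := by
  classical
  have hex : ∃ κ : V → Fin 3, ∀ κ' : V → Fin 3, {B | ¬ P B κ}.ncard ≤ {B | ¬ P B κ'}.ncard :=
    Finite.exists_min (fun κ : V → Fin 3 => {B | ¬ P B κ}.ncard)
  obtain ⟨κ, hκ⟩ := hex
  refine ⟨κ, fun B => ?_⟩
  by_contra hB
  by_cases he : ∀ v, ¬ S B v
  · exact hB (emp B he κ)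
  push Not at he
  obtain ⟨v, hv⟩ := he
  obtain ⟨B1, B2, h12⟩ := deg v
  have hk : ∀ B, ∃ k, S B v → ∀ κ', (∀ u, u ≠ v → κ' u = κ u) → κ' v ≠ k → P B κ' := by
    intro B
    by_cases h : S B v
    · obtain ⟨k, hk⟩ := kill B v h κ; exact ⟨k, fun _ => hk⟩
    · exact ⟨0, fun h' => (h h').elim⟩
  obtain ⟨k1, hk1⟩ := hk B1
  obtain ⟨k2, hk2⟩ := hk B2
  obtain ⟨x, hx1, hx2⟩ : ∃ x : Fin 3, x ≠ k1 ∧ x ≠ k2 :=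
    (by decide : ∀ k1 k2 : Fin 3, ∃ x : Fin 3, x ≠ k1 ∧ x ≠ k2) k1 k2
  have hlt : {B | ¬ P B (Function.update κ v x)} ⊂ {B | ¬ P B κ} := by
    have good : ∀ B', S B' v → P B' (Function.update κ v x) := by
      intro B' h'
      rcases h12 B' h' with rfl | rfl
      · exact hk1 h' _ (fun u hu => by simp [hu]) (by simpa)
      · exact hk2 h' _ (fun u hu => by simp [hu]) (by simpa)
    refine ⟨fun B' hB' hP => ?_, fun h => h hB (good B hv)⟩
    by_cases h' : S B' v
    · exact hB' (good B' h')
    · refine hB' (dep B' κ _ (fun u hu => ?_) hP)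
      have : u ≠ v := by rintro rfl; exact h' hu
      simp [this]
  have := Set.ncard_lt_ncard hlt
  have := hκ (Function.update κ v x)
  omega

end
end LI

namespace LI
section
variable {V : Type*} {G : SimpleGraph V}

inductive Strong (G : SimpleGraph V) (O : V → Prop) (r : V → ℕ) (κ : V → Fin 3) : V → Prop
  | tok (a b c : V) : Tri G a b c → O a → O b → ¬ O c →
      (∀ t, Outr G c t → κ t ≠ κ a ∧ κ t ≠ κ b) → r b < r a → Strong G O r κ a
  | prop (a b c t : V) : Tri G a b c → O a → O b → ¬ O c → Outr G c t → κ t = κ a →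
      Strong G O r κ t → Strong G O r κ a
  | src (a b c : V) : Tri G a b c → O a → O b → O c → κ a = κ b → r b < r a → Strong G O r κ a

open Classical in
noncomputable def dd (G : SimpleGraph V) (O : V → Prop) (r : V → ℕ) (κ : V → Fin 3) (v : V) : ℕ :=
  if Strong G O r κ v then 3 else 2

open Classical in
noncomputable def CC (G : SimpleGraph V) (O : V → Prop) (κ : V → Fin 3) (f : Sym2 V → Fin 3) (u v : V) : Fin 3 :=
  if Outr G u v then (if O u then κ u else κ v) else f s(u, v)

def LR (G : SimpleGraph V) (O : V → Prop) (r : V → ℕ) (κ : V → Fin 3) (f : Sym2 V → Fin 3) (w : V) : Prop :=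
  ∀ u, G.Adj w u →
    (Inn G w u → cdeg G (CC G O κ f) w (f s(w, u)) ≠ cdeg G (CC G O κ f) u (f s(w, u))) ∧
    (Outr G w u → O w → cdeg G (CC G O κ f) w (κ w) = dd G O r κ w) ∧
    (Outr G w u → ¬ O w → cdeg G (CC G O κ f) w (κ u) ≠ dd G O r κ u)

open Classical in
noncomputable def stOf (G : SimpleGraph V) (O : V → Prop) (r : V → ℕ) (κ : V → Fin 3) (a : V) (o : Option V) :
    Option (Fin 3 × Fin 4) :=
  o.map (fun t => if O a then (κ a, if Strong G O r κ a then 1 else 0)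
    else (κ t, if Strong G O r κ t then 3 else 2))

variable {O : V → Prop} {r : V → ℕ} {κ : V → Fin 3} {f : Sym2 V → Fin 3}

theorem CC_inn {u v : V} (h : Inn G u v) : CC G O κ f u v = f s(u, v) := by
  simp [CC, h.not]
theorem CC_out {u v : V} (h : Outr G u v) (ho : O u) : CC G O κ f u v = κ u := by
  simp [CC, h, ho]
theorem CC_in {u v : V} (h : Outr G u v) (ho : ¬ O u) : CC G O κ f u v = κ v := by
  simp [CC, h, ho]
theorem CC_symm (hO : Ori G O) (u v : V) : CC G O κ f u v = CC G O κ f v u := by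
  by_cases h : Outr G u v
  · have := hO.o1 u v h
    by_cases hu : O u
    · rw [CC_out h hu, CC_in h.symm (by tauto)]
    · rw [CC_in h hu, CC_out h.symm (by tauto)]
  · have h' : ¬ Outr G v u := fun h' => h h'.symm
    simp [CC, h, h', Sym2.eq_swap]

theorem extc_eq (st : Option (Fin 3 × Fin 4)) (i : Fin 3) :
    extc st i = if st.map Prod.fst = some i then 1 else 0 := by
  rcases st with _ | ⟨j, m⟩ <;> simp [extc]

variable [Finite V]

theorem cdeg_mid {a b c d : V} (h : Loc G a b c (some d)) (hb : Inn G a b) (hc : Inn G a c) (hd : Inn G a d)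
    (m : Fin 4) (i : Fin 3) :
    cdeg G (CC G O κ f) a i = dT (f s(a, b)) (f s(a, c)) (some (f s(a, d), m)) i := by
  rw [cdeg_loc _ h, CC_inn hb, CC_inn hc]
  simp [dT, extc, CC_inn hd]

theorem cdeg_st {a b c : V} {o : Option V} (h : LocO G a b c o) (i : Fin 3) :
    cdeg G (CC G O κ f) a i = dT (f s(a, b)) (f s(a, c)) (stOf G O r κ a o) i := by
  obtain ⟨h, hb, hc, ho⟩ := h
  rw [cdeg_loc _ h, CC_inn hb, CC_inn hc, dT, extc_eq]
  congr 2
  cases o with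
  | none => simp [stOf]
  | some t =>
    by_cases hO : O a
    · simp [stOf, CC_out (ho t rfl) hO, hO]
    · simp [stOf, CC_in (ho t rfl) hO, hO]

theorem lr_mid {a b c d : V} (h : Loc G a b c (some d)) (hb : Inn G a b) (hc : Inn G a c) (hd : Inn G a d)
    (h1 : cdeg G (CC G O κ f) a (f s(a, b)) ≠ cdeg G (CC G O κ f) b (f s(a, b)))
    (h2 : cdeg G (CC G O κ f) a (f s(a, c)) ≠ cdeg G (CC G O κ f) c (f s(a, c)))
    (h3 : cdeg G (CC G O κ f) a (f s(a, d)) ≠ cdeg G (CC G O κ f) d (f s(a, d))) :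
    LR G O r κ f a := by
  intro u hu
  rcases (h.2.2 u).1 hu with rfl | rfl | h
  · exact ⟨fun _ => h1, fun h => (hb.not h).elim, fun h => (hb.not h).elim⟩
  · exact ⟨fun _ => h2, fun h => (hc.not h).elim, fun h => (hc.not h).elim⟩
  · simp at h; subst h
    exact ⟨fun _ => h3, fun h => (hd.not h).elim, fun h => (hd.not h).elim⟩

theorem lr_st {a b c : V} {o : Option V} (h : LocO G a b c o)
    (h1 : cdeg G (CC G O κ f) a (f s(a, b)) ≠ cdeg G (CC G O κ f) b (f s(a, b)))
    (h2 : cdeg G (CC G O κ f) a (f s(a, c)) ≠ cdeg G (CC G O κ f) c (f s(a, c)))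
    (hok : okst (stOf G O r κ a o) (dT (f s(a, b)) (f s(a, c)) (stOf G O r κ a o)) = true) :
    LR G O r κ f a := by
  have hcd := @cdeg_st V G O r κ f _ a b c o h
  obtain ⟨h, hb, hc, ho⟩ := h
  intro u hu
  rcases (h.2.2 u).1 hu with rfl | rfl | h
  · exact ⟨fun _ => h1, fun h => (hb.not h).elim, fun h => (hb.not h).elim⟩
  · exact ⟨fun _ => h2, fun h => (hc.not h).elim, fun h => (hc.not h).elim⟩
  · subst h
    have hout := ho u rfl
    refine ⟨fun h => (h.not hout).elim, fun _ hOa => ?_, fun _ hOa => ?_⟩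
    · rw [hcd]
      by_cases hs : Strong G O r κ a
      · simp [okst, stOf, hOa, hs, okm, dd] at hok ⊢; exact hok
      · simp [okst, stOf, hOa, hs, okm, dd] at hok ⊢; exact hok
    · rw [hcd]
      by_cases hs : Strong G O r κ u
      · simp [okst, stOf, hOa, hs, okm, dd] at hok ⊢; exact hok
      · simp [okst, stOf, hOa, hs, okm, dd] at hok ⊢; exact hok

theorem tri_bridge {a b c : V} {oa ob oc : Option V} (la : LocO G a b c oa) (lb : LocO G b a c ob)
    (lc : LocO G c a b oc) (h : tri (stOf G O r κ a oa) (stOf G O r κ b ob) (stOf G O r κ c oc)) :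
    ∃ f, LR G O r κ f a ∧ LR G O r κ f b ∧ LR G O r κ f c := by
  classical
  obtain ⟨x, y, z, h⟩ := h
  have ab := la.2.1.1.ne
  have ac := la.2.2.1.1.ne
  have bc := lb.2.2.1.1.ne
  let f : Sym2 V → Fin 3 := fun e => if e = s(a, b) then x else if e = s(b, c) then y else z
  have e1 : f s(a, b) = x := by simp [f]
  have e1' : f s(b, a) = x := by rw [Sym2.eq_swap]; exact e1
  have e2 : f s(b, c) = y := by simp [f]; grind
  have e2' : f s(c, b) = y := by rw [Sym2.eq_swap]; exact e2
  have e3 : f s(a, c) = z := by simp [f]; grind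
  have e3' : f s(c, a) = z := by rw [Sym2.eq_swap]; exact e3
  have ca := @cdeg_st V G O r κ f _ a b c oa la
  have cb := @cdeg_st V G O r κ f _ b a c ob lb
  have cc := @cdeg_st V G O r κ f _ c a b oc lc
  simp only [e1, e1', e2, e2', e3, e3'] at ca cb cc
  simp only [triC, Bool.and_eq_true, bne_iff_ne, ne_eq] at h
  obtain ⟨⟨⟨⟨⟨g1, g2⟩, g3⟩, ka⟩, kb⟩, kc⟩ := h
  refine ⟨f, lr_st la ?_ ?_ ?_, lr_st lb ?_ ?_ ?_, lr_st lc ?_ ?_ ?_⟩ <;>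
    simp only [e1, e1', e2, e2', e3, e3', ca, cb, cc, ne_eq] <;> first | assumption | (intro h; simp_all)

theorem dia_bridge {p m n q : V} {op oq : Option V} (lp : LocO G p m n op) (lq : LocO G q m n oq)
    (lm : Loc G m p n (some q)) (ln : Loc G n p m (some q)) (pq : p ≠ q) (hmn : Inn G m n)
    (h : dia (stOf G O r κ p op) (stOf G O r κ q oq)) :
    ∃ f, LR G O r κ f p ∧ LR G O r κ f m ∧ LR G O r κ f n ∧ LR G O r κ f q := by
  classical
  obtain ⟨a, b, c, d, e, h⟩ := h
  have pm := lp.2.1.1.ne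
  have pn := lp.2.2.1.1.ne
  have qm := lq.2.1.1.ne
  have qn := lq.2.2.1.1.ne
  have mn := hmn.1.ne
  let f : Sym2 V → Fin 3 := fun x => if x = s(p, m) then a else if x = s(p, n) then b else
    if x = s(m, n) then c else if x = s(q, m) then d else e
  have e1 : f s(p, m) = a := by simp [f]
  have e1' : f s(m, p) = a := by rw [Sym2.eq_swap]; exact e1
  have e2 : f s(p, n) = b := by simp [f]; grind
  have e2' : f s(n, p) = b := by rw [Sym2.eq_swap]; exact e2
  have e3 : f s(m, n) = c := by simp [f]; grind
  have e3' : f s(n, m) = c := by rw [Sym2.eq_swap]; exact e3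
  have e4 : f s(q, m) = d := by simp [f]; grind
  have e4' : f s(m, q) = d := by rw [Sym2.eq_swap]; exact e4
  have e5 : f s(q, n) = e := by simp [f]; grind
  have e5' : f s(n, q) = e := by rw [Sym2.eq_swap]; exact e5
  have cp := @cdeg_st V G O r κ f _ p m n op lp
  have cq := @cdeg_st V G O r κ f _ q m n oq lq
  have cm := @cdeg_mid V G O κ f _ m p n q lm lp.2.1.symm hmn lq.2.1.symm 0
  have cn := @cdeg_mid V G O κ f _ n p m q ln lp.2.2.1.symm hmn.symm lq.2.2.1.symm 0
  simp only [e1, e1', e2, e2', e3, e3', e4, e4', e5, e5'] at cp cq cm cn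
  simp only [diaC, Bool.and_eq_true, bne_iff_ne, ne_eq] at h
  obtain ⟨⟨⟨⟨⟨⟨g1, g2⟩, g3⟩, g4⟩, g5⟩, kp⟩, kq⟩ := h
  refine ⟨f, lr_st lp ?_ ?_ ?_, lr_mid lm lp.2.1.symm hmn lq.2.1.symm ?_ ?_ ?_,
    lr_mid ln lp.2.2.1.symm hmn.symm lq.2.2.1.symm ?_ ?_ ?_, lr_st lq ?_ ?_ ?_⟩ <;>
    simp only [e1, e1', e2, e2', e3, e3', e4, e4', e5, e5', cp, cq, cm, cn, ne_eq] <;>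
    first | assumption | exact fun h => g1 h.symm | exact fun h => g2 h.symm | exact fun h => g3 h.symm | exact fun h => g4 h.symm | exact fun h => g5 h.symm

theorem k4_bridge (hdeg : MaxDegreeLE G 3) {p m n q : V} (h : Dm G p m n q) (hpq : G.Adj p q) :
    ∃ f, LR G O r κ f p ∧ LR G O r κ f m ∧ LR G O r κ f n ∧ LR G O r κ f q := by
  classical
  obtain ⟨h1, h2, h3, h4, h5, pq⟩ := h
  have pm := h1.ne
  have pn := h2.ne
  have qm := h4.ne
  have qn := h5.ne
  have mn := h3.ne
  have lp := loc_mid hdeg h1 h2 hpq mn qm.symm qn.symm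
  have lm := loc_mid hdeg h1.symm h3 h4.symm pn pq qn.symm
  have ln := loc_mid hdeg h2.symm h3.symm h5.symm pm pq qm.symm
  have lq := loc_mid hdeg hpq.symm h4 h5 pm pn mn
  have ipm : Inn G p m := ⟨h1, n, h2, h3⟩
  have ipn : Inn G p n := ⟨h2, m, h1, h3.symm⟩
  have ipq : Inn G p q := ⟨hpq, m, h1, h4⟩
  have imn : Inn G m n := ⟨h3, q, h4.symm, h5.symm⟩
  have imq : Inn G m q := ⟨h4.symm, n, h3, h5⟩
  have inq : Inn G n q := ⟨h5.symm, m, h3.symm, h4⟩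
  let f : Sym2 V → Fin 3 := fun x => if x = s(p, m) then 0 else if x = s(p, n) then 0 else
    if x = s(m, n) then 1 else if x = s(m, q) then 1 else 2
  have e1 : f s(p, m) = 0 := by simp [f]
  have e1' : f s(m, p) = 0 := by rw [Sym2.eq_swap]; exact e1
  have e2 : f s(p, n) = 0 := by simp [f]
  have e2' : f s(n, p) = 0 := by rw [Sym2.eq_swap]; exact e2
  have e3 : f s(m, n) = 1 := by simp [f]; grind
  have e3' : f s(n, m) = 1 := by rw [Sym2.eq_swap]; exact e3
  have e4 : f s(m, q) = 1 := by simp [f]; grind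
  have e4' : f s(q, m) = 1 := by rw [Sym2.eq_swap]; exact e4
  have e5 : f s(n, q) = 2 := by simp [f]; grind
  have e5' : f s(q, n) = 2 := by rw [Sym2.eq_swap]; exact e5
  have e6 : f s(p, q) = 2 := by simp [f]; grind
  have e6' : f s(q, p) = 2 := by rw [Sym2.eq_swap]; exact e6
  have cp := @cdeg_mid V G O κ f _ p m n q lp ipm ipn ipq 0
  have cm := @cdeg_mid V G O κ f _ m p n q lm ipm.symm imn imq 0
  have cn := @cdeg_mid V G O κ f _ n p m q ln ipn.symm imn.symm inq 0
  have cq := @cdeg_mid V G O κ f _ q p m n lq ipq.symm imq.symm inq.symm 0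
  refine ⟨f, lr_mid lp ipm ipn ipq ?_ ?_ ?_, lr_mid lm ipm.symm imn imq ?_ ?_ ?_,
    lr_mid ln ipn.symm imn.symm inq ?_ ?_ ?_, lr_mid lq ipq.symm imq.symm inq.symm ?_ ?_ ?_⟩ <;>
    simp only [cp, cq, cm, cn, e1, e1', e2, e2', e3, e3', e4, e4', e5, e5', e6, e6'] <;> decide

/-! uniqueness -/
theorem tri_uniq {a b c b' c' : V} {o : Option V} (l : LocO G a b c o) (h : Tri G a b' c') :
    (b' = b ∧ c' = c) ∨ (b' = c ∧ c' = b) := by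
  obtain ⟨l, hb, hc, ho⟩ := l
  have k : ∀ x, Inn G a x → x = b ∨ x = c := by
    intro x hx
    rcases (l.2.2 x).1 hx.1 with h | h | h
    · exact .inl h
    · exact .inr h
    · exact (hx.not (ho x h)).elim
  have h1 := k b' ⟨h.1, c', h.2.2.1, h.2.1⟩
  have h2 := k c' ⟨h.2.2.1, b', h.1, h.2.1.symm⟩
  have := h.2.1.ne
  grind

theorem strong_tri {v : V} (h : Strong G O r κ v) : ∃ b c, Tri G v b c ∧ O v ∧ O b := by
  cases h with
  | tok _ b c t ha hb => exact ⟨b, c, t, ha, hb⟩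
  | prop _ b c _ t ha hb => exact ⟨b, c, t, ha, hb⟩
  | src _ b c t ha hb => exact ⟨b, c, t, ha, hb⟩

end
end LI

namespace LI
section
variable {V : Type*} {G : SimpleGraph V} {O : V → Prop} {r : V → ℕ} 

def Allow (G : SimpleGraph V) (O : V → Prop) (B : (IG G).ConnectedComponent) (u : V) : Prop :=
  O u ∧ ((blk G u = B ∧ ∃ w, Inn G u w) ∨ ∃ x, blk G x = B ∧ Outr G u x)

def Sol (G : SimpleGraph V) (O : V → Prop) (r : V → ℕ) (B : (IG G).ConnectedComponent) (κ : V → Fin 3) : Prop :=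
  ∃ f, ∀ w, blk G w = B → LR G O r κ f w

def BL (G : SimpleGraph V) (O : V → Prop) (r : V → ℕ) (B : (IG G).ConnectedComponent) : Prop :=
  ∃ (S : V → Prop) (P : (V → Fin 3) → Prop),
    (∀ κ κ', (∀ v, S v → κ v = κ' v) → P κ → P κ') ∧
    (∀ v, S v → ∀ κ : V → Fin 3, ∃ k, ∀ κ', (∀ u, u ≠ v → κ' u = κ u) → κ' v ≠ k → P κ') ∧
    ((∀ v, ¬ S v) → ∀ κ, P κ) ∧ (∀ u, S u → Allow G O B u) ∧ ∀ κ, P κ → Sol G O r B κ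

theorem bl_triv {B} (h : ∀ κ, Sol G O r B κ) : BL G O r B :=
  ⟨fun _ => False, fun _ => True, by simp, by simp, by simp, by simp, fun κ _ => h κ⟩

theorem bl_ne {B} {s t : V} (hst : s ≠ t) (hs : Allow G O B s) (ht : Allow G O B t)
    (h : ∀ κ : V → Fin 3, κ s ≠ κ t → Sol G O r B κ) : BL G O r B := by
  refine ⟨fun v => v = s ∨ v = t, fun κ => κ s ≠ κ t, ?_, ?_, ?_, ?_, h⟩
  · intro κ κ' h; beta_reduce; rw [h s (by simp), h t (by simp)]; exact id
  · rintro v (rfl | rfl) κ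
    · exact ⟨κ t, fun κ' h h' => by beta_reduce; rw [h t hst.symm]; exact h'⟩
    · exact ⟨κ s, fun κ' h h' => by beta_reduce; rw [h s hst]; exact h'.symm⟩
  · intro h; exact (h s (by simp)).elim
  · rintro v (rfl | rfl) <;> assumption

theorem bl_3 {B} {a b c : V} (ab : a ≠ b) (ac : a ≠ c) (bc : b ≠ c) (ha : Allow G O B a) (hb : Allow G O B b)
    (hc : Allow G O B c) (Q : Fin 3 → Fin 3 → Fin 3 → Prop) (q1 : ∀ y z, ∃ k, ∀ x, x ≠ k → Q x y z)
    (q2 : ∀ x z, ∃ k, ∀ y, y ≠ k → Q x y z) (q3 : ∀ x y, ∃ k, ∀ z, z ≠ k → Q x y z)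
    (h : ∀ κ : V → Fin 3, Q (κ a) (κ b) (κ c) → Sol G O r B κ) : BL G O r B := by
  refine ⟨fun v => v = a ∨ v = b ∨ v = c, fun κ => Q (κ a) (κ b) (κ c), ?_, ?_, ?_, ?_, h⟩
  · intro κ κ' h; beta_reduce; rw [h a (by simp), h b (by simp), h c (by simp)]; exact id
  · rintro v (rfl | rfl | rfl) κ
    · obtain ⟨k, hk⟩ := q1 (κ b) (κ c)
      exact ⟨k, fun κ' h h' => by beta_reduce; rw [h b ab.symm, h c ac.symm]; exact hk _ h'⟩
    · obtain ⟨k, hk⟩ := q2 (κ a) (κ c)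
      exact ⟨k, fun κ' h h' => by beta_reduce; rw [h a ab, h c bc.symm]; exact hk _ h'⟩
    · obtain ⟨k, hk⟩ := q3 (κ a) (κ b)
      exact ⟨k, fun κ' h h' => by beta_reduce; rw [h a ac, h b bc]; exact hk _ h'⟩
  · intro h; exact (h a (by simp)).elim
  · rintro v (rfl | rfl | rfl) <;> assumption

theorem allow_out (hO : Ori G O) {b t : V} (hb : ¬ O b) (h : Outr G b t) : Allow G O (blk G b) t := by
  have := hO.o1 b t h
  exact ⟨by tauto, .inr ⟨b, rfl, h.symm⟩⟩

variable [Finite V]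

theorem bl_single (hdeg : MaxDegreeLE G 3) (hcl : ClawFree G) (hO : Ori G O) {x : V} (h : ∀ u, G.Adj x u → Outr G x u) :
    BL G O r (blk G x) := by
  have hb : ∀ w, blk G w = blk G x → w = x := by
    intro w hw
    refine blk_closed (fun w => w = x) ?_ rfl hw
    rintro u v rfl hi
    exact (hi.not (h v hi.1)).elim
  have hns : ∀ κ, ¬ Strong G O r κ x := by
    intro κ hs
    obtain ⟨b, c, t, -, -⟩ := strong_tri hs
    exact (h b t.1).2 c t.2.2.1 t.2.1
  by_cases hx : O x
  · refine bl_triv fun κ => ⟨fun _ => 0, fun w hw => ?_⟩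
    obtain rfl := hb w hw
    intro u hu
    have hu' := h u hu
    refine ⟨fun hi => (hi.not hu').elim, fun _ _ => ?_, fun _ h => (h hx).elim⟩
    obtain ⟨u', h1, h2⟩ : ∃ u', G.Adj w u' ∧ u ≠ u' := by
      by_contra hcon
      push Not at hcon
      exact hO.o3 u w (fun z => ⟨fun hz => (hcon z hz).symm, by rintro rfl; exact hu⟩) hx
    have hN : ∀ z, G.Adj w z ↔ z = u ∨ z = u' := fun z =>
      ⟨fun hz => outr_two hdeg hcl hu' (h u' h1) h2 hz, by rintro (rfl | rfl) <;> assumption⟩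
    rw [cdeg_two _ h2 hN, CC_out hu' hx, CC_out (h u' h1) hx]
    simp [dd, hns]
  · by_cases h2 : ∃ s t, G.Adj x s ∧ G.Adj x t ∧ s ≠ t
    · obtain ⟨s, t, hs, ht, hst⟩ := h2
      have hN : ∀ z, G.Adj x z ↔ z = s ∨ z = t := fun z =>
        ⟨fun hz => outr_two hdeg hcl (h s hs) (h t ht) hst hz, by rintro (rfl | rfl) <;> assumption⟩
      refine bl_ne hst (allow_out hO hx (h s hs)) (allow_out hO hx (h t ht)) fun κ hk => ⟨fun _ => 0, fun w hw => ?_⟩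
      obtain rfl := hb w hw
      intro u hu
      refine ⟨fun hi => (hi.not (h u hu)).elim, fun _ h => (hx h).elim, fun _ _ => ?_⟩
      rw [cdeg_two _ hst hN, CC_in (h s hs) hx, CC_in (h t ht) hx]
      have : dd G O r κ u ≠ 1 := by unfold dd; split_ifs <;> simp
      rcases (hN u).1 hu with rfl | rfl
      · simp [hk.symm]; exact this.symm
      · simp [hk]; exact this.symm
    · push Not at h2
      refine bl_triv fun κ => ⟨fun _ => 0, fun w hw => ?_⟩
      obtain rfl := hb w hw
      intro u hu
      refine ⟨fun hi => (hi.not (h u hu)).elim, fun _ h => (hx h).elim, fun _ _ => ?_⟩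
      have : dd G O r κ u ≠ 1 := by unfold dd; split_ifs <;> simp
      rw [cdeg_one _ (b := u) (fun z => ⟨fun hz => h2 z u hz hu, by rintro rfl; exact hu⟩), CC_in (h u hu) hx]
      simp; exact this.symm

theorem inn_of_loco {a b c x : V} {o : Option V} (l : LocO G a b c o) (hx : Inn G a x) : x = b ∨ x = c := by
  obtain ⟨l, hb, hc, ho⟩ := l
  rcases (l.2.2 x).1 hx.1 with h | h | h
  · exact .inl h
  · exact .inr h
  · exact (hx.not (ho x h)).elim

theorem out_of_loco {a b c x : V} {o : Option V} (l : LocO G a b c o) (hx : Outr G a x) : o = some x := by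
  obtain ⟨l, hb, hc, ho⟩ := l
  rcases (l.2.2 x).1 hx.1 with rfl | rfl | h
  · exact (hb.not hx).elim
  · exact (hc.not hx).elim
  · exact h

variable {κ : V → Fin 3}

theorem st_out (hO : Ori G O) {a b c : V} {o : Option V} (l : LocO G a b c o) (ha : O a) :
    stOf G O r κ a o = some (κ a, dite (Strong G O r κ a) (h := Classical.propDecidable _) (fun _ => 1) (fun _ => 0)) := by
  obtain ⟨w, hw⟩ := hO.o0 a ha
  rw [out_of_loco l hw]
  by_cases h : Strong G O r κ a <;> simp [stOf, ha, h]

theorem st_s (hO : Ori G O) {a b c : V} {o : Option V} (l : LocO G a b c o) (ha : O a) (hs : Strong G O r κ a) :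
    stOf G O r κ a o = some (κ a, 1) := by rw [st_out hO l ha]; simp [hs]
theorem st_w (hO : Ori G O) {a b c : V} {o : Option V} (l : LocO G a b c o) (ha : O a) (hs : ¬ Strong G O r κ a) :
    stOf G O r κ a o = some (κ a, 0) := by rw [st_out hO l ha]; simp [hs]
theorem st_in {a t : V} (ha : ¬ O a) : ∃ m, 2 ≤ m ∧ stOf G O r κ a (some t) = some (κ t, m) ∧
    (Strong G O r κ t → m = 3) ∧ (¬ Strong G O r κ t → m = 2) := by
  by_cases h : Strong G O r κ t
  · exact ⟨3, by decide, by simp [stOf, ha, h], fun _ => rfl, fun h' => (h' h).elim⟩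
  · exact ⟨2, by decide, by simp [stOf, ha, h], fun h' => (h h').elim, fun _ => rfl⟩
theorem st_n {a : V} : stOf G O r κ a none = none := rfl

theorem tri_members {a b c w : V} (hdeg : MaxDegreeLE G 3) (h : Tri G a b c) (hw : blk G w = blk G a) :
    w = a ∨ w = b ∨ w = c := by
  obtain ⟨oa, la⟩ := loco_tri hdeg h
  obtain ⟨ob, lb⟩ := loco_tri hdeg h.rot.sw
  obtain ⟨oc, lc⟩ := loco_tri hdeg h.rot.rot
  refine blk_closed (fun w => w = a ∨ w = b ∨ w = c) ?_ (.inl rfl) hw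
  rintro u v (rfl | rfl | rfl) hi
  · have := inn_of_loco la hi; tauto
  · have := inn_of_loco lb hi; tauto
  · have := inn_of_loco lc hi; tauto

theorem sol_tri {a b c : V} (hdeg : MaxDegreeLE G 3) (h : Tri G a b c)
    (hf : ∃ f, LR G O r κ f a ∧ LR G O r κ f b ∧ LR G O r κ f c) : Sol G O r (blk G a) κ := by
  obtain ⟨f, h1, h2, h3⟩ := hf
  refine ⟨f, fun w hw => ?_⟩
  rcases tri_members hdeg h hw with rfl | rfl | rfl <;> assumption

theorem Tri.inn {a b c : V} (h : Tri G a b c) : Inn G a b := ⟨h.1, c, h.2.2.1, h.2.1⟩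

theorem bl_tri1 (hdeg : MaxDegreeLE G 3) (hO : Ori G O) {a b c : V} (h : Tri G a b c) (ha : O a) (hb : ¬ O b)
    (hc : ¬ O c) : BL G O r (blk G a) := by
  obtain ⟨oa, la⟩ := loco_tri hdeg h
  obtain ⟨ob, lb⟩ := loco_tri hdeg h.rot.sw
  obtain ⟨oc, lc⟩ := loco_tri hdeg h.rot.rot
  have eab := blk_inn h.inn
  have eac := blk_inn h.sw.inn
  have hns : ∀ κ, ¬ Strong G O r κ a := by
    intro κ hs
    obtain ⟨b', c', t, -, hb'⟩ := strong_tri hs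
    rcases tri_uniq la t with ⟨rfl, rfl⟩ | ⟨rfl, rfl⟩ <;> tauto
  have sa : ∀ κ, stOf G O r κ a oa = some (κ a, 0) := fun κ => st_w hO la ha (hns κ)
  rcases ob with _ | t <;> rcases oc with _ | s
  · refine bl_triv fun κ => sol_tri hdeg h (tri_bridge la lb lc ?_)
    rw [sa]; exact t1_none _
  · refine bl_triv fun κ => sol_tri hdeg h (tri_bridge la lb lc ?_)
    obtain ⟨m, hm, e, -, -⟩ := @st_in V G O r _ κ c s hc
    rw [sa, e]; exact (t1_none2 _ _ _ hm).2
  · refine bl_triv fun κ => sol_tri hdeg h (tri_bridge la lb lc ?_)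
    obtain ⟨m, hm, e, -, -⟩ := @st_in V G O r _ κ b t hb
    rw [sa, e]; exact (t1_none2 _ _ _ hm).1
  · have ht := lb.2.2.2 t rfl
    have hs := lc.2.2.2 s rfl
    have key : ∀ κ : V → Fin 3, two (κ t) (κ s) (κ a) → Sol G O r (blk G a) κ := by
      intro κ hk
      refine sol_tri hdeg h (tri_bridge la lb lc ?_)
      obtain ⟨m, hm, e, -, -⟩ := @st_in V G O r _ κ b t hb
      obtain ⟨m', hm', e', -, -⟩ := @st_in V G O r _ κ c s hc
      rw [sa, e, e']; exact t1_full _ _ _ _ _ hm hm' hk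
    have aa : Allow G O (blk G a) a := ⟨ha, .inl ⟨rfl, b, h.inn⟩⟩
    have at' : Allow G O (blk G a) t := eab ▸ allow_out hO hb ht
    have as' : Allow G O (blk G a) s := eac ▸ allow_out hO hc hs
    have ta : t ≠ a := (lb.1.2.1 t rfl).1
    have sa' : s ≠ a := (lc.1.2.1 s rfl).1
    by_cases hts : t = s
    · subst hts
      exact bl_ne ta at' aa fun κ hk => key κ (.inl ⟨rfl, hk⟩)
    · refine bl_3 hts ta sa' at' as' aa two ?_ ?_ ?_ key <;> decide

theorem strong2_inv {a b c : V} {o : Option V} (la : LocO G a b c o) (hc : ¬ O c) (hs : Strong G O r κ a) :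
    (r b < r a ∧ ∀ t, Outr G c t → κ t ≠ κ a ∧ κ t ≠ κ b) ∨ ∃ t, Outr G c t ∧ κ t = κ a ∧ Strong G O r κ t := by
  cases hs with
  | tok _ b' c' h _ hb' _ h1 h2 =>
    rcases tri_uniq la h with ⟨rfl, rfl⟩ | ⟨rfl, rfl⟩
    · exact .inl ⟨h2, h1⟩
    · tauto
  | prop _ b' c' t h _ hb' _ h1 h2 h3 =>
    rcases tri_uniq la h with ⟨rfl, rfl⟩ | ⟨rfl, rfl⟩
    · exact .inr ⟨t, h1, h2, h3⟩
    · tauto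
  | src _ b' c' h _ hb' hc' _ _ =>
    rcases tri_uniq la h with ⟨rfl, rfl⟩ | ⟨rfl, rfl⟩ <;> tauto

theorem tri2_A (hdeg : MaxDegreeLE G 3) (hO : Ori G O) {a b c : V} (h : Tri G a b c) (ha : O a) (hb : O b)
    (hc : ¬ O c) (hab : κ a ≠ κ b) (hr : r b < r a) (hA : ∀ t, Outr G c t → κ t ≠ κ a ∧ κ t ≠ κ b) :
    Sol G O r (blk G a) κ := by
  obtain ⟨oa, la⟩ := loco_tri hdeg h
  obtain ⟨ob, lb⟩ := loco_tri hdeg h.rot.sw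
  obtain ⟨oc, lc⟩ := loco_tri hdeg h.rot.rot
  have s1 : Strong G O r κ a := .tok a b c h ha hb hc hA hr
  have s2 : ¬ Strong G O r κ b := by
    intro hs
    rcases strong2_inv lb hc hs with h | ⟨t, h1, h2, -⟩
    · omega
    · exact (hA t h1).2 h2
  refine sol_tri hdeg h (tri_bridge la lb lc ?_)
  rw [st_s hO la ha s1, st_w hO lb hb s2]
  rcases oc with _ | t
  · exact t2_none _ _ hab
  · obtain ⟨m, hm, e, -, -⟩ := @st_in V G O r _ κ c t hc
    have := hA t (lc.2.2.2 t rfl)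
    rw [e]; exact t2_rb _ _ _ _ hm hab this.1 this.2

theorem tri2_B (hdeg : MaxDegreeLE G 3) (hO : Ori G O) {a b c t : V} (h : Tri G a b c) (ha : O a) (hb : O b)
    (hc : ¬ O c) (hab : κ a ≠ κ b) (ht : Outr G c t) (hk : κ t = κ a) :
    Sol G O r (blk G a) κ := by
  obtain ⟨oa, la⟩ := loco_tri hdeg h
  obtain ⟨ob, lb⟩ := loco_tri hdeg h.rot.sw
  obtain ⟨oc, lc⟩ := loco_tri hdeg h.rot.rot
  obtain rfl := out_of_loco lc ht
  have s2 : ¬ Strong G O r κ b := by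
    intro hs
    rcases strong2_inv lb hc hs with h | ⟨t', h1, h2, -⟩
    · exact (h.2 t ht).2 hk
    · have := out_of_loco lc h1
      simp at this; subst this
      exact hab (hk.symm.trans h2)
  refine sol_tri hdeg h (tri_bridge la lb lc ?_)
  obtain ⟨m, hm, e, e1, e2⟩ := @st_in V G O r _ κ c t hc
  rw [st_w hO lb hb s2, e, hk]
  by_cases hs : Strong G O r κ t
  · rw [st_s hO la ha (.prop a b c t h ha hb hc ht hk hs), e1 hs]
    exact t2_s _ _ hab
  · have : ¬ Strong G O r κ a := by
      intro hs'
      rcases strong2_inv la hc hs' with h | ⟨t', h1, h2, h3⟩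
      · exact (h.2 t ht).1 hk
      · have := out_of_loco lc h1
        simp at this; subst this
        exact hs h3
    rw [st_w hO la ha this, e2 hs]
    exact t2_w _ _ hab

theorem bl_tri2 (hdeg : MaxDegreeLE G 3) (hO : Ori G O) (hr : Function.Injective r) {a b c : V} (h : Tri G a b c)
    (ha : O a) (hb : O b) (hc : ¬ O c) : BL G O r (blk G a) := by
  have eab := blk_inn h.inn
  refine bl_ne h.1.ne ⟨ha, .inl ⟨rfl, b, h.inn⟩⟩ ⟨hb, .inl ⟨eab.symm, a, h.inn.symm⟩⟩ fun κ hk => ?_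
  by_cases hA : ∀ t, Outr G c t → κ t ≠ κ a ∧ κ t ≠ κ b
  · rcases lt_trichotomy (r a) (r b) with hl | hl | hl
    · rw [eab]
      exact tri2_A hdeg hO h.rot.sw hb ha hc hk.symm hl (fun t ht => (hA t ht).symm)
    · exact (h.1.ne (hr hl)).elim
    · exact tri2_A hdeg hO h ha hb hc hk hl hA
  · push Not at hA
    obtain ⟨t, ht, hA⟩ := hA
    by_cases e : κ t = κ a
    · exact tri2_B hdeg hO h ha hb hc hk ht e
    · rw [eab]
      exact tri2_B hdeg hO h.rot.sw hb ha hc hk.symm ht (hA e)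

theorem strong3_inv {a b c : V} {o : Option V} (la : LocO G a b c o) (hb : O b) (hc : O c) (hs : Strong G O r κ a) :
    (κ a = κ b ∧ r b < r a) ∨ (κ a = κ c ∧ r c < r a) := by
  cases hs with
  | tok _ b' c' h _ hb' _ h1 h2 =>
    rcases tri_uniq la h with ⟨rfl, rfl⟩ | ⟨rfl, rfl⟩ <;> tauto
  | prop _ b' c' t h _ hb' _ h1 h2 h3 =>
    rcases tri_uniq la h with ⟨rfl, rfl⟩ | ⟨rfl, rfl⟩ <;> tauto
  | src _ b' c' h _ hb' hc' _ _ =>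
    rcases tri_uniq la h with ⟨rfl, rfl⟩ | ⟨rfl, rfl⟩ <;> tauto

theorem tri3_A (hdeg : MaxDegreeLE G 3) (hO : Ori G O) {a b c : V} (h : Tri G a b c) (ha : O a) (hb : O b)
    (hc : O c) (hab : κ a = κ b) (hac : κ a ≠ κ c) (hr : r b < r a) : Sol G O r (blk G a) κ := by
  obtain ⟨oa, la⟩ := loco_tri hdeg h
  obtain ⟨ob, lb⟩ := loco_tri hdeg h.rot.sw
  obtain ⟨oc, lc⟩ := loco_tri hdeg h.rot.rot
  refine sol_tri hdeg h (tri_bridge la lb lc ?_)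
  have s1 : Strong G O r κ a := .src a b c h ha hb hc hab hr
  have s2 : ¬ Strong G O r κ b := by
    intro hs
    rcases strong3_inv lb ha hc hs with h | h
    · omega
    · exact hac (hab.trans h.1)
  have s3 : ¬ Strong G O r κ c := by
    intro hs
    rcases strong3_inv lc ha hb hs with h | h
    · exact hac h.1.symm
    · exact hac (hab.trans h.1.symm)
  rw [st_s hO la ha s1, st_w hO lb hb s2, st_w hO lc hc s3, ← hab]
  exact t3_e _ _ hac

theorem tri3_R (hdeg : MaxDegreeLE G 3) (hO : Ori G O) {a b c : V} (h : Tri G a b c) (ha : O a) (hb : O b)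
    (hc : O c) (hab : κ a ≠ κ b) (hac : κ a ≠ κ c) (hbc : κ b ≠ κ c) : Sol G O r (blk G a) κ := by
  obtain ⟨oa, la⟩ := loco_tri hdeg h
  obtain ⟨ob, lb⟩ := loco_tri hdeg h.rot.sw
  obtain ⟨oc, lc⟩ := loco_tri hdeg h.rot.rot
  refine sol_tri hdeg h (tri_bridge la lb lc ?_)
  have s1 : ¬ Strong G O r κ a := fun hs => by have := strong3_inv la hb hc hs; tauto
  have s2 : ¬ Strong G O r κ b := fun hs => by have := strong3_inv lb ha hc hs; grind
  have s3 : ¬ Strong G O r κ c := fun hs => by have := strong3_inv lc ha hb hs; grind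
  rw [st_w hO la ha s1, st_w hO lb hb s2, st_w hO lc hc s3]
  exact t3_rb _ _ _ hab hac.symm hbc.symm

theorem tri3_B (hdeg : MaxDegreeLE G 3) (hO : Ori G O) (hr : Function.Injective r) {a b c : V} (h : Tri G a b c)
    (ha : O a) (hb : O b) (hc : O c) (hab : κ a = κ b) (hac : κ a ≠ κ c) : Sol G O r (blk G a) κ := by
  rcases lt_trichotomy (r a) (r b) with hl | hl | hl
  · rw [blk_inn h.inn]
    exact tri3_A hdeg hO h.rot.sw hb ha hc hab.symm (hab ▸ hac) hl
  · exact (h.1.ne (hr hl)).elim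
  · exact tri3_A hdeg hO h ha hb hc hab hac hl

theorem bl_tri3 (hdeg : MaxDegreeLE G 3) (hO : Ori G O) (hr : Function.Injective r) {a b c : V} (h : Tri G a b c)
    (ha : O a) (hb : O b) (hc : O c) : BL G O r (blk G a) := by
  have eab := blk_inn h.inn
  have eac := blk_inn h.sw.inn
  refine bl_3 h.1.ne h.2.2.1.ne h.2.1.ne ⟨ha, .inl ⟨rfl, b, h.inn⟩⟩ ⟨hb, .inl ⟨eab.symm, a, h.inn.symm⟩⟩
    ⟨hc, .inl ⟨eac.symm, a, h.sw.inn.symm⟩⟩ (fun i j k => ¬ (i = j ∧ i = k)) (by decide) (by decide) (by decide)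
    fun κ hk => ?_
  by_cases h1 : κ a = κ b
  · exact tri3_B hdeg hO hr h ha hb hc h1 (by tauto)
  by_cases h2 : κ a = κ c
  · exact tri3_B hdeg hO hr h.sw ha hc hb h2 h1
  by_cases h3 : κ b = κ c
  · rw [eab]
    exact tri3_B hdeg hO hr h.rot hb hc ha h3 (fun h => h1 h.symm)
  exact tri3_R hdeg hO h ha hb hc h1 h2 h3

theorem bl_tri (hdeg : MaxDegreeLE G 3) (hO : Ori G O) (hr : Function.Injective r) {a b c : V} (h : Tri G a b c) :
    BL G O r (blk G a) := by
  have eab := blk_inn h.inn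
  have eac := blk_inn h.sw.inn
  have h0 := hO.o4 a b c h
  by_cases ha : O a <;> by_cases hb : O b <;> by_cases hc : O c
  · exact bl_tri3 hdeg hO hr h ha hb hc
  · exact bl_tri2 hdeg hO hr h ha hb hc
  · exact bl_tri2 hdeg hO hr h.sw ha hc hb
  · exact bl_tri1 hdeg hO h ha hb hc
  · rw [eab]; exact bl_tri2 hdeg hO hr h.rot hb hc ha
  · rw [eab]; exact bl_tri1 hdeg hO h.rot hb hc ha
  · rw [eac]; exact bl_tri1 hdeg hO h.rot.rot hc ha hb
  · tauto

theorem st_dia (hO : Ori G O) {p m n q : V} {o : Option V} (l : LocO G p m n o) (h : Dm G p m n q) :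
    stOf G O r κ p o = none ∨ ∃ i j, j ≠ 1 ∧ stOf G O r κ p o = some (i, j) := by
  have hns : ¬ Strong G O r κ p := by
    intro hs
    obtain ⟨b, c, t, -, -⟩ := strong_tri hs
    have := t.2.2.2.2.1 q
    obtain ⟨h1, h2, h3, h4, h5, h6⟩ := h
    rcases tri_uniq l t with ⟨rfl, rfl⟩ | ⟨rfl, rfl⟩
    · exact h6 (this h4.symm h5.symm).symm
    · exact h6 (this h5.symm h4.symm).symm
  by_cases hp : O p
  · right; exact ⟨κ p, 0, by decide, st_w hO l hp hns⟩
  · rcases o with _ | t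
    · left; rfl
    · right
      obtain ⟨m, hm, e, -, -⟩ := @st_in V G O r _ κ p t hp
      exact ⟨_, m, by rintro rfl; revert hm; decide, e⟩

theorem bl_dm (hdeg : MaxDegreeLE G 3) (hO : Ori G O) {p m n q : V} (h : Dm G p m n q) :
    BL G O r (blk G m) := by
  have hfin : ∀ κ, (∃ f, LR G O r κ f p ∧ LR G O r κ f m ∧ LR G O r κ f n ∧ LR G O r κ f q) →
      Sol G O r (blk G m) κ := by
    rintro κ ⟨f, f1, f2, f3, f4⟩
    refine ⟨f, fun w hw => ?_⟩
    have : w = p ∨ w = m ∨ w = n ∨ w = q := by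
      refine blk_closed (fun w => w = p ∨ w = m ∨ w = n ∨ w = q) ?_ (by simp) hw
      obtain ⟨h1, h2, h3', h4, h5, h6⟩ := id h
      have lm := loc_mid hdeg h1.symm h3' h4.symm h2.ne h6 h5.ne.symm
      have ln := loc_mid hdeg h2.symm h3'.symm h5.symm h1.ne h6 h4.ne.symm
      rintro u v (rfl | rfl | rfl | rfl) hi
      · by_cases hpq : G.Adj u q
        · have := h3 hdeg h3'.ne h4.ne.symm h5.ne.symm h1 h2 hpq hi.1; tauto
        · obtain ⟨o, l⟩ := loco_dm hdeg h hpq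
          have := inn_of_loco l hi; tauto
      · have := (lm.2.2 v).1 hi.1; simp at this; grind
      · have := (ln.2.2 v).1 hi.1; simp at this; grind
      · by_cases hpq : G.Adj p u
        · have := h3 hdeg h3'.ne h1.ne.symm h2.ne.symm h4 h5 hpq.symm hi.1; tauto
        · obtain ⟨o, l⟩ := loco_dm hdeg (p := u) (q := p) ⟨h4, h5, h3', h1, h2, h6.symm⟩ (fun h => hpq h.symm)
          have := inn_of_loco l hi; tauto
    rcases this with rfl | rfl | rfl | rfl <;> assumption
  refine bl_triv fun κ => hfin κ ?_
  by_cases hpq : G.Adj p q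
  · exact k4_bridge hdeg h hpq
  obtain ⟨h1, h2, h3', h4, h5, h6⟩ := id h
  have h' : Dm G q m n p := ⟨h4, h5, h3', h1, h2, h6.symm⟩
  have lm := loc_mid hdeg h1.symm h3' h4.symm h2.ne h6 h5.ne.symm
  have ln := loc_mid hdeg h2.symm h3'.symm h5.symm h1.ne h6 h4.ne.symm
  obtain ⟨op, lp⟩ := loco_dm hdeg h hpq
  obtain ⟨oq, lq⟩ := loco_dm hdeg h' (fun h => hpq h.symm)
  refine dia_bridge lp lq lm ln h6 ⟨h3', p, h1.symm, h2.symm⟩ ?_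
  rcases @st_dia V G O r _ κ hO p m n q op lp h with e | ⟨i, j, hj, e⟩ <;>
  rcases @st_dia V G O r _ κ hO q m n p oq lq h' with e' | ⟨i', j', hj', e'⟩ <;> rw [e, e']
  · exact d_nn
  · exact (d_n _ _ hj').2
  · exact (d_n _ _ hj).1
  · exact d_f _ _ _ _ hj hj'

theorem bl_all (hdeg : MaxDegreeLE G 3) (hcl : ClawFree G) (hO : Ori G O) (hr : Function.Injective r)
    (B : (IG G).ConnectedComponent) : BL G O r B := by
  induction B using SimpleGraph.ConnectedComponent.ind with
  | h v =>
  change BL G O r (blk G v)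
  rcases classify (G := G) v with h | ⟨b, c, h⟩ | ⟨p, m, n, q, h, hv⟩
  · exact bl_single hdeg hcl hO h
  · exact bl_tri hdeg hO hr h
  · have := bl_dm (r := r) hdeg hO h
    obtain ⟨h1, h2, h3', h4, h5, h6⟩ := h
    rcases hv with rfl | rfl | rfl | rfl
    · rwa [blk_inn (⟨h1, n, h2, h3'⟩ : Inn G v m)]
    · exact this
    · rwa [blk_inn (⟨h3'.symm, p, h2.symm, h1.symm⟩ : Inn G v m)]
    · rwa [blk_inn (⟨h4, n, h5, h3'⟩ : Inn G v m)]

end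
end LI

namespace LI
section
variable {V : Type*} {G : SimpleGraph V} {O : V → Prop} {r : V → ℕ} [Finite V]

theorem allow_deg (hcl : ClawFree G) (hdeg : MaxDegreeLE G 3) (v : V) :
    ∃ B1 B2, ∀ B, Allow G O B v → B = B1 ∨ B = B2 := by
  by_cases h1 : ∃ x, Outr G v x
  · obtain ⟨x, hx⟩ := h1
    by_cases h2 : ∃ y, Outr G v y ∧ x ≠ y
    · obtain ⟨y, hy, hxy⟩ := h2
      refine ⟨blk G x, blk G y, ?_⟩
      rintro B ⟨-, ⟨rfl, w, hw⟩ | ⟨z, rfl, hz⟩⟩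
      · rcases outr_two hdeg hcl hx hy hxy hw.1 with rfl | rfl
        · exact (hw.not hx).elim
        · exact (hw.not hy).elim
      · rcases outr_two hdeg hcl hx hy hxy hz.1 with rfl | rfl <;> simp
    · push Not at h2
      refine ⟨blk G v, blk G x, ?_⟩
      rintro B ⟨-, ⟨rfl, w, hw⟩ | ⟨z, rfl, hz⟩⟩
      · simp
      · right; rw [h2 z hz]
  · push Not at h1
    refine ⟨blk G v, blk G v, ?_⟩
    rintro B ⟨-, ⟨rfl, w, hw⟩ | ⟨z, rfl, hz⟩⟩
    · simp
    · exact (h1 z hz).elim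

theorem main (hdeg : MaxDegreeLE G 3) (hcl : ClawFree G) (hdec : Decomposable G) : HasLIEC G 3 := by
  classical
  obtain ⟨O, hO⟩ := exists_ori hdeg hcl hdec
  obtain ⟨n, ⟨e⟩⟩ := Finite.exists_equiv_fin V
  let r : V → ℕ := fun v => (e v : ℕ)
  have hr : Function.Injective r := fun a b h => e.injective (Fin.ext h)
  choose S P dep kill emp allow sol using fun B => bl_all (r := r) hdeg hcl hO hr B
  obtain ⟨κ, hκ⟩ := greedy S P dep kill emp (fun v => by
    obtain ⟨B1, B2, h⟩ := allow_deg (O := O) hcl hdeg v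
    exact ⟨B1, B2, fun B hB => h B (allow B v hB)⟩)
  choose f hf using fun B => sol B κ (hκ B)
  let g : Sym2 V → Fin 3 := fun x => f (blk G (Quot.out x).1) x
  have hg : ∀ u v, Inn G u v → g s(u, v) = f (blk G u) s(u, v) := by
    intro u v h
    have hh : s((Quot.out s(u, v)).1, (Quot.out s(u, v)).2) = s(u, v) := Quot.out_eq s(u, v)
    have : (Quot.out s(u, v)).1 = u ∨ (Quot.out s(u, v)).1 = v := by
      rw [Sym2.eq_iff] at hh; tauto
    simp only [g]
    rcases this with h' | h'
    · rw [h']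
    · rw [h', blk_inn h]
  have hCC : ∀ u v, G.Adj u v → CC G O κ g u v = CC G O κ (f (blk G u)) u v := by
    intro u v h
    rcases io h with h | h
    · rw [CC_inn h, CC_inn h, hg u v h]
    · simp [CC, h]
  have hcd : ∀ B u i, blk G u = B → cdeg G (CC G O κ g) u i = cdeg G (CC G O κ (f B)) u i := by
    rintro B u i rfl
    unfold cdeg
    congr 1
    ext w
    simp only [Set.mem_setOf_eq]
    constructor
    · rintro ⟨a, b⟩; exact ⟨a, by rw [← hCC u w a]; exact b⟩
    · rintro ⟨a, b⟩; exact ⟨a, by rw [hCC u w a]; exact b⟩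
  have hLR : ∀ w, LR G O r κ g w := by
    intro w u hu
    obtain ⟨a, b, c⟩ := hf (blk G w) w rfl u hu
    rw [hcd _ w _ rfl, hcd _ w _ rfl, hcd _ w _ rfl]
    refine ⟨fun h => ?_, b, c⟩
    rw [hg w u h, hcd _ u _ (blk_inn h).symm]
    exact a h
  let c : Sym2 V → Fin 3 := fun x => CC G O κ g (Quot.out x).1 (Quot.out x).2
  have hc : ∀ u v, c s(u, v) = CC G O κ g u v := by
    intro u v
    have hh : s((Quot.out s(u, v)).1, (Quot.out s(u, v)).2) = s(u, v) := Quot.out_eq s(u, v)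
    rw [Sym2.eq_iff] at hh
    simp only [c]
    rcases hh with ⟨h1, h2⟩ | ⟨h1, h2⟩
    · rw [h1, h2]
    · rw [h1, h2, CC_symm hO]
  refine ⟨c, fun i u v huv => ?_⟩
  have en : ∀ x, ((SimpleGraph.fromEdgeSet {e | e ∈ G.edgeSet ∧ c e = i}).neighborSet x).ncard = cdeg G (CC G O κ g) x i := by
    intro x; unfold cdeg; congr 1; ext w; simp [hc]; intro h _; exact h.ne
  rw [en, en]
  simp [hc] at huv
  obtain ⟨⟨huv, rfl⟩, -⟩ := huv
  rcases io huv with h | h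
  · rw [CC_inn h]
    exact (hLR u v huv).1 h
  · have ho := hO.o1 u v h
    by_cases hu : O u
    · rw [CC_out h hu, (hLR u v huv).2.1 h hu]
      exact ((hLR v u huv.symm).2.2 h.symm (by tauto)).symm
    · rw [CC_in h hu, (hLR v u huv.symm).2.1 h.symm (by tauto)]
      exact (hLR u v huv).2.2 h hu
end
end LI

/-- Every decomposable claw-free graph with maximum degree 3 admits a locally irregular
edge-coloring with at most 3 colors. -/
theorem claw_free_subcubic_LIEC {V : Type*} [Fintype V] (G : SimpleGraph V)
    (hdec : Decomposable G) (hclaw : ClawFree G) (hdeg : MaxDegreeLE G 3) :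
    HasLIEC G 3 := by
  exact LI.main hdeg hclaw hdec
end

section
/- Every ring permutation graph G satisfies χ'_irr(G) ≤ 3, i.e., G admits a locally irregular edge-coloring using at most 3 colors. -/
/-- The ring permutation graph `P_φ(C_n, R)` : a cycle `C_n` (on `ZMod n`), a disjoint
graph `R` on `n` vertices, and the perfect matching `{ v φ(v) : v ∈ V(C_n) }`. -/
def ringPermGraph (n : ℕ) {W : Type*} (R : SimpleGraph W) (φ : ZMod n ≃ W) :
    SimpleGraph (ZMod n ⊕ W) :=
  SimpleGraph.fromRel (fun x y =>
    match x, y with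
    | Sum.inl i, Sum.inl j => i - j = 1
    | Sum.inl i, Sum.inr w => φ i = w
    | Sum.inr a, Sum.inr b => R.Adj a b
    | Sum.inr _, Sum.inl _ => False)

/-- number of the three edges (left, pendant, right) having color `c` -/
def tCnt (c cl p cr : Fin 3) : ℕ :=
  (if cl = c then 1 else 0) + (if p = c then 1 else 0) + (if cr = c then 1 else 0)

/-- forbidden degree, in the color of the pendant edge, for the labels 0 = S, 1 = A, 2 = one, 3 = X -/
def tBad (l : Fin 4) : ℕ := if l = 0 then 3 else if l = 2 then 1 else 2

/-- admissible tiles for a label -/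
def tOk (l : Fin 4) (cl p cr : Fin 3) : Prop :=
  ((l = 0 ∨ l = 1) ↔ p = 0) ∧ tCnt p cl p cr ≠ tBad l

instance (l : Fin 4) (cl p cr : Fin 3) : Decidable (tOk l cl p cr) := by
  unfold tOk; infer_instance

/-- code of the pair (color of right edge, degree in that color) -/
def tOut (cl p cr : Fin 3) : ℕ := 3 * cr.val + tCnt cr cl p cr - 1

def tTr (l : Fin 4) (q q' : ℕ) : Prop :=
  ∃ cl p cr : Fin 3, cl.val = q / 3 ∧ tOk l cl p cr ∧ tCnt cl cl p cr ≠ q % 3 + 1 ∧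
    tOut cl p cr = q'

instance (l : Fin 4) (q q' : ℕ) : Decidable (tTr l q q') := by
  unfold tTr; infer_instance

def tInv : List (ℕ × ℕ) := [(128, 152), (256, 304), (0, 216), (8, 88), (32, 416), (64, 200),
  (0, 424), (16, 208), (128, 176), (16, 400), (0, 368), (0, 432)]

theorem tInv_step : ∀ Z ∈ tInv, ∀ l : Fin 4, ∃ Z' ∈ tInv,
    (∀ q' < 9, Z'.1.testBit q' = true → ∃ q < 9, Z.1.testBit q = true ∧ tTr l q q') ∧
    (∀ q' < 9, Z'.2.testBit q' = true → ∃ q < 9, Z.2.testBit q = true ∧ tTr l q q') := by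
  decide +kernel

theorem tInv_base : ∀ T : Fin 4, T = 2 ∨ T = 3 → ∀ l : Fin 4, ∃ Z' ∈ tInv,
    (∀ q' < 9, Z'.1.testBit q' = true → ∃ q < 9, tTr T 4 q ∧ tTr l q q') ∧
    (∀ q' < 9, Z'.2.testBit q' = true → ∃ q < 9, (tTr T 1 q ∨ tTr T 3 q) ∧ tTr l q q') := by
  decide +kernel

theorem tInv_acc : ∀ Z ∈ tInv,
    (∃ q < 9, Z.1.testBit q = true ∧ q / 3 = 1 ∧ q % 3 ≠ 1) ∨
    (∃ q < 9, Z.2.testBit q = true ∧ q / 3 = 2 ∧ q % 3 ≠ 0) := by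
  decide +kernel

structure TTile where
  cl : Fin 3
  p : Fin 3
  cr : Fin 3

def TTile.cnt (t : TTile) (c : Fin 3) : ℕ := tCnt c t.cl t.p t.cr

def TTile.ok (t : TTile) (l : Fin 4) : Prop := tOk l t.cl t.p t.cr

def TTile.compat (t t' : TTile) : Prop := t'.cl = t.cr ∧ t.cnt t.cr ≠ t'.cnt t.cr

/-- there is a valid tile sequence on positions `0..k` -/
def tPath (l : ℕ → Fin 4) (c d : ℕ) (k q : ℕ) : Prop :=
  ∃ t : ℕ → TTile, (t 0).cl.val = c ∧ (t 0).cnt (t 0).cl = d ∧ (∀ i ≤ k, (t i).ok (l i)) ∧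
    (∀ i < k, (t i).compat (t (i + 1))) ∧ tOut (t k).cl (t k).p (t k).cr = q

theorem tOut_div : ∀ cl p cr : Fin 3, tOut cl p cr / 3 = cr.val ∧
    tOut cl p cr % 3 + 1 = tCnt cr cl p cr := by
  decide +kernel

theorem tPath_zero (l : ℕ → Fin 4) (t : TTile) (h : t.ok (l 0)) :
    tPath l t.cl.val (t.cnt t.cl) 0 (tOut t.cl t.p t.cr) := by
  refine ⟨fun _ => t, rfl, rfl, ?_, ?_, rfl⟩
  · intro i hi
    obtain rfl : i = 0 := by omega
    exact h
  · intro i hi; omega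

theorem tPath_succ (l : ℕ → Fin 4) (c d k q q' : ℕ) (h : tPath l c d k q)
    (htr : tTr (l (k + 1)) q q') : tPath l c d (k + 1) q' := by
  obtain ⟨t, h1, h2, h3, h4, h5⟩ := h
  obtain ⟨cl, p, cr, e1, e2, e3, e4⟩ := htr
  have hd := tOut_div (t k).cl (t k).p (t k).cr
  rw [h5] at hd
  refine ⟨fun i => if i = k + 1 then ⟨cl, p, cr⟩ else t i, ?_, ?_, ?_, ?_, ?_⟩
  · simpa using h1
  · simpa using h2
  · intro i hi
    by_cases hik : i = k + 1
    · subst hik; simpa [TTile.ok] using e2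
    · simpa [hik] using h3 i (by omega)
  · intro i hi
    have hik : i ≠ k + 1 := by omega
    by_cases hik' : i = k
    · subst hik'
      have : cl = (t i).cr := Fin.ext (by omega)
      simp only [TTile.compat, TTile.cnt]
      simp only [hik, if_false, if_true]
      refine ⟨this, ?_⟩
      rw [← hd.2, ← this]
      exact fun h => e3 h.symm
    · have : i + 1 ≠ k + 1 := by omega
      simpa [hik, hik', this] using h4 i (by omega)
  · simpa using e4

theorem tPath_inv (l : ℕ → Fin 4) (h0 : l 0 = 0) (h1 : l 1 = 2 ∨ l 1 = 3) (k : ℕ) :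
    ∃ Z ∈ tInv, (∀ q < 9, Z.1.testBit q = true → tPath l 1 2 (k + 2) q) ∧
      (∀ q < 9, Z.2.testBit q = true → tPath l 2 1 (k + 2) q) := by
  induction k with
  | zero =>
    obtain ⟨Z, hZ, a, b⟩ := tInv_base _ h1 (l 2)
    refine ⟨Z, hZ, ?_, ?_⟩
    · intro q hq hb
      obtain ⟨q1, _, t1, t2⟩ := a q hq hb
      refine tPath_succ l 1 2 1 _ _ (tPath_succ l 1 2 0 4 _ ?_ t1) t2
      exact tPath_zero l ⟨1, 0, 1⟩ (by rw [h0]; simp only [TTile.ok]; decide)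
    · intro q hq hb
      obtain ⟨q1, _, t1, t2⟩ := b q hq hb
      rcases t1 with t1 | t1
      · refine tPath_succ l 2 1 1 _ _ (tPath_succ l 2 1 0 1 _ ?_ t1) t2
        exact tPath_zero l ⟨2, 0, 0⟩ (by rw [h0]; simp only [TTile.ok]; decide)
      · refine tPath_succ l 2 1 1 _ _ (tPath_succ l 2 1 0 3 _ ?_ t1) t2
        exact tPath_zero l ⟨2, 0, 1⟩ (by rw [h0]; simp only [TTile.ok]; decide)
  | succ k ih =>
    obtain ⟨Z, hZ, a, b⟩ := ih
    obtain ⟨Z', hZ', a', b'⟩ := tInv_step Z hZ (l (k + 3))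
    refine ⟨Z', hZ', ?_, ?_⟩
    · intro q hq hb
      obtain ⟨q1, hq1, t1, t2⟩ := a' q hq hb
      exact tPath_succ l _ _ _ _ _ (a q1 hq1 t1) t2
    · intro q hq hb
      obtain ⟨q1, hq1, t1, t2⟩ := b' q hq hb
      exact tPath_succ l _ _ _ _ _ (b q1 hq1 t1) t2

theorem tCycle (l : ℕ → Fin 4) (h0 : l 0 = 0) (h1 : l 1 = 2 ∨ l 1 = 3) (k : ℕ) :
    ∃ t : ℕ → TTile, (∀ i ≤ k + 2, (t i).ok (l i)) ∧
      (∀ i < k + 2, (t i).compat (t (i + 1))) ∧ (t (k + 2)).compat (t 0) := by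
  obtain ⟨Z, hZ, a, b⟩ := tPath_inv l h0 h1 k
  have key : ∃ c d q, tPath l c d (k + 2) q ∧ q / 3 = c ∧ q % 3 + 1 ≠ d := by
    rcases tInv_acc Z hZ with ⟨q, hq, hb, e1, e2⟩ | ⟨q, hq, hb, e1, e2⟩
    · exact ⟨1, 2, q, a q hq hb, e1, by omega⟩
    · exact ⟨2, 1, q, b q hq hb, e1, by omega⟩
  obtain ⟨c, d, q, ⟨t, g1, g2, g3, g4, g5⟩, e1, e2⟩ := key
  refine ⟨t, g3, g4, ?_⟩
  have hd := tOut_div (t (k + 2)).cl (t (k + 2)).p (t (k + 2)).cr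
  rw [g5] at hd
  have hc : (t 0).cl = (t (k + 2)).cr := Fin.ext (by omega)
  refine ⟨hc, ?_⟩
  rw [← hc, g2, hc, TTile.cnt, ← hd.2]
  exact e2

/-- the cyclic version on `ZMod n` -/
theorem tZMod (n : ℕ) [NeZero n] (hn : 3 ≤ n) (L : ZMod n → Fin 4) (i0 : ZMod n)
    (h0 : L i0 = 0) (h1 : L (i0 + 1) = 2 ∨ L (i0 + 1) = 3) :
    ∃ e p : ZMod n → Fin 3, (∀ i, tOk (L i) (e (i - 1)) (p i) (e i)) ∧
      ∀ i, tCnt (e i) (e (i - 1)) (p i) (e i) ≠ tCnt (e i) (e i) (p (i + 1)) (e (i + 1)) := by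
  obtain ⟨k, rfl⟩ : ∃ k, n = k + 3 := ⟨n - 3, by omega⟩
  obtain ⟨t, g1, g2, g3⟩ := tCycle (fun m => L (i0 + (m : ZMod (k + 3)))) (by simpa using h0)
    (by simpa using h1) k
  have hadd : ∀ i : ZMod (k + 3), (t (i - i0).val).compat (t (i + 1 - i0).val) := by
    intro i
    have hlt := ZMod.val_lt (i - i0)
    by_cases hv : (i - i0).val = k + 2
    · have : i + 1 - i0 = 0 := by
        have : i - i0 = ((k + 2 : ℕ) : ZMod (k + 3)) := by
          rw [← hv, ZMod.natCast_zmod_val]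
        rw [add_sub_right_comm, this]
        have h := ZMod.natCast_self (k + 3)
        push_cast at h ⊢
        rw [← h]; ring
      rw [hv, this, ZMod.val_zero]; exact g3
    · have : (i + 1 - i0).val = (i - i0).val + 1 := by
        rw [add_sub_right_comm, ZMod.val_add_of_lt] <;> rw [ZMod.val_one'' (by omega)]
        omega
      rw [this]; exact g2 _ (by omega)
  have hcl : ∀ i : ZMod (k + 3), (t (i - i0).val).cl = (t (i - 1 - i0).val).cr := by
    intro i
    have := (hadd (i - 1)).1
    rwa [sub_add_cancel] at this
  refine ⟨fun i => (t (i - i0).val).cr, fun i => (t (i - i0).val).p, ?_, ?_⟩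
  · intro i
    have hlt := ZMod.val_lt (i - i0)
    have := g1 (i - i0).val (by omega)
    simp only [TTile.ok, ZMod.natCast_zmod_val, add_sub_cancel, hcl] at this
    exact this
  · intro i
    have := (hadd i).2
    simp only [TTile.cnt] at this
    rw [hcl i, hcl (i + 1), add_sub_cancel_right] at this
    exact this

theorem liec_of {V : Type*} (G : SimpleGraph V) (f : V → V → Fin 3)
    (hs : ∀ u v, G.Adj u v → f u v = f v u)
    (h : ∀ u v, G.Adj u v →
      {x | G.Adj u x ∧ f u x = f u v}.ncard ≠ {x | G.Adj v x ∧ f v x = f u v}.ncard) :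
    HasLIEC G 3 := by
  let c : Sym2 V → Fin 3 := fun s => f s.out.1 s.out.2
  have hc : ∀ u v, G.Adj u v → c s(u, v) = f u v := by
    intro u v huv
    have h1 : s((s(u, v) : Sym2 V).out.1, (s(u, v) : Sym2 V).out.2) = s(u, v) :=
      Quot.out_eq _
    rcases Sym2.eq_iff.1 h1 with ⟨a, b⟩ | ⟨a, b⟩
    · simp only [c, a, b]
    · simp only [c, a, b]; exact (hs u v huv).symm
  refine ⟨c, fun i u v huv => ?_⟩
  have hN : ∀ u, (SimpleGraph.fromEdgeSet {e | e ∈ G.edgeSet ∧ c e = i}).neighborSet u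
      = {x | G.Adj u x ∧ f u x = i} := by
    intro u
    ext x
    simp only [SimpleGraph.mem_neighborSet, SimpleGraph.fromEdgeSet_adj, Set.mem_ofPred_eq,
      SimpleGraph.mem_edgeSet]
    constructor
    · rintro ⟨⟨a, b⟩, _⟩
      exact ⟨a, by rw [← hc u x a]; exact b⟩
    · rintro ⟨a, b⟩
      exact ⟨⟨a, by rw [hc u x a]; exact b⟩, a.ne⟩
  have h2 : v ∈ {x | G.Adj u x ∧ f u x = i} := by rw [← hN]; exact huv
  rw [hN, hN]
  have := h u v h2.1
  rw [h2.2] at this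
  exact this

theorem ncard_three {V : Type*} (P : V → Prop) (g : V → Fin 3) (x y z : V) (c : Fin 3)
    (hxy : x ≠ y) (hxz : x ≠ z) (hyz : y ≠ z) (hP : ∀ v, P v ↔ v = x ∨ v = y ∨ v = z) :
    {v | P v ∧ g v = c}.ncard =
      (if g x = c then 1 else 0) + (if g y = c then 1 else 0) + (if g z = c then 1 else 0) := by
  classical
  have : {v | P v ∧ g v = c} = (({x, y, z} : Finset V).filter (fun v => g v = c) : Set V) := by
    ext v; simp [hP]
  rw [this, Set.ncard_coe_finset, Finset.card_filter,
    Finset.sum_insert (by simp [hxy, hxz]), Finset.sum_insert (by simp [hyz]),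
    Finset.sum_singleton, add_assoc]

theorem exists_max_indep {W : Type*} [Finite W] (R : SimpleGraph W) :
    ∃ S : Set W, (∀ a ∈ S, ∀ b ∈ S, ¬ R.Adj a b) ∧ ∀ w, w ∉ S → ∃ s ∈ S, R.Adj w s := by
  obtain ⟨S, hS⟩ := (Set.toFinite {S : Set W | ∀ a ∈ S, ∀ b ∈ S, ¬ R.Adj a b}).exists_maximal
    ⟨∅, by simp⟩
  refine ⟨S, hS.prop, fun w hw => ?_⟩
  by_contra hcon
  push Not at hcon
  have h1 : insert w S ∈ {S : Set W | ∀ a ∈ S, ∀ b ∈ S, ¬ R.Adj a b} := by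
    intro a ha b hb
    rcases ha with rfl | ha <;> rcases hb with rfl | hb
    · exact R.irrefl
    · exact hcon b hb
    · exact fun h => hcon a ha h.symm
    · exact hS.prop a ha b hb
  exact hw (hS.le_of_ge h1 (Set.subset_insert _ _) (Set.mem_insert _ _))

theorem exists_step {n : ℕ} [NeZero n] (P : ZMod n → Prop) (a b : ZMod n) (ha : P a) (hb : ¬ P b) :
    ∃ i, P i ∧ ¬ P (i + 1) := by
  by_contra hcon
  push Not at hcon
  have : ∀ k : ℕ, P (a + k) := by
    intro k
    induction k with
    | zero => simpa using ha
    | succ k ih => have := hcon _ ih; push_cast; rwa [← add_assoc]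
  apply hb
  have := this (b - a).val
  rwa [ZMod.natCast_zmod_val, add_sub_cancel] at this

set_option maxHeartbeats 4000000 in
/-- Every ring permutation graph admits a locally irregular edge-coloring with at most
3 colors. -/
theorem ringPermGraph_LIEC (n : ℕ) (hn : 3 ≤ n) {W : Type*} (R : SimpleGraph W)
    (hreg : ∀ w : W, (R.neighborSet w).ncard = 2) (φ : ZMod n ≃ W) :
    HasLIEC (ringPermGraph n R φ) 3 := by
  classical
  have : NeZero n := ⟨by omega⟩
  have : Finite W := Finite.of_equiv _ φ
  obtain ⟨S, hind, hmax⟩ := exists_max_indep R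
  have hnb : ∀ w, ∃ a b, a ≠ b ∧ ∀ v, R.Adj w v ↔ v = a ∨ v = b := by
    intro w
    obtain ⟨a, b, hab, h⟩ := Set.ncard_eq_two.1 (hreg w)
    refine ⟨a, b, hab, fun v => ?_⟩
    rw [← SimpleGraph.mem_neighborSet, h]; simp
  -- existence of the starting place
  obtain ⟨i0, hi0, hi1⟩ : ∃ i, φ i ∈ S ∧ φ (i + 1) ∉ S := by
    obtain ⟨a, b, hab, h⟩ := hnb (φ 0)
    have hin : ∃ w, w ∈ S := by
      by_cases h0 : φ 0 ∈ S
      · exact ⟨_, h0⟩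
      · obtain ⟨s, hs, _⟩ := hmax _ h0; exact ⟨s, hs⟩
    obtain ⟨w, hw⟩ := hin
    obtain ⟨a, b, hab, h⟩ := hnb w
    have ha : a ∉ S := fun ha => hind w hw a ha ((h a).2 (Or.inl rfl))
    exact exists_step (fun i => φ i ∈ S) (φ.symm w) (φ.symm a) (by simpa using hw)
      (by simpa using ha)
  let key : W → ℕ := fun w => (φ.symm w - (i0 + 1)).val
  have hkey : ∀ a b, key a = key b → a = b := by
    intro a b h
    have := ZMod.val_injective n h
    exact φ.symm.injective (sub_left_injective this)
  have hkey0 : key (φ (i0 + 1)) = 0 := by simp [key]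
  let L : W → Fin 4 := fun w => if w ∈ S then 0 else
    if ∃ m, R.Adj w m ∧ m ∉ S then
      (if ∃ m, R.Adj w m ∧ m ∉ S ∧ key w < key m then 3 else 1) else 2
  obtain ⟨e, p', hok, hcc⟩ := tZMod n hn (fun i => L (φ i)) i0 (by simp [L, hi0]) (by
    simp only [L, hi1, if_false]
    by_cases hm : ∃ m, R.Adj (φ (i0 + 1)) m ∧ m ∉ S
    · right
      rw [if_pos hm, if_pos]
      obtain ⟨m, hm1, hm2⟩ := hm
      refine ⟨m, hm1, hm2, ?_⟩
      rw [hkey0]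
      rcases Nat.eq_zero_or_pos (key m) with h | h
      · exact absurd (hkey _ _ (hkey0.trans h.symm)) hm1.ne
      · exact h
    · left; rw [if_neg hm])
  let p : W → Fin 3 := fun w => p' (φ.symm w)
  have hpz : ∀ w, (L w = 0 ∨ L w = 1) ↔ p w = 0 := by
    intro w
    have := (hok (φ.symm w)).1
    simpa using this
  let f : ZMod n ⊕ W → ZMod n ⊕ W → Fin 3 := fun x y =>
    match x, y with
    | Sum.inl i, Sum.inl j => if j = i + 1 then e i else e j
    | Sum.inl i, Sum.inr _ => p' i
    | Sum.inr _, Sum.inl i => p' i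
    | Sum.inr a, Sum.inr b => if a ∈ S ∨ b ∈ S then 0 else if key a < key b then p a else p b
  have h1 : (1 : ZMod n) ≠ 0 := by
    intro h
    have := ZMod.val_one'' (n := n) (by omega)
    rw [h, ZMod.val_zero] at this; omega
  have h2 : (1 : ZMod n) + 1 ≠ 0 := by
    intro h
    have h3 : (1 + 1 : ZMod n).val = 2 := by
      rw [ZMod.val_add_of_lt] <;> rw [ZMod.val_one'' (n := n) (by omega)]
      omega
    rw [h, ZMod.val_zero] at h3; omega
  have hadj1 : ∀ i v, (ringPermGraph n R φ).Adj (Sum.inl i) v ↔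
      v = Sum.inl (i - 1) ∨ v = Sum.inr (φ i) ∨ v = Sum.inl (i + 1) := by
    intro i v
    rcases v with j | w
    · simp only [ringPermGraph, SimpleGraph.fromRel_adj, ne_eq, Sum.inl.injEq, reduceCtorEq,
        false_or]
      constructor
      · rintro ⟨_, h | h⟩
        · left; rw [← h]; ring
        · right; rw [← h]; ring
      · rintro (rfl | rfl)
        · exact ⟨fun h => h1 (by linear_combination h), Or.inl (by ring)⟩
        · exact ⟨fun h => h1 (by linear_combination -h), Or.inr (by ring)⟩
    · simp [ringPermGraph, SimpleGraph.fromRel_adj, eq_comm]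
  have hadj2 : ∀ w v, (ringPermGraph n R φ).Adj (Sum.inr w) v ↔
      v = Sum.inl (φ.symm w) ∨ ∃ u, v = Sum.inr u ∧ R.Adj w u := by
    intro w v
    rcases v with j | u
    · simp [ringPermGraph, SimpleGraph.fromRel_adj, Equiv.eq_symm_apply]
    · simp only [ringPermGraph, SimpleGraph.fromRel_adj, ne_eq, Sum.inr.injEq, reduceCtorEq,
        false_or, exists_eq_left']
      constructor
      · rintro ⟨_, h | h⟩
        · exact h
        · exact h.symm
      · intro h; exact ⟨h.ne, Or.inl h⟩
  have hd1 : ∀ i c, {x | (ringPermGraph n R φ).Adj (Sum.inl i) x ∧ f (Sum.inl i) x = c}.ncard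
      = tCnt c (e (i - 1)) (p' i) (e i) := by
    intro i c
    rw [ncard_three _ _ _ _ _ c (by simp) (by
      simp only [ne_eq, Sum.inl.injEq]
      exact fun h => h2 (by linear_combination -h)) (by simp) (hadj1 i)]
    have : ¬ (i - 1 = i + 1) := fun h => h2 (by linear_combination -h)
    simp [f, tCnt, this]
  have hd2 : ∀ w a b c, a ≠ b → (∀ v, R.Adj w v ↔ v = a ∨ v = b) →
      {x | (ringPermGraph n R φ).Adj (Sum.inr w) x ∧ f (Sum.inr w) x = c}.ncard
      = (if f (Sum.inr w) (Sum.inr a) = c then 1 else 0) +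
        (if f (Sum.inr w) (Sum.inr b) = c then 1 else 0) + (if p w = c then 1 else 0) := by
    intro w a b c hab hw
    rw [ncard_three _ _ (Sum.inr a) (Sum.inr b) (Sum.inl (φ.symm w)) c (by simpa using hab)
      (by simp) (by simp)]
    intro v
    rw [hadj2]
    constructor
    · rintro (h | ⟨u, rfl, hu⟩)
      · exact Or.inr (Or.inr h)
      · rcases (hw u).1 hu with rfl | rfl
        · exact Or.inl rfl
        · exact Or.inr (Or.inl rfl)
    · rintro (rfl | rfl | h)
      · exact Or.inr ⟨_, rfl, (hw _).2 (Or.inl rfl)⟩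
      · exact Or.inr ⟨_, rfl, (hw _).2 (Or.inr rfl)⟩
      · exact Or.inl h
  -- neighbours of a vertex outside `S`
  have hnb' : ∀ w, w ∉ S → ∃ a b, a ≠ b ∧ a ∈ S ∧ ∀ v, R.Adj w v ↔ v = a ∨ v = b := by
    intro w hw
    obtain ⟨a, b, hab, h⟩ := hnb w
    obtain ⟨s, hs, hs'⟩ := hmax w hw
    rcases (h s).1 hs' with rfl | rfl
    · exact ⟨s, b, hab, hs, h⟩
    · exact ⟨s, a, hab.symm, hs, fun v => by rw [h v, or_comm]⟩
  have hS : ∀ w, w ∈ S → p w = 0 ∧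
      ∀ c, {x | (ringPermGraph n R φ).Adj (Sum.inr w) x ∧ f (Sum.inr w) x = c}.ncard =
        if c = 0 then 3 else 0 := by
    intro w hw
    have hp : p w = 0 := (hpz w).1 (Or.inl (by simp [L, hw]))
    refine ⟨hp, fun c => ?_⟩
    obtain ⟨a, b, hab, h⟩ := hnb w
    rw [hd2 w a b c hab h, hp]
    simp only [f, hw, true_or, if_true]
    by_cases hc : c = 0
    · simp [hc]
    · simp [hc, Ne.symm hc]
  have hT : ∀ w, w ∉ S → ∀ m, R.Adj w m → m ∉ S →
      (key w < key m → L w = 3 ∧ p w ≠ 0 ∧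
        ∀ c, {x | (ringPermGraph n R φ).Adj (Sum.inr w) x ∧ f (Sum.inr w) x = c}.ncard =
        (if 0 = c then 1 else 0) + (if p w = c then 2 else 0)) ∧
      (¬ key w < key m → L w = 1 ∧ p w = 0 ∧ p m ≠ 0 ∧
        ∀ c, {x | (ringPermGraph n R φ).Adj (Sum.inr w) x ∧ f (Sum.inr w) x = c}.ncard =
        (if 0 = c then 2 else 0) + (if p m = c then 1 else 0)) := by
    intro w hw m hm hmS
    have hL3 : ∀ w m, w ∉ S → R.Adj w m → m ∉ S → key w < key m → L w = 3 := by
      intro w m hw hm hmS hlt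
      simp only [L, hw, if_false]
      rw [if_pos ⟨m, hm, hmS⟩, if_pos ⟨m, hm, hmS, hlt⟩]
    have hp3 : ∀ w, L w = 3 → p w ≠ 0 := by
      intro w h hp
      have := (hpz w).2 hp
      rw [h] at this
      revert this; decide
    obtain ⟨a, b, hab, ha, h⟩ := hnb' w hw
    have hmb : m = b := by
      rcases (h m).1 hm with rfl | h
      · exact absurd ha hmS
      · exact h
    subst hmb
    constructor
    · intro hlt
      have hl := hL3 w m hw hm hmS hlt
      refine ⟨hl, hp3 w hl, fun c => ?_⟩
      rw [hd2 w a m c hab h]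
      simp only [f, ha, or_true, if_true, hw, hmS, or_self, if_false, hlt]
      split_ifs <;> rfl
    · intro hlt
      have hlt' : key m < key w := by
        rcases Nat.lt_trichotomy (key w) (key m) with h | h | h
        · exact absurd h hlt
        · exact absurd (hkey _ _ h) hm.ne
        · exact h
      have hl := hL3 m w hmS hm.symm hw hlt'
      have hl1 : L w = 1 := by
        simp only [L, hw, if_false]
        rw [if_pos ⟨m, hm, hmS⟩, if_neg]
        rintro ⟨m', g1, g2, g3⟩
        rcases (h m').1 g1 with rfl | rfl
        · exact g2 ha
        · exact hlt g3
      have hp1 := (hpz w).1 (Or.inr hl1)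
      refine ⟨hl1, hp1, hp3 m hl, fun c => ?_⟩
      rw [hd2 w a m c hab h, hp1]
      simp only [f, ha, or_true, if_true, hw, hmS, or_self, if_false, hlt]
      split_ifs <;> rfl
  have hO : ∀ w, w ∉ S → (∀ m, R.Adj w m → m ∈ S) → L w = 2 ∧ p w ≠ 0 ∧
        ∀ c, {x | (ringPermGraph n R φ).Adj (Sum.inr w) x ∧ f (Sum.inr w) x = c}.ncard =
        (if 0 = c then 2 else 0) + (if p w = c then 1 else 0) := by
    intro w hw hm
    have hl : L w = 2 := by
      simp only [L, hw, if_false]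
      rw [if_neg]
      rintro ⟨m, g1, g2⟩
      exact g2 (hm m g1)
    refine ⟨hl, ?_, fun c => ?_⟩
    · intro hp
      have := (hpz w).2 hp
      rw [hl] at this
      revert this; decide
    · obtain ⟨a, b, hab, ha, h⟩ := hnb' w hw
      have hb : b ∈ S := hm b ((h b).2 (Or.inr rfl))
      rw [hd2 w a b c hab h]
      simp only [f, ha, hb, or_true, if_true]
      split_ifs <;> rfl
  have hM : ∀ w, {x | (ringPermGraph n R φ).Adj (Sum.inr w) x ∧ f (Sum.inr w) x = p w}.ncard
      = tBad (L w) := by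
    intro w
    by_cases hw : w ∈ S
    · obtain ⟨g1, g2⟩ := hS w hw
      rw [g2, g1]; simp [L, hw, tBad]
    · by_cases hm : ∃ m, R.Adj w m ∧ m ∉ S
      · obtain ⟨m, hm1, hm2⟩ := hm
        obtain ⟨g1, g2⟩ := hT w hw m hm1 hm2
        by_cases hlt : key w < key m
        · obtain ⟨l1, l2, l3⟩ := g1 hlt
          rw [l3, l1, if_neg (Ne.symm l2), if_pos rfl]; decide
        · obtain ⟨l1, l2, l3, l4⟩ := g2 hlt
          rw [l4, l1, l2, if_neg l3, if_pos rfl]; decide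
      · push Not at hm
        obtain ⟨l1, l2, l3⟩ := hO w hw hm
        rw [l3, l1, if_neg (Ne.symm l2), if_pos rfl]; decide
  have hN3 : ∀ w, w ∉ S →
      {x | (ringPermGraph n R φ).Adj (Sum.inr w) x ∧ f (Sum.inr w) x = 0}.ncard ≠ 3 := by
    intro w hw
    by_cases hm : ∃ m, R.Adj w m ∧ m ∉ S
    · obtain ⟨m, hm1, hm2⟩ := hm
      obtain ⟨g1, g2⟩ := hT w hw m hm1 hm2
      by_cases hlt : key w < key m
      · obtain ⟨l1, l2, l3⟩ := g1 hlt
        rw [l3, if_neg l2]; simp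
      · obtain ⟨l1, l2, l3, l4⟩ := g2 hlt
        rw [l4, if_neg l3]; simp
    · push Not at hm
      obtain ⟨l1, l2, l3⟩ := hO w hw hm
      rw [l3, if_neg l2]; simp
  have hpair : ∀ w v, R.Adj w v → w ∉ S → v ∉ S → key w < key v →
      {x | (ringPermGraph n R φ).Adj (Sum.inr w) x ∧ f (Sum.inr w) x = p w}.ncard ≠
      {x | (ringPermGraph n R φ).Adj (Sum.inr v) x ∧ f (Sum.inr v) x = p w}.ncard := by
    intro w v hwv hw hv hlt
    obtain ⟨l1, l2, l3⟩ := (hT w hw v hwv hv).1 hlt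
    obtain ⟨-, -, -, l4⟩ := (hT v hv w hwv.symm hw).2 (by omega)
    rw [l3, l4]; simp [Ne.symm l2]
  have hCM : ∀ i, {x | (ringPermGraph n R φ).Adj (Sum.inl i) x ∧ f (Sum.inl i) x = p' i}.ncard ≠
      {x | (ringPermGraph n R φ).Adj (Sum.inr (φ i)) x ∧ f (Sum.inr (φ i)) x = p' i}.ncard := by
    intro i
    have := hM (φ i)
    simp only [p, Equiv.symm_apply_apply] at this
    rw [this, hd1]
    exact (hok i).2
  have hCC : ∀ i, {x | (ringPermGraph n R φ).Adj (Sum.inl i) x ∧ f (Sum.inl i) x = e i}.ncard ≠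
      {x | (ringPermGraph n R φ).Adj (Sum.inl (i + 1)) x ∧
        f (Sum.inl (i + 1)) x = e i}.ncard := by
    intro i
    rw [hd1, hd1, add_sub_cancel_right]
    exact hcc i
  refine liec_of _ f ?_ ?_
  · rintro (i | w) v h
    · rcases (hadj1 i v).1 h with rfl | rfl | rfl
      · have : ¬ (i - 1 = i + 1) := fun h => h2 (by linear_combination -h)
        simp [f, this]
      · rfl
      · have : ¬ (i = i + 1 + 1) := fun h => h2 (by linear_combination -h)
        simp [f, this]
    · rcases (hadj2 w v).1 h with rfl | ⟨u, rfl, hu⟩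
      · rfl
      · simp only [f, or_comm]
        split_ifs with g1 g2 g3 g3
        · rfl
        · omega
        · rfl
        · rfl
        · exact absurd (hkey w u (by omega)) hu.ne
  · rintro (i | w) v h
    · rcases (hadj1 i v).1 h with rfl | rfl | rfl
      · have hne : ¬ (i - 1 = i + 1) := fun h => h2 (by linear_combination -h)
        have := (hCC (i - 1)).symm
        rw [sub_add_cancel] at this
        have hf : f (Sum.inl i) (Sum.inl (i - 1)) = e (i - 1) := by simp [f, hne]
        rw [hf]; exact this
      · exact hCM i
      · have hf : f (Sum.inl i) (Sum.inl (i + 1)) = e i := by simp [f]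
        rw [hf]; exact hCC i
    · rcases (hadj2 w v).1 h with rfl | ⟨u, rfl, hu⟩
      · have := (hCM (φ.symm w)).symm
        rw [Equiv.apply_symm_apply] at this
        exact this
      · by_cases hw : w ∈ S
        · have hu' : u ∉ S := fun h => hind w hw u h hu
          have hf : f (Sum.inr w) (Sum.inr u) = 0 := by simp [f, hw]
          rw [hf, (hS w hw).2]
          exact (hN3 u hu').symm
        · by_cases hu' : u ∈ S
          · have hf : f (Sum.inr w) (Sum.inr u) = 0 := by simp [f, hu']
            rw [hf, (hS u hu').2]
            exact hN3 w hw
          · by_cases hlt : key w < key u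
            · have hf : f (Sum.inr w) (Sum.inr u) = p w := by simp [f, hw, hu', hlt]
              rw [hf]; exact hpair w u hu hw hu' hlt
            · have hlt' : key u < key w := by
                rcases Nat.lt_trichotomy (key w) (key u) with h | h | h
                · exact absurd h hlt
                · exact absurd (hkey _ _ h) hu.ne
                · exact h
              have hf : f (Sum.inr w) (Sum.inr u) = p u := by simp [f, hw, hu', hlt]
              rw [hf]; exact (hpair u w hu.symm hu' hw hlt').symm
end

section
/- Every cycle permutation graph G satisfies χ'_irr(G) ≤ 3, i.e., G admits a locally irregular edge-coloring using at most 3 colors. -/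
/-- The cycle on `ZMod n` (for `n ≥ 3`) : `i` is adjacent to `i ± 1`. -/
def cycleGraph (n : ℕ) : SimpleGraph (ZMod n) :=
  SimpleGraph.fromRel (fun i j => i - j = 1)

/-- The cycle permutation graph `P_φ(C_n, C_n)` : two disjoint copies of the cycle `C_n`
(each on `ZMod n`) together with the perfect matching `{ v φ(v) : v in the first copy }`. -/
def cyclePermGraph (n : ℕ) (φ : ZMod n ≃ ZMod n) : SimpleGraph (ZMod n ⊕ ZMod n) :=
  SimpleGraph.fromRel (fun x y =>
    match x, y with
    | Sum.inl i, Sum.inl j => i - j = 1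
    | Sum.inl i, Sum.inr w => φ i = w
    | Sum.inr a, Sum.inr b => (cycleGraph n).Adj a b
    | Sum.inr _, Sum.inl _ => False)


namespace LIEC

/-- number of the three colours equal to `x` -/
def cnt {C : Type} [DecidableEq C] (a b c x : C) : ℕ :=
  (if a = x then 1 else 0) + (if b = x then 1 else 0) + (if c = x then 1 else 0)

structure Good (n : ℕ) (φ : ZMod n ≃ ZMod n) (α β μ : ZMod n → Fin 3) : Prop where
  hA : ∀ i, cnt (α i) (α (i - 1)) (μ i) (α i) ≠ cnt (α (i + 1)) (α i) (μ (i + 1)) (α i)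
  hB : ∀ j, cnt (β j) (β (j - 1)) (μ (φ.symm j)) (β j) ≠
    cnt (β (j + 1)) (β j) (μ (φ.symm (j + 1))) (β j)
  hM : ∀ i, cnt (α i) (α (i - 1)) (μ i) (μ i) ≠ cnt (β (φ i)) (β (φ i - 1)) (μ i) (μ i)

def IsGood (n : ℕ) (φ : ZMod n ≃ ZMod n) : Prop := ∃ α β μ, Good n φ α β μ

theorem one_ne (n : ℕ) (hn : 3 ≤ n) : (1 : ZMod n) ≠ 0 := by
  have : Fact (1 < n) := ⟨by omega⟩
  exact one_ne_zero

theorem two_ne (n : ℕ) (hn : 3 ≤ n) : (1 + 1 : ZMod n) ≠ 0 := by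
  intro h
  have h2 : ((2 : ℕ) : ZMod n) = 0 := by push_cast; rw [← h]; norm_num
  rw [ZMod.natCast_eq_zero_iff] at h2
  exact absurd (Nat.le_of_dvd (by norm_num) h2) (by omega)

/-- colouring of a pair in a cycle -/
def cc {n : ℕ} (α : ZMod n → Fin 3) (i j : ZMod n) : Fin 3 :=
  if j = i + 1 then α i else if i = j + 1 then α j else 0

theorem cc_symm {n : ℕ} (hn : 3 ≤ n) (α : ZMod n → Fin 3) (i j : ZMod n) :
    cc α i j = cc α j i := by
  have := two_ne n hn
  unfold cc
  split_ifs with h1 h2 <;> try rfl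
  exfalso; apply this
  rw [h1] at h2
  linear_combination - h2

def pc {n : ℕ} (α β μ : ZMod n → Fin 3) : ZMod n ⊕ ZMod n → ZMod n ⊕ ZMod n → Fin 3
  | Sum.inl i, Sum.inl j => cc α i j
  | Sum.inr i, Sum.inr j => cc β i j
  | Sum.inl i, Sum.inr _ => μ i
  | Sum.inr _, Sum.inl i => μ i

theorem pc_symm {n : ℕ} (hn : 3 ≤ n) (α β μ : ZMod n → Fin 3) (x y) :
    pc α β μ x y = pc α β μ y x := by
  rcases x with x | x <;> rcases y with y | y <;> simp [pc, cc_symm hn]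

theorem adj_ll {n : ℕ} (hn : 3 ≤ n) (φ : ZMod n ≃ ZMod n) (i j : ZMod n) :
    (cyclePermGraph n φ).Adj (Sum.inl i) (Sum.inl j) ↔ j = i + 1 ∨ j = i - 1 := by
  have h1 := one_ne n hn
  simp only [cyclePermGraph, SimpleGraph.fromRel_adj, ne_eq, Sum.inl.injEq]
  constructor
  · rintro ⟨_, h | h⟩
    · right; linear_combination -h
    · left; linear_combination h
  · rintro (h | h) <;> subst h
    · refine ⟨fun h => h1 (by linear_combination -h), Or.inr (by ring)⟩
    · refine ⟨fun h => h1 (by linear_combination h), Or.inl (by ring)⟩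

theorem adj_rr {n : ℕ} (hn : 3 ≤ n) (φ : ZMod n ≃ ZMod n) (i j : ZMod n) :
    (cyclePermGraph n φ).Adj (Sum.inr i) (Sum.inr j) ↔ j = i + 1 ∨ j = i - 1 := by
  have h1 := one_ne n hn
  simp only [cyclePermGraph, cycleGraph, SimpleGraph.fromRel_adj, ne_eq, Sum.inr.injEq]
  constructor
  · rintro ⟨_, ⟨_, h | h⟩ | ⟨_, h | h⟩⟩
    · right; linear_combination -h
    · left; linear_combination h
    · left; linear_combination h
    · right; linear_combination -h
  · rintro (h | h) <;> subst h
    · have : ¬ i = i + 1 := fun h => h1 (by linear_combination -h)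
      exact ⟨this, Or.inl ⟨this, Or.inr (by ring)⟩⟩
    · have : ¬ i = i - 1 := fun h => h1 (by linear_combination h)
      exact ⟨this, Or.inl ⟨this, Or.inl (by ring)⟩⟩

theorem adj_lr {n : ℕ} (φ : ZMod n ≃ ZMod n) (i j : ZMod n) :
    (cyclePermGraph n φ).Adj (Sum.inl i) (Sum.inr j) ↔ j = φ i := by
  simp [cyclePermGraph, SimpleGraph.fromRel_adj, eq_comm]

theorem adj_rl {n : ℕ} (φ : ZMod n ≃ ZMod n) (i j : ZMod n) :
    (cyclePermGraph n φ).Adj (Sum.inr i) (Sum.inl j) ↔ j = φ.symm i := by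
  rw [SimpleGraph.adj_comm, adj_lr, Equiv.eq_symm_apply, eq_comm]

theorem ncard_three {V : Type*} (f : V → Fin 3) (x : Fin 3) (a b c : V)
    (hab : a ≠ b) (hac : a ≠ c) (hbc : b ≠ c) (S : Set V)
    (hS : ∀ v, v ∈ S ↔ (v = a ∨ v = b ∨ v = c) ∧ f v = x) :
    S.ncard = cnt (f a) (f b) (f c) x := by
  classical
  have : S = ↑(({a, b, c} : Finset V).filter (fun v => f v = x)) := by
    ext v; simp [hS]
  rw [this, Set.ncard_coe_finset, Finset.card_filter, Finset.sum_insert (by simp [hab, hac]),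
    Finset.sum_insert (by simp [hbc]), Finset.sum_singleton, cnt, add_assoc]

theorem hasLIEC_of_good (n : ℕ) (hn : 3 ≤ n) (φ : ZMod n ≃ ZMod n) (h : IsGood n φ) :
    HasLIEC (cyclePermGraph n φ) 3 := by
  obtain ⟨α, β, μ, h⟩ := h
  have h1 := one_ne n hn
  have h2 := two_ne n hn
  have hpm : ∀ i : ZMod n, i + 1 ≠ i - 1 := fun i h => h2 (by linear_combination h)
  have hc1 : ∀ (γ : ZMod n → Fin 3) i, cc γ i (i + 1) = γ i := by intro γ i; simp [cc]
  have hc2 : ∀ (γ : ZMod n → Fin 3) i, cc γ i (i - 1) = γ (i - 1) := by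
    intro γ i; rw [cc, if_neg (hpm i).symm, if_pos (by ring)]
  refine ⟨Sym2.lift ⟨pc α β μ, pc_symm hn α β μ⟩, fun x => ?_⟩
  have hadj : ∀ u v, (SimpleGraph.fromEdgeSet {e | e ∈ (cyclePermGraph n φ).edgeSet ∧
      Sym2.lift ⟨pc α β μ, pc_symm hn α β μ⟩ e = x}).Adj u v ↔
      (cyclePermGraph n φ).Adj u v ∧ pc α β μ u v = x := by
    intro u v
    simp only [SimpleGraph.fromEdgeSet_adj, Set.mem_ofPred_eq, SimpleGraph.mem_edgeSet,
      Sym2.lift_mk]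
    exact ⟨fun h => h.1, fun h => ⟨h, h.1.ne⟩⟩
  generalize SimpleGraph.fromEdgeSet {e | e ∈ (cyclePermGraph n φ).edgeSet ∧
      Sym2.lift ⟨pc α β μ, pc_symm hn α β μ⟩ e = x} = H at hadj
  have dl : ∀ i, (H.neighborSet (Sum.inl i)).ncard = cnt (α i) (α (i - 1)) (μ i) x := by
    intro i
    rw [ncard_three (pc α β μ (Sum.inl i)) x (Sum.inl (i + 1)) (Sum.inl (i - 1)) (Sum.inr (φ i))
      (by simpa using hpm i) (by simp) (by simp)]
    · simp [pc, hc1, hc2]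
    · intro v
      rw [SimpleGraph.mem_neighborSet, hadj]
      rcases v with v | v <;> simp [adj_ll hn, adj_lr]
  have dr : ∀ i, (H.neighborSet (Sum.inr i)).ncard =
      cnt (β i) (β (i - 1)) (μ (φ.symm i)) x := by
    intro i
    rw [ncard_three (pc α β μ (Sum.inr i)) x (Sum.inr (i + 1)) (Sum.inr (i - 1))
      (Sum.inl (φ.symm i))
      (by simpa using hpm i) (by simp) (by simp)]
    · simp [pc, hc1, hc2]
    · intro v
      rw [SimpleGraph.mem_neighborSet, hadj]
      rcases v with v | v <;> simp [adj_rr hn, adj_rl]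
  intro u v huv
  rw [hadj] at huv
  obtain ⟨huv, hx⟩ := huv
  rcases u with u | u <;> rcases v with v | v
  · rw [dl, dl]
    rw [adj_ll hn] at huv
    rcases huv with rfl | rfl
    · rw [pc, hc1] at hx; subst hx
      simpa using h.hA u
    · rw [pc, hc2] at hx; subst hx
      have := h.hA (u - 1)
      rw [sub_add_cancel] at this
      exact this.symm
  · rw [dl, dr]
    rw [adj_lr] at huv
    subst huv
    rw [pc] at hx; subst hx
    simpa using h.hM u
  · rw [dl, dr]
    rw [adj_rl] at huv
    subst huv
    rw [pc] at hx; subst hx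
    simpa using (h.hM (φ.symm u)).symm
  · rw [dr, dr]
    rw [adj_rr hn] at huv
    rcases huv with rfl | rfl
    · rw [pc, hc1] at hx; subst hx
      simpa using h.hB u
    · rw [pc, hc2] at hx; subst hx
      have := h.hB (u - 1)
      rw [sub_add_cancel] at this
      exact this.symm

theorem cnt_swap {C : Type} [DecidableEq C] (a b c x : C) : cnt a b c x = cnt b a c x := by
  unfold cnt; omega

theorem good_shiftA (n : ℕ) (φ : ZMod n ≃ ZMod n) (s : ZMod n)
    (h : IsGood n ((Equiv.addRight s).trans φ)) : IsGood n φ := by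
  obtain ⟨α, β, μ, h⟩ := h
  refine ⟨fun i => α (i - s), β, fun i => μ (i - s), ⟨fun i => ?_, fun j => ?_, fun i => ?_⟩⟩
  · have := h.hA (i - s)
    convert this using 3 <;> ring_nf
  · simpa [sub_eq_add_neg] using h.hB j
  · have := h.hM (i - s)
    simp only [Equiv.trans_apply, Equiv.coe_addRight, sub_add_cancel] at this
    convert this using 3; ring_nf

theorem good_shiftB (n : ℕ) (φ : ZMod n ≃ ZMod n) (s : ZMod n)
    (h : IsGood n (φ.trans (Equiv.addRight s))) : IsGood n φ := by
  obtain ⟨α, β, μ, h⟩ := h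
  refine ⟨α, fun i => β (i + s), μ, ⟨h.hA, fun j => ?_, fun i => ?_⟩⟩
  · have := h.hB (j + s)
    simp only [Equiv.symm_trans_apply, Equiv.addRight_symm, Equiv.coe_addRight] at this
    convert this using 3 <;> ring_nf
  · have := h.hM i
    simp only [Equiv.trans_apply, Equiv.coe_addRight] at this
    convert this using 3; ring_nf

theorem good_negB (n : ℕ) (φ : ZMod n ≃ ZMod n)
    (h : IsGood n (φ.trans (Equiv.neg _))) : IsGood n φ := by
  obtain ⟨α, β, μ, h⟩ := h
  refine ⟨α, fun i => β (-i - 1), μ, ⟨h.hA, fun j => ?_, fun i => ?_⟩⟩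
  · have := (h.hB (-j - 1)).symm
    simp only [Equiv.symm_trans_apply, Equiv.neg_symm, Equiv.neg_apply] at this
    rw [cnt_swap (β (-j - 1 + 1)), cnt_swap (β (-j - 1)) (β (-j - 1 - 1))] at this
    convert this using 3 <;> ring_nf
  · have := h.hM i
    simp only [Equiv.trans_apply, Equiv.neg_apply] at this
    rw [cnt_swap (β _)] at this
    convert this using 3; ring_nf

end LIEC
namespace LIEC
inductive Letter where
  | N | P | Q
  deriving DecidableEq

open Letter

/-- degree in colour `x` of a vertex with cycle colours `a, b` and pendant colour `p` -/
def dg (l : Letter) (a b p x : Bool) : ℕ :=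
  (if a = x then 1 else 0) + (if b = x then 1 else 0) + (if l ≠ N ∧ p = x then 1 else 0)

def Step (l : Letter) (p : Bool) (s s' : Bool × Fin 4) : Prop :=
  (s'.2 : ℕ) = dg l s'.1 s.1 p s'.1 ∧ (s.2 : ℕ) ≠ dg l s'.1 s.1 p s.1 ∧
    (l = P → dg l s'.1 s.1 p p ≠ 1) ∧ (l = Q → dg l s'.1 s.1 p p ≠ 2)

instance (l p s s') : Decidable (Step l p s s') := by unfold Step; infer_instance

def code (x : ZMod 4) : Bool × Fin 4 :=
  (if x = 0 then (false, 1) else if x = 1 then (false, 2) else if x = 2 then (true, 1)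
    else (true, 2))

def wt : Letter → ZMod 4
  | N => 1
  | _ => 2

theorem track (y : ZMod 4) (l : Letter) (hl : l ≠ Q) : ∃ p, Step l p (code y) (code (y + wt l)) := by
  cases l
  · revert y; decide
  · revert y; decide
  · exact absurd rfl hl

theorem table (l0 l2 : Letter) (h0 : l0 ≠ N) (h2 : l2 ≠ Q) (t : ZMod 4) :
    ∃ (x : ZMod 4) (s1 s2 : Bool × Fin 4) (p0 p1 p2 : Bool),
      Step l0 p0 (code x) s1 ∧ Step P p1 s1 s2 ∧ Step l2 p2 s2 (code (x + t)) ∧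
      (l0 = Q → p0 ≠ p1) := by
  cases l0 <;> cases l2 <;> simp only [ne_eq, not_true_eq_false] at h0 h2 <;> revert t <;> decide

theorem core (n : ℕ) (hn : 3 ≤ n) (L : ℕ → Letter) (h0 : L 0 ≠ N) (h1 : L 1 = P)
    (h2 : ∀ i, 2 ≤ i → i < n → L i ≠ Q) :
    ∃ (s : ℕ → Bool × Fin 4) (p : ℕ → Bool), s n = s 0 ∧
      (∀ i, i < n → Step (L i) (p i) (s i) (s (i + 1))) ∧ (L 0 = Q → p 0 ≠ p 1) := by
  set T : ℕ → ZMod 4 := fun m => ∑ i ∈ Finset.Ico 3 m, wt (L i) with hT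
  obtain ⟨x, s1, s2, p0, p1, p2, a0, a1, a2, a3⟩ := table (L 0) (L 2) h0 (h2 2 le_rfl (by omega))
    (- T n)
  have htr : ∀ i, ∃ p, i < n → 3 ≤ i → Step (L i) p (code (x - T n + T i))
      (code (x - T n + T i + wt (L i))) := by
    intro i
    by_cases hi : i < n ∧ 3 ≤ i
    · obtain ⟨p, hp⟩ := track (x - T n + T i) (L i) (h2 i (by omega) hi.1)
      exact ⟨p, fun _ _ => hp⟩
    · exact ⟨true, fun h h' => absurd ⟨h, h'⟩ hi⟩
  choose q hq using htr
  refine ⟨fun i => match i with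
      | 0 => code x
      | 1 => s1
      | 2 => s2
      | (k + 3) => code (x - T n + T (k + 3)),
    fun i => match i with
      | 0 => p0
      | 1 => p1
      | 2 => p2
      | (k + 3) => q (k + 3), ?_, ?_, a3⟩
  · obtain ⟨m, rfl⟩ := Nat.exists_eq_add_of_le' hn
    simp
  · intro i hi
    match i, hi with
    | 0, _ => exact a0
    | 1, _ => simpa [h1] using a1
    | 2, _ =>
      have : T 3 = 0 := by simp [hT]
      simpa [this, sub_eq_add_neg] using a2
    | (k + 3), hi =>
      have := hq (k + 3) hi (by omega)
      have e : T (k + 3 + 1) = T (k + 3) + wt (L (k + 3)) := by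
        simp only [hT]; rw [Finset.sum_Ico_succ_top (by omega)]
      simpa [e, add_assoc] using this

theorem val_succ (n : ℕ) (hn : 3 ≤ n) (j : ZMod n) :
    (j + 1).val = if j.val + 1 = n then 0 else j.val + 1 := by
  have : NeZero n := ⟨by omega⟩
  have : Fact (1 < n) := ⟨by omega⟩
  have hj := ZMod.val_lt j
  rw [ZMod.val_add, ZMod.val_one]
  split_ifs with h
  · rw [h, Nat.mod_self]
  · exact Nat.mod_eq_of_lt (by omega)

theorem coreZ (n : ℕ) (hn : 3 ≤ n) (L : ZMod n → Letter) (h0 : L 0 ≠ N) (h1 : L 1 = P)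
    (h2 : ∀ i, i ≠ 0 → L i ≠ Q) :
    ∃ (β p : ZMod n → Bool),
      (∀ j, dg (L j) (β j) (β (j - 1)) (p j) (β j) ≠
        dg (L (j + 1)) (β (j + 1)) (β j) (p (j + 1)) (β j)) ∧
      (∀ j, L j = P → dg P (β j) (β (j - 1)) (p j) (p j) ≠ 1) ∧
      (∀ j, L j = Q → dg Q (β j) (β (j - 1)) (p j) (p j) ≠ 2) ∧
      (L 0 = Q → p 0 ≠ p 1) := by
  have : NeZero n := ⟨by omega⟩
  have : Fact (1 < n) := ⟨by omega⟩
  obtain ⟨s, p, hs, hst, hp⟩ := core n hn (fun i => L (i : ZMod n)) (by simpa using h0)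
    (by simpa using h1) (by
      intro i hi hin
      apply h2
      rw [Ne, ZMod.natCast_eq_zero_iff]
      intro hd
      exact absurd (Nat.le_of_dvd (by omega) hd) (by omega))
  have hs' : ∀ j : ZMod n, s ((j + 1).val) = s (j.val + 1) := by
    intro j
    rw [val_succ n hn]
    split_ifs with h
    · rw [h, hs]
    · rfl
  have key : ∀ j : ZMod n, Step (L j) (p j.val) (s j.val) (s (j.val + 1)) := by
    intro j
    simpa using hst j.val (ZMod.val_lt j)
  have hprev : ∀ j : ZMod n, s ((j - 1).val + 1) = s j.val := by
    intro j
    rw [← hs', sub_add_cancel]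
  refine ⟨fun j => (s (j.val + 1)).1, fun j => p j.val, ?_, ?_, ?_, ?_⟩
  · intro j
    simp only [hprev]
    rw [← (key j).1]
    have := (key (j + 1)).2.1
    rwa [hs'] at this
  · intro j hj
    simp only [hprev]
    have := (key j).2.2.1 hj
    rwa [hj] at this
  · intro j hj
    simp only [hprev]
    have := (key j).2.2.2 hj
    rwa [hj] at this
  · intro h
    simpa [ZMod.val_one] using hp (by simpa using h)

end LIEC

namespace LIEC
open Letter

def emb (b : Bool) : Fin 3 := if b then 2 else 1

def mu {n : ℕ} (L : ZMod n → Letter) (p : ZMod n → Bool) (j : ZMod n) : Fin 3 :=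
  if L j = N then 0 else emb (p j)

theorem emb_ne (b : Bool) : emb b ≠ 0 := by revert b; decide

theorem emb_inj (a b : Bool) : emb a = emb b ↔ a = b := by revert a b; decide

theorem cnt_emb {n : ℕ} (L : ZMod n → Letter) (p : ZMod n → Bool) (j : ZMod n) (a b x : Bool) :
    cnt (emb a) (emb b) (mu L p j) (emb x) = dg (L j) a b (p j) x := by
  unfold cnt dg mu
  by_cases h : L j = N
  · simp [h, emb_inj, (emb_ne x).symm]
  · simp [h, emb_inj]

theorem finish (n : ℕ) (hn : 3 ≤ n) (φ : ZMod n ≃ ZMod n) (L : ZMod n → Letter)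
    (h0 : L 0 ≠ N) (h1 : L 1 = P) (h2 : ∀ i, i ≠ 0 → L i ≠ Q)
    (H : ∀ p : ZMod n → Bool, (L 0 = Q → p 0 ≠ p 1) → ∃ α : ZMod n → Fin 3,
      (∀ i, cnt (α i) (α (i - 1)) (mu L p (φ i)) (α i) ≠
        cnt (α (i + 1)) (α i) (mu L p (φ (i + 1))) (α i)) ∧
      (∀ i, L (φ i) = N → cnt (α i) (α (i - 1)) 0 0 ≠ 1) ∧
      (∀ i, L (φ i) = P → cnt (α i) (α (i - 1)) (emb (p (φ i))) (emb (p (φ i))) = 1) ∧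
      (∀ i, L (φ i) = Q → cnt (α i) (α (i - 1)) (emb (p (φ i))) (emb (p (φ i))) = 2)) :
    IsGood n φ := by
  obtain ⟨β, p, b1, b2, b3, b4⟩ := coreZ n hn L h0 h1 h2
  obtain ⟨α, a1, a2, a3, a4⟩ := H p b4
  refine ⟨α, fun j => emb (β j), fun i => mu L p (φ i), ⟨a1, fun j => ?_, fun i => ?_⟩⟩
  · simp only [Equiv.apply_symm_apply, cnt_emb]
    exact b1 j
  · rcases hl : L (φ i) with _ | _ | _
    · have e : mu L p (φ i) = 0 := by simp [mu, hl]
      simp only [e]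
      have := a2 i hl
      have e2 : cnt (emb (β (φ i))) (emb (β (φ i - 1))) 0 0 = 1 := by
        simp [cnt, emb_ne]
      rwa [e2]
    · have e : mu L p (φ i) = emb (p (φ i)) := by simp [mu, hl]
      have := b2 _ hl
      rw [← hl, ← cnt_emb, e] at this
      simp only [e]
      rw [a3 i hl]
      exact this.symm
    · have e : mu L p (φ i) = emb (p (φ i)) := by simp [mu, hl]
      have := b3 _ hl
      rw [← hl, ← cnt_emb, e] at this
      simp only [e]
      rw [a4 i hl]
      exact this.symm

theorem par_succ (n : ℕ) (hn : 3 ≤ n) (he : n % 2 = 0) (i : ZMod n) :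
    (i + 1).val % 2 ≠ i.val % 2 := by
  rw [val_succ n hn]; split_ifs <;> omega

theorem even_two (n : ℕ) (hn : 3 ≤ n) (he : n % 2 = 0) (φ : ZMod n ≃ ZMod n)
    (h : (φ.symm 0).val % 2 = (φ.symm 1).val % 2) : IsGood n φ := by
  set r := (φ.symm 0).val % 2 with hr
  refine finish n hn φ (fun j => if (φ.symm j).val % 2 = r then P else N) ?_ ?_ ?_ ?_
  · simp [← hr]
  · simp [← h]
  · intro i _; split_ifs <;> simp
  · intro p _
    refine ⟨fun _ => 0, ?_, ?_, ?_, ?_⟩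
    · intro i
      have := par_succ n hn he i
      have r2 : r < 2 := Nat.mod_lt _ (by norm_num)
      by_cases h1 : i.val % 2 = r
      · have h2 : (i + 1).val % 2 ≠ r := by omega
        simp [cnt, mu, h1, h2, emb_ne]
      · have h2 : (i + 1).val % 2 = r := by omega
        simp [cnt, mu, h1, h2, emb_ne]
    · intro i _; simp [cnt]
    · intro i _; simp [cnt, (emb_ne _).symm]
    · intro i hi
      split_ifs at hi

theorem even_case (n : ℕ) (hn : 3 ≤ n) (he : n % 2 = 0) (φ : ZMod n ≃ ZMod n) : IsGood n φ := by
  by_cases hj : ∃ j, (φ.symm j).val % 2 = (φ.symm (j + 1)).val % 2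
  · obtain ⟨j, hj⟩ := hj
    apply good_shiftB n φ (-j)
    apply even_two n hn he
    simpa [add_comm] using hj
  · push Not at hj
    refine ⟨fun _ => 0, fun _ => 1, fun i => if i.val % 2 = 0 then 0 else 1, ⟨?_, ?_, ?_⟩⟩
    · intro i
      have := par_succ n hn he i
      by_cases h1 : i.val % 2 = 0
      · have h2 : (i + 1).val % 2 ≠ 0 := by omega
        simp [cnt, h1, h2]
      · have h2 : (i + 1).val % 2 = 0 := by omega
        simp [cnt, h1, h2]
    · intro i
      have := hj i
      by_cases h1 : (φ.symm i).val % 2 = 0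
      · have h2 : (φ.symm (i + 1)).val % 2 ≠ 0 := by omega
        simp [cnt, h1, h2]
      · have h2 : (φ.symm (i + 1)).val % 2 = 0 := by omega
        simp [cnt, h1, h2]
    · intro i
      by_cases h1 : i.val % 2 = 0 <;> simp [cnt, h1]

theorem odd_two (n : ℕ) (hn : 3 ≤ n) (ho : n % 2 = 1) (φ : ZMod n ≃ ZMod n)
    (h0 : φ.symm 0 = 0) (h1 : (φ.symm 1).val % 2 = 0) : IsGood n φ := by
  have : NeZero n := ⟨by omega⟩
  have : Fact (1 < n) := ⟨by omega⟩
  have hne : (φ.symm 1).val ≠ 0 := by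
    rw [Ne, ZMod.val_eq_zero, ← h0, EmbeddingLike.apply_eq_iff_eq]
    exact one_ne n hn
  have hp0 : φ 0 = 0 := by rw [← h0, Equiv.apply_symm_apply, h0]
  set L : ZMod n → Letter := fun j => if (φ.symm j).val = 0 then Q else
    if (φ.symm j).val % 2 = 0 ∧ ((φ.symm j).val + 1 = n → (φ.symm 1).val + 1 = n) then P else N
    with hL
  have L0 : L 0 = Q := by simp [hL, h0]
  refine finish n hn φ L (by simp [L0]) ?_ ?_ ?_
  · simp only [hL]; rw [if_neg hne, if_pos ⟨h1, id⟩]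
  · intro i hi
    have : ¬ (φ.symm i).val = 0 := by
      rw [ZMod.val_eq_zero, ← h0, EmbeddingLike.apply_eq_iff_eq]
      exact hi
    simp only [hL]; rw [if_neg this]; split_ifs <;> simp
  · intro p hp
    have hp := hp L0
    have hlast : (φ.symm 1).val + 1 = n → ∀ i : ZMod n, i.val + 1 = n → φ i = 1 := by
      intro a i b
      have : i = φ.symm 1 := ZMod.val_injective n (by omega)
      rw [this, Equiv.apply_symm_apply]
    have hLi : ∀ i, L (φ i) = if i.val = 0 then Q else
        if i.val % 2 = 0 ∧ (i.val + 1 = n → (φ.symm 1).val + 1 = n) then P else N := by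
      intro i; simp only [hL, Equiv.symm_apply_apply]
    have hzero : ∀ i : ZMod n, i.val = 0 → φ i = 0 := by
      intro i hi
      rw [ZMod.val_eq_zero] at hi
      rw [hi, hp0]
    have hprev : ∀ i : ZMod n, (i - 1).val + 1 = n ↔ i.val = 0 := by
      intro i
      have := val_succ n hn (i - 1)
      rw [sub_add_cancel] at this
      split_ifs at this <;> omega
    have hlt : ∀ i : ZMod n, i.val < n := fun i => ZMod.val_lt i
    refine ⟨fun i => if i.val + 1 = n then emb (p 0) else 0, ?_, ?_, ?_, ?_⟩
    · intro i
      have hs := val_succ n hn i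
      have hl := hlt i
      simp only [hprev, mu, hLi]
      by_cases c1 : i.val + 1 = n
      · rw [if_pos c1] at hs
        have e1 : i.val ≠ 0 := by omega
        have e2 : ¬ (0 + 1 = n) := by omega
        have e3 : i.val % 2 = 0 := by omega
        by_cases c2 : (φ.symm 1).val + 1 = n
        · have := hlast c2 i c1
          simp [cnt, c1, c2, hs, e1, e2, e3, this, hzero _ hs, emb_inj, hp.symm, (emb_ne _).symm]
        · simp [cnt, c1, c2, hs, e1, e2, e3, hzero _ hs, (emb_ne _).symm]
      · rw [if_neg c1] at hs
        have hl2 := hlt (i + 1)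
        by_cases c0 : i.val = 0
        · have e2 : ¬ (1 + 1 = n) := by omega
          have e3 : ¬ (0 + 1 = n) := by omega
          simp [cnt, c0, hs, e2, e3, emb_ne]
        · by_cases c3 : i.val % 2 = 0
          · have e : (i.val + 1) % 2 = 1 := by omega
            have e2 : ¬ (i.val + 1 + 1 = n) := by omega
            simp [cnt, c0, c1, c3, hs, e, e2, emb_ne]
          · have e : (i.val + 1) % 2 = 0 := by omega
            by_cases c4 : i.val + 1 + 1 = n
            · by_cases c2 : (φ.symm 1).val + 1 = n <;>
              simp [cnt, c0, c1, c2, c3, c4, hs, e, emb_ne]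
            · simp [cnt, c0, c1, c3, c4, hs, e, emb_ne]
    · intro i hi
      rw [hLi] at hi
      simp only [hprev]
      have hl := hlt i
      by_cases c0 : i.val = 0
      · simp [c0] at hi
      · by_cases c1 : i.val + 1 = n <;> simp [cnt, c0, c1, emb_ne]
    · intro i hi
      rw [hLi] at hi
      simp only [hprev]
      by_cases c0 : i.val = 0
      · simp [c0] at hi
      · by_cases c1 : i.val + 1 = n
        · by_cases c2 : (φ.symm 1).val + 1 = n
          · have := hlast c2 i c1
            simp [cnt, c0, c1, this, emb_inj, hp, (emb_ne _).symm]
          · simp [c0, c1, c2] at hi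
        · simp [cnt, c0, c1, (emb_ne _).symm]
    · intro i hi
      rw [hLi] at hi
      simp only [hprev]
      by_cases c0 : i.val = 0
      · have e : ¬ (0 + 1 = n) := by omega
        simp [cnt, c0, e, hzero _ c0, (emb_ne _).symm]
      · simp only [c0, if_false] at hi
        split_ifs at hi

theorem odd_case (n : ℕ) (hn : 3 ≤ n) (ho : n % 2 = 1) (φ : ZMod n ≃ ZMod n) : IsGood n φ := by
  have : NeZero n := ⟨by omega⟩
  by_cases hd : (φ.symm 1 - φ.symm 0).val % 2 = 0
  · apply good_shiftA n φ (φ.symm 0)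
    apply odd_two n hn ho
    · simp
    · simpa [sub_eq_add_neg] using hd
  · have hd' : (φ.symm 0 - φ.symm 1).val % 2 = 0 := by
      have hne : φ.symm 1 - φ.symm 0 ≠ 0 := by
        intro h; rw [h] at hd; simp at hd
      have : NeZero (φ.symm 1 - φ.symm 0) := ⟨hne⟩
      rw [← neg_sub, ZMod.val_neg_of_ne_zero]
      have := ZMod.val_lt (φ.symm 1 - φ.symm 0)
      omega
    apply good_negB
    apply good_shiftB n _ 1
    apply good_shiftA n _ (φ.symm 1)
    apply odd_two n hn ho
    · simp
    · simpa [sub_eq_add_neg] using hd'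

end LIEC

/-- Every cycle permutation graph admits a locally irregular edge-coloring with at most
3 colors. -/
theorem cyclePermGraph_LIEC (n : ℕ) (hn : 3 ≤ n) (φ : ZMod n ≃ ZMod n) :
    HasLIEC (cyclePermGraph n φ) 3 := by
  rcases Nat.mod_two_eq_zero_or_one n with h | h
  · exact LIEC.hasLIEC_of_good n hn φ (LIEC.even_case n hn h φ)
  · exact LIEC.hasLIEC_of_good n hn φ (LIEC.odd_case n hn h φ)
end

section
/- Every generalized Petersen graph P(n,k) satisfies χ'_irr(P(n,k)) ≤ 3, i.e., it admits a locally irregular edge-coloring using at most 3 colors. -/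
/-- The generalized Petersen graph `P(n,k)` : `inl i` are the outer vertices `u_i`,
`inr i` are the inner vertices `v_i`, with edges `u_i u_{i+1}`, `u_i v_i`, `v_i v_{i+k}`
(indices modulo `n`). -/
def genPetersen (n k : ℕ) : SimpleGraph (ZMod n ⊕ ZMod n) :=
  SimpleGraph.fromRel (fun x y =>
    match x, y with
    | Sum.inl i, Sum.inl j => i - j = 1
    | Sum.inl i, Sum.inr j => i = j
    | Sum.inr i, Sum.inr j => i - j = (k : ZMod n)
    | Sum.inr _, Sum.inl _ => False)

set_option linter.all false
theorem gp_adj_inl (n k : ℕ) (hn : 3 ≤ n) (i : ZMod n) (y : ZMod n ⊕ ZMod n) :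
    (genPetersen n k).Adj (Sum.inl i) y ↔
      y = Sum.inl (i + 1) ∨ y = Sum.inl (i - 1) ∨ y = Sum.inr i := by
  have : Fact (1 < n) := ⟨by omega⟩
  rcases y with j | j
  · simp only [genPetersen, SimpleGraph.fromRel_adj, ne_eq, Sum.inl.injEq, reduceCtorEq, or_false]
    constructor
    · rintro ⟨_, h | h⟩
      · right; rw [← h]; ring
      · left; rw [← h]; ring
    · rintro (h | h)
      · subst h; simp
      · subst h; simp [eq_sub_iff_add_eq]
  · simp [genPetersen, SimpleGraph.fromRel_adj, eq_comm]

theorem gp_adj_inr (n k : ℕ) (hk : 1 ≤ k) (hkn : 2 * k < n) (i : ZMod n) (y : ZMod n ⊕ ZMod n) :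
    (genPetersen n k).Adj (Sum.inr i) y ↔
      y = Sum.inr (i + k) ∨ y = Sum.inr (i - k) ∨ y = Sum.inl i := by
  have hk0 : (k : ZMod n) ≠ 0 := by
    rw [Ne, ZMod.natCast_eq_zero_iff]
    intro h; have := Nat.le_of_dvd (by omega) h; omega
  rcases y with j | j
  · simp [genPetersen, SimpleGraph.fromRel_adj, eq_comm]
  · simp only [genPetersen, SimpleGraph.fromRel_adj, ne_eq, Sum.inr.injEq, reduceCtorEq, or_false]
    constructor
    · rintro ⟨_, h | h⟩
      · right; rw [← h]; ring
      · left; rw [← h]; ring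
    · rintro (h | h)
      · subst h; simp [hk0]
      · subst h; simp [eq_sub_iff_add_eq, hk0]

/-- the parametrization of the edges -/
def gpEdge (n k : ℕ) : ZMod n ⊕ (ZMod n ⊕ ZMod n) → Sym2 (ZMod n ⊕ ZMod n)
  | Sum.inl i => s(Sum.inl i, Sum.inl (i + 1))
  | Sum.inr (Sum.inl i) => s(Sum.inl i, Sum.inr i)
  | Sum.inr (Sum.inr i) => s(Sum.inr i, Sum.inr (i + k))

theorem gp_two_ne (n k : ℕ) (hk : 1 ≤ k) (hkn : 2 * k < n) : (k : ZMod n) + k ≠ 0 := by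
  have : ((2 * k : ℕ) : ZMod n) ≠ 0 := by
    rw [Ne, ZMod.natCast_eq_zero_iff]
    intro h; have := Nat.le_of_dvd (by omega) h; omega
  intro h; apply this; push_cast; rw [two_mul, h]

theorem gpEdge_inj (n k : ℕ) (hn : 3 ≤ n) (hk : 1 ≤ k) (hkn : 2 * k < n) :
    Function.Injective (gpEdge n k) := by
  have h1 := gp_two_ne n 1 le_rfl (by omega)
  have h2 := gp_two_ne n k hk hkn
  rintro (i | i | i) (j | j | j) h <;>
    simp only [gpEdge, Sym2.eq_iff, Sum.inl.injEq, Sum.inr.injEq, reduceCtorEq, and_false,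
      false_and, or_false, false_or, and_self] at h ⊢
  · rcases h with h | ⟨h, h'⟩
    · exact h.1
    · exfalso; apply h1; rw [h] at h'; push_cast
      have : j + (1 + 1) = j + 0 := by rw [add_zero]; rw [← add_assoc]; exact h'
      exact add_left_cancel this
  · exact h
  · rcases h with h | ⟨h, h'⟩
    · exact h.1
    · exfalso; apply h2; rw [h] at h'
      have : j + ((k : ZMod n) + k) = j + 0 := by rw [add_zero]; rw [← add_assoc]; exact h'
      exact add_left_cancel this

def ind (p : Prop) [Decidable p] : ℕ := if p then 1 else 0

theorem ncard_three_s3 {V : Type*} (a b c : V) (hab : a ≠ b) (hac : a ≠ c) (hbc : b ≠ c)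
    (S : Set V) (pa pb pc : Prop) [Decidable pa] [Decidable pb] [Decidable pc]
    (h : ∀ y, y ∈ S ↔ (y = a ∧ pa) ∨ (y = b ∧ pb) ∨ (y = c ∧ pc)) :
    S.ncard = ind pa + ind pb + ind pc := by
  have hS : S = (if pa then {a} else ∅) ∪ ((if pb then {b} else ∅) ∪ (if pc then {c} else ∅)) := by
    ext y; rw [h]; by_cases pa <;> by_cases pb <;> by_cases pc <;> simp [*] <;> tauto
  rw [hS]
  by_cases pa <;> by_cases pb <;> by_cases pc <;>
    simp [*, ind, Set.ncard_insert_of_notMem, hab.symm, hac.symm, hbc.symm]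

theorem gp_of_zmod (n k : ℕ) (hn : 3 ≤ n) (hk : 1 ≤ k) (hkn : 2 * k < n)
    (s e g : ZMod n → Fin 3)
    (ho : ∀ i, ind (e i = e i) + ind (e (i - 1) = e i) + ind (s i = e i) ≠
      ind (e (i + 1) = e i) + ind (e i = e i) + ind (s (i + 1) = e i))
    (hs : ∀ i, ind (e i = s i) + ind (e (i - 1) = s i) + ind (s i = s i) ≠
      ind (g i = s i) + ind (g (i - k) = s i) + ind (s i = s i))
    (hg : ∀ i, ind (g i = g i) + ind (g (i - k) = g i) + ind (s i = g i) ≠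
      ind (g (i + k) = g i) + ind (g i = g i) + ind (s (i + k) = g i)) :
    HasLIEC (genPetersen n k) 3 := by
  have hinj := gpEdge_inj n k hn hk hkn
  have h1 := gp_two_ne n 1 le_rfl (by omega)
  have h2 := gp_two_ne n k hk hkn
  set c : Sym2 (ZMod n ⊕ ZMod n) → Fin 3 :=
    Function.extend (gpEdge n k) (Sum.elim e (Sum.elim s g)) (fun _ => 0) with hc
  have ce : ∀ i, c s(Sum.inl i, Sum.inl (i + 1)) = e i := fun i =>
    hinj.extend_apply (Sum.elim e (Sum.elim s g)) _ (Sum.inl i)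
  have cs : ∀ i, c s(Sum.inl i, Sum.inr i) = s i := fun i =>
    hinj.extend_apply (Sum.elim e (Sum.elim s g)) _ (Sum.inr (Sum.inl i))
  have cg : ∀ i, c s(Sum.inr i, Sum.inr (i + k)) = g i := fun i =>
    hinj.extend_apply (Sum.elim e (Sum.elim s g)) _ (Sum.inr (Sum.inr i))
  have ce' : ∀ i, c s(Sum.inl i, Sum.inl (i - 1)) = e (i - 1) := fun i => by
    rw [Sym2.eq_swap, ← ce (i - 1), sub_add_cancel]
  have cs' : ∀ i, c s(Sum.inr i, Sum.inl i) = s i := fun i => by rw [Sym2.eq_swap, cs]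
  have cg' : ∀ i, c s(Sum.inr i, Sum.inr (i - k)) = g (i - k) := fun i => by
    rw [Sym2.eq_swap, ← cg (i - k), sub_add_cancel]
  refine ⟨c, fun col => ?_⟩
  have hadj : ∀ x y, (SimpleGraph.fromEdgeSet
      {e | e ∈ (genPetersen n k).edgeSet ∧ c e = col}).Adj x y ↔
      (genPetersen n k).Adj x y ∧ c s(x, y) = col := by
    intro x y
    rw [SimpleGraph.fromEdgeSet_adj]
    simp only [Set.mem_ofPred_eq, SimpleGraph.mem_edgeSet]
    exact ⟨fun h => h.1, fun h => ⟨h, h.1.ne⟩⟩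
  set H := SimpleGraph.fromEdgeSet {e | e ∈ (genPetersen n k).edgeSet ∧ c e = col} with hH
  have dU : ∀ i, (H.neighborSet (Sum.inl i)).ncard =
      ind (e i = col) + ind (e (i - 1) = col) + ind (s i = col) := by
    intro i
    refine ncard_three_s3 (Sum.inl (i + 1)) (Sum.inl (i - 1)) (Sum.inr i) ?_ (by simp) (by simp) _ _ _ _ ?_
    · intro h
      have h := Sum.inl.inj h
      apply h1
      push_cast
      calc (1 : ZMod n) + 1 = (i + 1) - i + 1 := by ring
        _ = (i - 1) - i + 1 := by rw [h]
        _ = 0 := by ring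
    · intro y
      rw [SimpleGraph.mem_neighborSet, hadj, gp_adj_inl n k hn]
      constructor
      · rintro ⟨rfl | rfl | rfl, h⟩
        · rw [ce] at h; simp [h]
        · rw [ce'] at h; simp [h]
        · rw [cs] at h; simp [h]
      · rintro (⟨rfl, h⟩ | ⟨rfl, h⟩ | ⟨rfl, h⟩)
        · rw [ce]; simp [h]
        · rw [ce']; simp [h]
        · rw [cs]; simp [h]
  have dV : ∀ i, (H.neighborSet (Sum.inr i)).ncard =
      ind (g i = col) + ind (g (i - k) = col) + ind (s i = col) := by
    intro i
    refine ncard_three_s3 (Sum.inr (i + k)) (Sum.inr (i - k)) (Sum.inl i) ?_ (by simp) (by simp) _ _ _ _ ?_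
    · intro h
      have h := Sum.inr.inj h
      apply h2
      calc (k : ZMod n) + k = (i + k) - i + k := by ring
        _ = (i - k) - i + k := by rw [h]
        _ = 0 := by ring
    · intro y
      rw [SimpleGraph.mem_neighborSet, hadj, gp_adj_inr n k hk hkn]
      constructor
      · rintro ⟨rfl | rfl | rfl, h⟩
        · rw [cg] at h; simp [h]
        · rw [cg'] at h; simp [h]
        · rw [cs'] at h; simp [h]
      · rintro (⟨rfl, h⟩ | ⟨rfl, h⟩ | ⟨rfl, h⟩)
        · rw [cg]; simp [h]
        · rw [cg']; simp [h]
        · rw [cs']; simp [h]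
  have ho' : ∀ i, e i = col → (H.neighborSet (Sum.inl i)).ncard ≠
      (H.neighborSet (Sum.inl (i + 1))).ncard := by
    rintro i rfl; rw [dU, dU]; have := ho i; rwa [add_sub_cancel_right]
  have hg' : ∀ i, g i = col → (H.neighborSet (Sum.inr i)).ncard ≠
      (H.neighborSet (Sum.inr (i + k))).ncard := by
    rintro i rfl; rw [dV, dV]; have := hg i; rwa [add_sub_cancel_right]
  have hs' : ∀ i, s i = col → (H.neighborSet (Sum.inl i)).ncard ≠
      (H.neighborSet (Sum.inr i)).ncard := by
    rintro i rfl; rw [dU, dV]; exact hs i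
  intro x y hxy
  rw [hadj] at hxy
  obtain ⟨ha, hcol⟩ := hxy
  rcases x with i | i
  · rw [gp_adj_inl n k hn] at ha
    rcases ha with rfl | rfl | rfl
    · rw [ce] at hcol; exact ho' i hcol
    · rw [ce'] at hcol
      have := ho' (i - 1) hcol
      rw [sub_add_cancel] at this; exact this.symm
    · rw [cs] at hcol; exact hs' i hcol
  · rw [gp_adj_inr n k hk hkn] at ha
    rcases ha with rfl | rfl | rfl
    · rw [cg] at hcol; exact hg' i hcol
    · rw [cg'] at hcol
      have := hg' (i - k) hcol
      rw [sub_add_cancel] at this; exact this.symm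
    · rw [cs'] at hcol; exact (hs' i hcol).symm

theorem zmod_step (n d : ℕ) (hd : d < n) (i : ZMod n) :
    i.val < n ∧ ((i + d).val = i.val + d ∨ (i + d).val + n = i.val + d) := by
  have : NeZero n := ⟨by omega⟩
  have h1 := ZMod.val_lt i
  refine ⟨h1, ?_⟩
  rw [ZMod.val_add, ZMod.val_natCast, Nat.mod_eq_of_lt hd]
  rcases Nat.lt_or_ge (i.val + d) n with h | h
  · left; exact Nat.mod_eq_of_lt h
  · right; rw [Nat.mod_eq_sub_mod h, Nat.mod_eq_of_lt (by omega)]; omega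

/-- combinatorial criterion with natural number indices -/
theorem gp_of_nat (n k : ℕ) (hn : 3 ≤ n) (hk : 1 ≤ k) (hkn : 2 * k < n)
    (s e : ℕ → ℕ) (hs3 : ∀ i, s i < 3) (he3 : ∀ i, e i < 3)
    (ho : ∀ a b c, a < n → b < n → c < n → (b = a + 1 ∨ b + n = a + 1) →
      (c = b + 1 ∨ c + n = b + 1) →
      (if e a = e b then 1 else 0) + (if s b = e b then 1 else 0) ≠
      (if e c = e b then 1 else 0) + (if s c = e b then 1 else 0))
    (hs : ∀ a b z, a < n → b < n → z < n → (b = a + 1 ∨ b + n = a + 1) →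
      (b = z + k ∨ b + n = z + k) →
      (if e a = s b then 1 else 0) + (if e b = s b then 1 else 0) ≠
      1 + (if s z = s b then 1 else 0))
    (hg : ∀ a b c, a < n → b < n → c < n → (b = a + k ∨ b + n = a + k) →
      (c = b + k ∨ c + n = b + k) → s b = s c → s a ≠ s b) :
    HasLIEC (genPetersen n k) 3 := by
  have pred : ∀ (d : ℕ), d < n → ∀ i : ZMod n, (i - d).val < n ∧
      (i.val = (i - d).val + d ∨ i.val + n = (i - d).val + d) := by
    intro d hd i
    have := zmod_step n d hd (i - d)
    rwa [sub_add_cancel] at this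
  have fin : ∀ x y (hx : x < 3) (hy : y < 3), ((⟨x, hx⟩ : Fin 3) = ⟨y, hy⟩) = (x = y) := by
    intros; simp
  have lt : ∀ i : ZMod n, i.val < n := fun i => (zmod_step n 1 (by omega) i).1
  refine gp_of_zmod n k hn hk hkn (fun i => ⟨s i.val, hs3 _⟩) (fun i => ⟨e i.val, he3 _⟩)
    (fun i => ⟨s i.val, hs3 _⟩) ?_ ?_ ?_
  · intro i
    have h1 := pred 1 (by omega) i
    have h2 := zmod_step n 1 (by omega) i
    rw [Nat.cast_one] at h1 h2
    have := ho _ _ _ h1.1 h2.1 (lt _) h1.2 h2.2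
    simp only [fin, ind, if_true]
    omega
  · intro i
    have h1 := pred 1 (by omega) i
    have h2 := pred k (by omega) i
    rw [Nat.cast_one] at h1
    have := hs _ _ _ h1.1 (lt i) h2.1 h1.2 h2.2
    simp only [fin, ind, if_true]
    omega
  · intro i
    have h1 := pred k (by omega) i
    have h2 := zmod_step n k (by omega) i
    have := hg _ _ _ h1.1 h2.1 (lt _) h1.2 h2.2
    simp only [fin, ind, if_true]
    by_cases h : s i.val = s (i + k).val
    · have := this h
      rw [if_neg this, if_pos h.symm]; simp
    · have h' : ¬ s (i + k).val = s i.val := fun x => h x.symm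
      rw [if_neg h']; split_ifs <;> omega

theorem gp_3_1 : HasLIEC (genPetersen 3 1) 3 := by
  refine gp_of_zmod 3 1 (by norm_num) (by norm_num) (by norm_num)
    (fun i : Fin 3 => ![0, 0, 1] i) (fun i : Fin 3 => ![0, 0, 1] i)
    (fun i : Fin 3 => ![2, 0, 2] i) ?_ ?_ ?_ <;> decide

theorem gp_odd_even (n k : ℕ) (hn : 3 ≤ n) (hk : 1 ≤ k) (hkn : 2 * k < n)
    (h1 : k % 2 = 1) (h2 : n % 2 = 0) : HasLIEC (genPetersen n k) 3 := by
  have key : ∃ s : ℕ → ℕ, ∀ i, (i % 2 = 0 ∧ s i = 1) ∨ (i % 2 = 1 ∧ s i = 0) :=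
    ⟨fun i => if i % 2 = 0 then 1 else 0, fun i => by
      rcases Nat.mod_two_eq_zero_or_one i with h | h <;> simp [h]⟩
  obtain ⟨s, H⟩ := key
  refine gp_of_nat n k hn hk hkn s (fun _ => 0) (fun i => by have := H i; omega)
    (fun i => by norm_num) ?_ ?_ ?_
  · intro a b c ha hb hc h h'
    rcases H b with ⟨hb', sb⟩ | ⟨hb', sb⟩ <;> rcases H c with ⟨hc', sc⟩ | ⟨hc', sc⟩ <;>
      first | (exfalso; omega) | simp [sb, sc]
  · intro a b z ha hb hc h h'
    rcases H b with ⟨hb', sb⟩ | ⟨hb', sb⟩ <;> rcases H z with ⟨hc', sc⟩ | ⟨hc', sc⟩ <;>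
      first | (exfalso; omega) | simp [sb, sc]
  · intro a b c ha hb hc h h'
    have := H a; have := H b; have := H c
    omega

theorem gp_odd_odd (n k : ℕ) (hn : 3 ≤ n) (hk : 3 ≤ k) (hkn : 2 * k < n)
    (h1 : k % 2 = 1) (h2 : n % 2 = 1) : HasLIEC (genPetersen n k) 3 := by
  have key : ∃ s e : ℕ → ℕ, ∀ i,
      ((i < n - k ∧ i % 2 = 0) ∧ s i = 1 ∧ e i = 1) ∨
      ((i < n - k ∧ i % 2 = 1) ∧ s i = 0 ∧ e i = 1) ∨
      ((n - k ≤ i ∧ i % 2 = 0 ∧ i < n - 1) ∧ s i = 0 ∧ e i = 2) ∨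
      ((n - k ≤ i ∧ i % 2 = 1) ∧ s i = 2 ∧ e i = 2) ∨
      ((n - k ≤ i ∧ i % 2 = 0 ∧ n - 1 ≤ i) ∧ s i = 0 ∧ e i = 1) := by
    refine ⟨fun i => if i < n - k then (if i % 2 = 0 then 1 else 0) else
      (if i % 2 = 0 then 0 else 2), fun i => if i < n - k then 1 else
        if i % 2 = 0 ∧ n - 1 ≤ i then 1 else 2, fun i => ?_⟩
    dsimp only
    split_ifs <;> omega
  obtain ⟨s, e, H⟩ := key
  refine gp_of_nat n k hn (by omega) hkn s e (fun i => by have := H i; omega)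
    (fun i => by have := H i; omega) ?_ ?_ ?_
  · intro a b c ha hb hc h h'
    rcases H b with ⟨hb', sb, eb⟩ | ⟨hb', sb, eb⟩ | ⟨hb', sb, eb⟩ | ⟨hb', sb, eb⟩ | ⟨hb', sb, eb⟩ <;>
    rcases H c with ⟨hc', sc, ec⟩ | ⟨hc', sc, ec⟩ | ⟨hc', sc, ec⟩ | ⟨hc', sc, ec⟩ | ⟨hc', sc, ec⟩ <;>
    first | (exfalso; omega) | (
    rcases H a with ⟨ha', sa, ea⟩ | ⟨ha', sa, ea⟩ | ⟨ha', sa, ea⟩ | ⟨ha', sa, ea⟩ | ⟨ha', sa, ea⟩ <;>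
    first | (exfalso; omega) | simp [eb, sb, ea, ec, sc])
  · intro a b c ha hb hc h h'
    rcases H b with ⟨hb', sb, eb⟩ | ⟨hb', sb, eb⟩ | ⟨hb', sb, eb⟩ | ⟨hb', sb, eb⟩ | ⟨hb', sb, eb⟩ <;>
    rcases H c with ⟨hc', sc, ec⟩ | ⟨hc', sc, ec⟩ | ⟨hc', sc, ec⟩ | ⟨hc', sc, ec⟩ | ⟨hc', sc, ec⟩ <;>
    first | (exfalso; omega) | (
    rcases H a with ⟨ha', sa, ea⟩ | ⟨ha', sa, ea⟩ | ⟨ha', sa, ea⟩ | ⟨ha', sa, ea⟩ | ⟨ha', sa, ea⟩ <;>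
    first | (exfalso; omega) | simp [eb, sb, ea, ec, sc])
  · intro a b c ha hb hc h h'
    rcases H b with ⟨hb', sb, eb⟩ | ⟨hb', sb, eb⟩ | ⟨hb', sb, eb⟩ | ⟨hb', sb, eb⟩ | ⟨hb', sb, eb⟩ <;>
    rcases H c with ⟨hc', sc, ec⟩ | ⟨hc', sc, ec⟩ | ⟨hc', sc, ec⟩ | ⟨hc', sc, ec⟩ | ⟨hc', sc, ec⟩ <;>
    first | simp [sb, sc]; done | (exfalso; omega) | (
    rcases H a with ⟨ha', sa, ea⟩ | ⟨ha', sa, ea⟩ | ⟨ha', sa, ea⟩ | ⟨ha', sa, ea⟩ | ⟨ha', sa, ea⟩ <;>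
    first | (exfalso; omega) | simp [sb, sc, sa])

theorem gp_one_odd (n : ℕ) (hn : 5 ≤ n) (h2 : n % 2 = 1) : HasLIEC (genPetersen n 1) 3 := by
  have key : ∃ s e : ℕ → ℕ, ∀ i,
      (i = 0 ∧ s i = 1 ∧ e i = 2) ∨ (i = 1 ∧ s i = 2 ∧ e i = 2) ∨
      ((2 ≤ i ∧ i % 2 = 0) ∧ s i = 1 ∧ e i = 0) ∨ ((2 ≤ i ∧ i % 2 = 1) ∧ s i = 0 ∧ e i = 0) := by
    refine ⟨fun i => if i % 2 = 0 then 1 else if i = 1 then 2 else 0,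
      fun i => if i < 2 then 2 else 0, fun i => ?_⟩
    dsimp only
    split_ifs <;> omega
  obtain ⟨s, e, H⟩ := key
  refine gp_of_nat n 1 (by omega) (by omega) (by omega) s e (fun i => by have := H i; omega)
    (fun i => by have := H i; omega) ?_ ?_ ?_
  · intro a b c ha hb hc h h'
    rcases H b with ⟨hb', sb, eb⟩ | ⟨hb', sb, eb⟩ | ⟨hb', sb, eb⟩ | ⟨hb', sb, eb⟩ <;>
    rcases H c with ⟨hc', sc, ec⟩ | ⟨hc', sc, ec⟩ | ⟨hc', sc, ec⟩ | ⟨hc', sc, ec⟩ <;>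
    first | (exfalso; omega) | (
    rcases H a with ⟨ha', sa, ea⟩ | ⟨ha', sa, ea⟩ | ⟨ha', sa, ea⟩ | ⟨ha', sa, ea⟩ <;>
    first | (exfalso; omega) | simp [eb, sb, ea, ec, sc])
  · intro a b c ha hb hc h h'
    rcases H b with ⟨hb', sb, eb⟩ | ⟨hb', sb, eb⟩ | ⟨hb', sb, eb⟩ | ⟨hb', sb, eb⟩ <;>
    rcases H c with ⟨hc', sc, ec⟩ | ⟨hc', sc, ec⟩ | ⟨hc', sc, ec⟩ | ⟨hc', sc, ec⟩ <;>
    first | (exfalso; omega) | (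
    rcases H a with ⟨ha', sa, ea⟩ | ⟨ha', sa, ea⟩ | ⟨ha', sa, ea⟩ | ⟨ha', sa, ea⟩ <;>
    first | (exfalso; omega) | simp [eb, sb, ea, ec, sc])
  · intro a b c ha hb hc h h'
    rcases H b with ⟨hb', sb, eb⟩ | ⟨hb', sb, eb⟩ | ⟨hb', sb, eb⟩ | ⟨hb', sb, eb⟩ <;>
    rcases H c with ⟨hc', sc, ec⟩ | ⟨hc', sc, ec⟩ | ⟨hc', sc, ec⟩ | ⟨hc', sc, ec⟩ <;>
    first | simp [sb, sc]; done | (exfalso; omega) | (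
    rcases H a with ⟨ha', sa, ea⟩ | ⟨ha', sa, ea⟩ | ⟨ha', sa, ea⟩ | ⟨ha', sa, ea⟩ <;>
    first | (exfalso; omega) | simp [sb, sc, sa])

theorem gp_two_0 (n : ℕ) (hn : 5 ≤ n) (h2 : (n + 0) % 3 = 0) :
    HasLIEC (genPetersen n 2) 3 := by
  have key : ∃ s e : ℕ → ℕ, ∀ i,
      ((0 ≤ i ∧ (i + 0) % 3 = 0) ∧ s i = 2 ∧ e i = 0) ∨
      ((0 ≤ i ∧ (i + 0) % 3 = 1) ∧ s i = 2 ∧ e i = 0) ∨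
      ((0 ≤ i ∧ (i + 0) % 3 = 2) ∧ s i = 1 ∧ e i = 2) := by
    refine ⟨fun i => if (0 ≤ i ∧ (i + 0) % 3 = 0) then 2 else if (0 ≤ i ∧ (i + 0) % 3 = 1) then 2 else 1,
      fun i => if (0 ≤ i ∧ (i + 0) % 3 = 0) then 0 else if (0 ≤ i ∧ (i + 0) % 3 = 1) then 0 else 2, fun i => ?_⟩
    dsimp only
    split_ifs <;> omega
  obtain ⟨s, e, H⟩ := key
  refine gp_of_nat n 2 (by omega) (by omega) (by omega) s e (fun i => by have := H i; omega)
    (fun i => by have := H i; omega) ?_ ?_ ?_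
  · intro a b c ha hb hc h h'
    rcases H b with ⟨b', sb, eb⟩ | ⟨b', sb, eb⟩ | ⟨b', sb, eb⟩ <;>
    rcases H c with ⟨c', sc, ec⟩ | ⟨c', sc, ec⟩ | ⟨c', sc, ec⟩ <;>
    first | (exfalso; omega) | (
    rcases H a with ⟨a', sa, ea⟩ | ⟨a', sa, ea⟩ | ⟨a', sa, ea⟩ <;>
    first | (exfalso; omega) | simp [eb, sb, ea, ec, sc])
  · intro a b c ha hb hc h h'
    rcases H b with ⟨b', sb, eb⟩ | ⟨b', sb, eb⟩ | ⟨b', sb, eb⟩ <;>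
    rcases H c with ⟨c', sc, ec⟩ | ⟨c', sc, ec⟩ | ⟨c', sc, ec⟩ <;>
    first | (exfalso; omega) | (
    rcases H a with ⟨a', sa, ea⟩ | ⟨a', sa, ea⟩ | ⟨a', sa, ea⟩ <;>
    first | (exfalso; omega) | simp [eb, sb, ea, sc])
  · intro a b c ha hb hc h h'
    rcases H b with ⟨b', sb, eb⟩ | ⟨b', sb, eb⟩ | ⟨b', sb, eb⟩ <;>
    rcases H c with ⟨c', sc, ec⟩ | ⟨c', sc, ec⟩ | ⟨c', sc, ec⟩ <;>
    first | simp [sb, sc]; done | (exfalso; omega) | (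
    rcases H a with ⟨a', sa, ea⟩ | ⟨a', sa, ea⟩ | ⟨a', sa, ea⟩ <;>
    first | (exfalso; omega) | simp [sb, sc, sa])

theorem gp_two_2 (n : ℕ) (hn : 5 ≤ n) (h2 : (n + 1) % 3 = 0) :
    HasLIEC (genPetersen n 2) 3 := by
  have key : ∃ s e : ℕ → ℕ, ∀ i,
      (i = 0 ∧ s i = 1 ∧ e i = 2) ∨
      (i = 1 ∧ s i = 1 ∧ e i = 1) ∨
      ((2 ≤ i ∧ (i + 1) % 3 = 0) ∧ s i = 2 ∧ e i = 0) ∨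
      ((2 ≤ i ∧ (i + 1) % 3 = 1) ∧ s i = 2 ∧ e i = 0) ∨
      ((2 ≤ i ∧ (i + 1) % 3 = 2) ∧ s i = 1 ∧ e i = 2) := by
    refine ⟨fun i => if i = 0 then 1 else if i = 1 then 1 else if (2 ≤ i ∧ (i + 1) % 3 = 0) then 2 else if (2 ≤ i ∧ (i + 1) % 3 = 1) then 2 else 1,
      fun i => if i = 0 then 2 else if i = 1 then 1 else if (2 ≤ i ∧ (i + 1) % 3 = 0) then 0 else if (2 ≤ i ∧ (i + 1) % 3 = 1) then 0 else 2, fun i => ?_⟩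
    dsimp only
    split_ifs <;> omega
  obtain ⟨s, e, H⟩ := key
  refine gp_of_nat n 2 (by omega) (by omega) (by omega) s e (fun i => by have := H i; omega)
    (fun i => by have := H i; omega) ?_ ?_ ?_
  · intro a b c ha hb hc h h'
    rcases H b with ⟨b', sb, eb⟩ | ⟨b', sb, eb⟩ | ⟨b', sb, eb⟩ | ⟨b', sb, eb⟩ | ⟨b', sb, eb⟩ <;>
    rcases H c with ⟨c', sc, ec⟩ | ⟨c', sc, ec⟩ | ⟨c', sc, ec⟩ | ⟨c', sc, ec⟩ | ⟨c', sc, ec⟩ <;>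
    first | (exfalso; omega) | (
    rcases H a with ⟨a', sa, ea⟩ | ⟨a', sa, ea⟩ | ⟨a', sa, ea⟩ | ⟨a', sa, ea⟩ | ⟨a', sa, ea⟩ <;>
    first | (exfalso; omega) | simp [eb, sb, ea, ec, sc])
  · intro a b c ha hb hc h h'
    rcases H b with ⟨b', sb, eb⟩ | ⟨b', sb, eb⟩ | ⟨b', sb, eb⟩ | ⟨b', sb, eb⟩ | ⟨b', sb, eb⟩ <;>
    rcases H c with ⟨c', sc, ec⟩ | ⟨c', sc, ec⟩ | ⟨c', sc, ec⟩ | ⟨c', sc, ec⟩ | ⟨c', sc, ec⟩ <;>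
    first | (exfalso; omega) | (
    rcases H a with ⟨a', sa, ea⟩ | ⟨a', sa, ea⟩ | ⟨a', sa, ea⟩ | ⟨a', sa, ea⟩ | ⟨a', sa, ea⟩ <;>
    first | (exfalso; omega) | simp [eb, sb, ea, sc])
  · intro a b c ha hb hc h h'
    rcases H b with ⟨b', sb, eb⟩ | ⟨b', sb, eb⟩ | ⟨b', sb, eb⟩ | ⟨b', sb, eb⟩ | ⟨b', sb, eb⟩ <;>
    rcases H c with ⟨c', sc, ec⟩ | ⟨c', sc, ec⟩ | ⟨c', sc, ec⟩ | ⟨c', sc, ec⟩ | ⟨c', sc, ec⟩ <;>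
    first | simp [sb, sc]; done | (exfalso; omega) | (
    rcases H a with ⟨a', sa, ea⟩ | ⟨a', sa, ea⟩ | ⟨a', sa, ea⟩ | ⟨a', sa, ea⟩ | ⟨a', sa, ea⟩ <;>
    first | (exfalso; omega) | simp [sb, sc, sa])

set_option maxHeartbeats 8000000 in
theorem gp_two_4 (n : ℕ) (hn : 7 ≤ n) (h2 : (n + 2) % 3 = 0) :
    HasLIEC (genPetersen n 2) 3 := by
  have key : ∃ s e : ℕ → ℕ, ∀ i,
      (i = 0 ∧ s i = 1 ∧ e i = 2) ∨
      (i = 1 ∧ s i = 2 ∧ e i = 2) ∨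
      (i = 2 ∧ s i = 1 ∧ e i = 1) ∨
      (i = 3 ∧ s i = 1 ∧ e i = 1) ∨
      ((4 ≤ i ∧ (i + 2) % 3 = 0) ∧ s i = 2 ∧ e i = 0) ∨
      ((4 ≤ i ∧ (i + 2) % 3 = 1) ∧ s i = 2 ∧ e i = 0) ∨
      ((4 ≤ i ∧ (i + 2) % 3 = 2) ∧ s i = 1 ∧ e i = 2) := by
    refine ⟨fun i => if i = 0 then 1 else if i = 1 then 2 else if i = 2 then 1 else if i = 3 then 1 else if (4 ≤ i ∧ (i + 2) % 3 = 0) then 2 else if (4 ≤ i ∧ (i + 2) % 3 = 1) then 2 else 1,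
      fun i => if i = 0 then 2 else if i = 1 then 2 else if i = 2 then 1 else if i = 3 then 1 else if (4 ≤ i ∧ (i + 2) % 3 = 0) then 0 else if (4 ≤ i ∧ (i + 2) % 3 = 1) then 0 else 2, fun i => ?_⟩
    dsimp only
    split_ifs <;> omega
  obtain ⟨s, e, H⟩ := key
  refine gp_of_nat n 2 (by omega) (by omega) (by omega) s e (fun i => by have := H i; omega)
    (fun i => by have := H i; omega) ?_ ?_ ?_
  · intro a b c ha hb hc h h'
    rcases H b with ⟨b', sb, eb⟩ | ⟨b', sb, eb⟩ | ⟨b', sb, eb⟩ | ⟨b', sb, eb⟩ | ⟨b', sb, eb⟩ | ⟨b', sb, eb⟩ | ⟨b', sb, eb⟩ <;>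
    rcases H c with ⟨c', sc, ec⟩ | ⟨c', sc, ec⟩ | ⟨c', sc, ec⟩ | ⟨c', sc, ec⟩ | ⟨c', sc, ec⟩ | ⟨c', sc, ec⟩ | ⟨c', sc, ec⟩ <;>
    first | (exfalso; omega) | (
    rcases H a with ⟨a', sa, ea⟩ | ⟨a', sa, ea⟩ | ⟨a', sa, ea⟩ | ⟨a', sa, ea⟩ | ⟨a', sa, ea⟩ | ⟨a', sa, ea⟩ | ⟨a', sa, ea⟩ <;>
    first | (exfalso; omega) | simp [eb, sb, ea, ec, sc])
  · intro a b c ha hb hc h h'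
    rcases H b with ⟨b', sb, eb⟩ | ⟨b', sb, eb⟩ | ⟨b', sb, eb⟩ | ⟨b', sb, eb⟩ | ⟨b', sb, eb⟩ | ⟨b', sb, eb⟩ | ⟨b', sb, eb⟩ <;>
    rcases H c with ⟨c', sc, ec⟩ | ⟨c', sc, ec⟩ | ⟨c', sc, ec⟩ | ⟨c', sc, ec⟩ | ⟨c', sc, ec⟩ | ⟨c', sc, ec⟩ | ⟨c', sc, ec⟩ <;>
    first | (exfalso; omega) | (
    rcases H a with ⟨a', sa, ea⟩ | ⟨a', sa, ea⟩ | ⟨a', sa, ea⟩ | ⟨a', sa, ea⟩ | ⟨a', sa, ea⟩ | ⟨a', sa, ea⟩ | ⟨a', sa, ea⟩ <;>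
    first | (exfalso; omega) | simp [eb, sb, ea, sc])
  · intro a b c ha hb hc h h'
    rcases H b with ⟨b', sb, eb⟩ | ⟨b', sb, eb⟩ | ⟨b', sb, eb⟩ | ⟨b', sb, eb⟩ | ⟨b', sb, eb⟩ | ⟨b', sb, eb⟩ | ⟨b', sb, eb⟩ <;>
    rcases H c with ⟨c', sc, ec⟩ | ⟨c', sc, ec⟩ | ⟨c', sc, ec⟩ | ⟨c', sc, ec⟩ | ⟨c', sc, ec⟩ | ⟨c', sc, ec⟩ | ⟨c', sc, ec⟩ <;>
    first | simp [sb, sc]; done | (exfalso; omega) | (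
    rcases H a with ⟨a', sa, ea⟩ | ⟨a', sa, ea⟩ | ⟨a', sa, ea⟩ | ⟨a', sa, ea⟩ | ⟨a', sa, ea⟩ | ⟨a', sa, ea⟩ | ⟨a', sa, ea⟩ <;>
    first | (exfalso; omega) | simp [sb, sc, sa])

/-- a variant of the criterion -/
theorem gp_of_nat2 (n k : ℕ) (hn : 3 ≤ n) (hk : 1 ≤ k) (hkn : 2 * k < n)
    (s e : ℕ → ℕ) (hs3 : ∀ i, i < n → s i < 3) (he3 : ∀ i, i < n → e i < 3)
    (hD : ∀ i j, i < n → j < n - k → (j = i + k ∨ j + n = i + k) → s i ≠ s j)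
    (hS1 : ∀ a b, a < n → b < n → (b = a + 1 ∨ b + n = a + 1) → (e a = s b ↔ e b = s b))
    (hS2 : ∀ z b, b < n → n - k ≤ b → b = z + k → e b = s b → s z ≠ s b)
    (hO1 : ∀ a b c, a < n → b < n → c < n → (b = a + 1 ∨ b + n = a + 1) →
      (c = b + 1 ∨ c + n = b + 1) → e a ≠ e b → e c = e b)
    (hO2 : ∀ a b c, a < n → b < n → c < n → (b = a + 1 ∨ b + n = a + 1) →
      (c = b + 1 ∨ c + n = b + 1) → e a = e b → e c = e b → (s b = e b ↔ s c ≠ e b)) :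
    HasLIEC (genPetersen n k) 3 := by
  have key : ∃ s' e' : ℕ → ℕ, (∀ i, s' i < 3) ∧ (∀ i, e' i < 3) ∧
      ∀ i, i < n → s' i = s i ∧ e' i = e i := by
    refine ⟨fun i => if i < n then s i else 0, fun i => if i < n then e i else 0, ?_, ?_, ?_⟩
    · intro i; dsimp only; split_ifs with h
      · exact hs3 i h
      · norm_num
    · intro i; dsimp only; split_ifs with h
      · exact he3 i h
      · norm_num
    · intro i h; simp [h]
  obtain ⟨s', e', h1, h2, h3⟩ := key
  refine gp_of_nat n k hn hk hkn s' e' h1 h2 ?_ ?_ ?_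
  · intro a b c ha hb hc h h'
    rw [(h3 a ha).2, (h3 b hb).2, (h3 b hb).1, (h3 c hc).1, (h3 c hc).2]
    have A := hS1 a b ha hb h
    have B := hS1 b c hb hc h'
    have C := hO1 a b c ha hb hc h h'
    have D := hO2 a b c ha hb hc h h'
    split_ifs <;> first | omega | (exfalso; omega)
  · intro a b z ha hb hz h h'
    rw [(h3 a ha).2, (h3 b hb).2, (h3 b hb).1, (h3 z hz).1]
    have A := hS1 a b ha hb h
    by_cases hb' : b < n - k
    · have B := hD z b hz hb' h'
      split_ifs <;> omega
    · have C := hS2 z b hb (by omega) (by omega)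
      split_ifs <;> omega
  · intro a b c ha hb hc h h'
    rw [(h3 a ha).1, (h3 b hb).1, (h3 c hc).1]
    intro hbc
    by_cases hc' : c < n - k
    · exact absurd hbc (hD b c hb hc' h')
    · exact hD a b ha (by omega) h

theorem dm_step (k i : ℕ) (hk : 0 < k) :
    ((i + 1) / k = i / k ∧ (i + 1) % k = i % k + 1 ∧ i % k + 1 < k) ∨
    ((i + 1) / k = i / k + 1 ∧ (i + 1) % k = 0 ∧ i % k + 1 = k) := by
  have h := Nat.div_add_mod i k
  have hlt := Nat.mod_lt i hk
  rcases Nat.lt_or_ge (i % k + 1) k with h1 | h1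
  · left
    have := (Nat.div_mod_unique (a := i + 1) (c := i % k + 1) (d := i / k) hk).2 ⟨by omega, h1⟩
    exact ⟨this.1, this.2, h1⟩
  · right
    have := (Nat.div_mod_unique (a := i + 1) (c := 0) (d := i / k + 1) hk).2
      ⟨by rw [Nat.mul_add]; omega, hk⟩
    exact ⟨this.1, this.2, by omega⟩

/-- position of an index relative to the block decomposition -/
theorem dm_pos (n k q r i : ℕ) (hk : 0 < k) (hr : r ≤ k) (hn : n = k + q * k + r) (hi : i < n) :
    i % k < k ∧ ((i / k < q ∧ i + r + k < n) ∨ (i / k = q ∧ i % k < r ∧ i + r + k = n + i % k) ∨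
    (n ≤ i + k ∧ ((i / k = q ∧ i % k + n = i + r + k) ∨ (i / k = q + 1 ∧ i % k + n = i + r)))) := by
  have h := Nat.div_add_mod i k
  have hlt := Nat.mod_lt i hk
  refine ⟨hlt, ?_⟩
  generalize i / k = x at *
  generalize i % k = y at *
  rcases Nat.lt_trichotomy x q with h1 | h1 | h1
  · left
    refine ⟨h1, ?_⟩
    have : k * (x + 1) ≤ k * q := Nat.mul_le_mul_left k h1
    rw [Nat.mul_add, Nat.mul_comm k q] at this
    omega
  · subst h1
    rw [Nat.mul_comm] at h
    omega
  · have h2 : x = q + 1 := by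
      by_contra h3
      have : k * (q + 2) ≤ k * x := Nat.mul_le_mul_left k (by omega)
      rw [Nat.mul_add, Nat.mul_comm k q] at this
      omega
    subst h2
    rw [Nat.mul_add, Nat.mul_comm k q] at h
    omega


/-- explicit description of the colouring -/
def SpE (n k q r i x y s e f : ℕ) : Prop :=
    (x < q ∧ i + r + k < n ∧ y = 0 ∧ s = (x + 1) % 2 ∧ e = x % 2 ∧ f = 1) ∨
    (x < q ∧ i + r + k < n ∧ 0 < y ∧ y + 2 < k ∧ s = (x + y + 1) % 2 ∧ e = x % 2 ∧ f = 0) ∨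
    (x < q ∧ i + r + k < n ∧ y + 2 = k ∧ s = (x + 1) % 2 ∧ e = 2 ∧ f = 2) ∨
    (x < q ∧ i + r + k < n ∧ y + 1 = k ∧ s = x % 2 ∧ e = 2 ∧ f = 0) ∨
    (x = q ∧ y = 0 ∧ i + r + k = n ∧ s = 1 ∧ e = 0 ∧ f = 1) ∨
    (x = q ∧ 0 < y ∧ y < r ∧ i + r + k = n + y ∧ s = (y + 1) % 2 ∧ e = 0 ∧ f = 0) ∨
    (i + k = n ∧ s = 2 - 2 * (r % 2) ∧ e = 0 ∧ f = 0) ∨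
    (i + k = n + 1 ∧ s = 1 ∧ e = 2 ∧ f = 1) ∨
    (n + 1 < i + k ∧ i + 1 < n ∧ s = 2 - (i + k - n) % 2 ∧ e = 2 ∧ f = 0) ∨
    (i + 1 = n ∧ s = 1 ∧ e = 0 ∧ f = 2)

set_option maxHeartbeats 2000000 in
theorem SpE_in (n k q r i x y s e f x' y' s' e' f' : ℕ) (hk : 4 ≤ k) (hk2 : k % 2 = 0) (hq : 1 ≤ q) (hr : 1 ≤ r)
    (hrk : r ≤ k) (hq2 : q % 2 = 0) (hkn : 2 * k < n)
    (hy : y < k) (hi : i + 1 < n) (h : SpE n k q r i x y s e f)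
    (h' : SpE n k q r (i + 1) x' y' s' e' f')
    (P : x' = x ∧ y' = y + 1 ∧ y + 1 < k) :
    (e = s' ↔ e' = s') ∧ (e ≠ e' → 1 ≤ f') ∧ (1 ≤ f → e' = e) ∧
      (f ≠ 2 → e' = e → (s = e ↔ s' ≠ e)) ∧ (f' = 2 → e ≠ e') := by
  obtain ⟨rfl, rfl, P⟩ := P
  unfold SpE at h h'
  rcases h with h | h | h | h | h | h | h | h | h | h <;>
  rcases h' with h' | h' | h' | h' | h' | h' | h' | h' | h' | h' <;>
  omega

set_option maxHeartbeats 2000000 in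
theorem SpE_cr (n k q r i x y s e f x' y' s' e' f' : ℕ) (hk : 4 ≤ k) (hk2 : k % 2 = 0) (hq : 1 ≤ q) (hr : 1 ≤ r)
    (hrk : r ≤ k) (hq2 : q % 2 = 0) (hkn : 2 * k < n)
    (hy : y < k) (hi : i + 1 < n) (h : SpE n k q r i x y s e f)
    (h' : SpE n k q r (i + 1) x' y' s' e' f')
    (P : x' = x + 1 ∧ y' = 0 ∧ y + 1 = k) :
    (e = s' ↔ e' = s') ∧ (e ≠ e' → 1 ≤ f') ∧ (1 ≤ f → e' = e) ∧
      (f ≠ 2 → e' = e → (s = e ↔ s' ≠ e)) ∧ (f' = 2 → e ≠ e') := by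
  obtain ⟨rfl, rfl, P⟩ := P
  unfold SpE at h h'
  rcases h with h | h | h | h | h | h | h | h | h | h <;>
  rcases h' with h' | h' | h' | h' | h' | h' | h' | h' | h' | h' <;>
  omega

set_option maxHeartbeats 2000000 in
theorem SpE_wr (n k q r i x y s e f s' e' f' : ℕ) (hk : 4 ≤ k) (hk2 : k % 2 = 0) (hq : 1 ≤ q) (hr : 1 ≤ r)
    (hrk : r ≤ k) (hq2 : q % 2 = 0) (hkn : 2 * k < n)
    (hy : y < k) (hi : i + 1 = n) (h : SpE n k q r i x y s e f)
    (h' : SpE n k q r 0 0 0 s' e' f') :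
    (e = s' ↔ e' = s') ∧ (e ≠ e' → 1 ≤ f') ∧ (1 ≤ f → e' = e) ∧
      (f ≠ 2 → e' = e → (s = e ↔ s' ≠ e)) ∧ (f' = 2 → e ≠ e') := by
  unfold SpE at h h'
  have h1 : s' = 1 ∧ e' = 0 ∧ f' = 1 := by
    rcases h' with h' | h' | h' | h' | h' | h' | h' | h' | h' | h' <;> omega
  have h2 : s = 1 ∧ e = 0 ∧ f = 2 := by
    rcases h with h | h | h | h | h | h | h | h | h | h <;> omega
  clear h h'
  omega

set_option maxHeartbeats 2000000 in
theorem SpE_sp (n k q r i x y s e f s' e' f' : ℕ) (hk : 4 ≤ k) (hk2 : k % 2 = 0) (hq : 1 ≤ q) (hr : 1 ≤ r)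
    (hrk : r ≤ k) (hq2 : q % 2 = 0) (hkn : 2 * k < n)
    (hy : y < k) (hi : i + k < n) (h : SpE n k q r i x y s e f)
    (h' : SpE n k q r (i + k) (x + 1) y s' e' f')
    (hx : n ≤ i + 2 * k → r % 2 = 1 → i + 2 * k = n → x + 1 = q ∧ y = r) :
    (i + 2 * k < n → s ≠ s') ∧ (n ≤ i + 2 * k → e' = s' → s ≠ s') := by
  unfold SpE at h h'
  rcases h with h | h | h | h | h | h | h | h | h | h <;>
  rcases h' with h' | h' | h' | h' | h' | h' | h' | h' | h' | h' <;>
  omega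

set_option maxHeartbeats 2000000 in
theorem SpE_sw (n k q r i x y s e f j s' e' f' : ℕ) (hk : 4 ≤ k) (hk2 : k % 2 = 0) (hq : 1 ≤ q) (hr : 1 ≤ r)
    (hrk : r ≤ k) (hq2 : q % 2 = 0) (hkn : 2 * k < n)
    (hy : y < k) (hi : i < n) (hj : j < k) (hij : j + n = i + k) (h : SpE n k q r i x y s e f)
    (h' : SpE n k q r j 0 j s' e' f') : s ≠ s' := by
  unfold SpE at h h'
  rcases h with h | h | h | h | h | h | h | h | h | h <;>
  rcases h' with h' | h' | h' | h' | h' | h' | h' | h' | h' | h' <;>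
  omega

set_option maxHeartbeats 2000000 in
theorem SpE_ex (n k q r i : ℕ) (hk : 4 ≤ k) (hk2 : k % 2 = 0) (hq : 1 ≤ q) (hr : 1 ≤ r)
    (hrk : r ≤ k) (hq2 : q % 2 = 0) (hkn : 2 * k < n) (hn : n = k + q * k + r) (hi : i < n) :
    ∃ s e f, s < 3 ∧ e < 3 ∧ SpE n k q r i (i / k) (i % k) s e f := by
  have h := dm_pos n k q r i (by omega) hrk hn hi
  clear hn
  generalize i / k = x at *
  generalize i % k = y at *
  obtain ⟨hy, h⟩ := h
  unfold SpE
  by_cases c1 : i + k < n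
  · by_cases c2 : x < q
    · by_cases c3 : y = 0
      · exact ⟨(x + 1) % 2, x % 2, 1, by omega, by omega, Or.inl
          ⟨c2, by omega, c3, rfl, rfl, rfl⟩⟩
      · by_cases c4 : y + 2 < k
        · exact ⟨(x + y + 1) % 2, x % 2, 0, by omega, by omega, Or.inr (Or.inl
            ⟨c2, by omega, by omega, c4, rfl, rfl, rfl⟩)⟩
        · by_cases c5 : y + 2 = k
          · exact ⟨(x + 1) % 2, 2, 2, by omega, by omega, Or.inr (Or.inr (Or.inl
              ⟨c2, by omega, c5, rfl, rfl, rfl⟩))⟩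
          · exact ⟨x % 2, 2, 0, by omega, by omega, Or.inr (Or.inr (Or.inr (Or.inl
              ⟨c2, by omega, by omega, rfl, rfl, rfl⟩)))⟩
    · have h1 : x = q ∧ y < r ∧ i + r + k = n + y := by omega
      by_cases c3 : y = 0
      · exact ⟨1, 0, 1, by omega, by omega, Or.inr (Or.inr (Or.inr (Or.inr (Or.inl ⟨h1.1, c3, by omega, rfl, rfl, rfl⟩))))⟩
      · exact ⟨(y + 1) % 2, 0, 0, by omega, by omega,
          Or.inr (Or.inr (Or.inr (Or.inr (Or.inr (Or.inl ⟨h1.1, by omega, h1.2.1, h1.2.2, rfl, rfl, rfl⟩)))))⟩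
  · by_cases c2 : i + k = n
    · exact ⟨2 - 2 * (r % 2), 0, 0, by omega, by omega,
        Or.inr (Or.inr (Or.inr (Or.inr (Or.inr (Or.inr (Or.inl ⟨c2, rfl, rfl, rfl⟩))))))⟩
    · by_cases c3 : i + k = n + 1
      · exact ⟨1, 2, 1, by omega, by omega, Or.inr (Or.inr (Or.inr (Or.inr (Or.inr (Or.inr (Or.inr (Or.inl ⟨c3, rfl, rfl, rfl⟩)))))))⟩
      · by_cases c4 : i + 1 < n
        · exact ⟨2 - (i + k - n) % 2, 2, 0, by omega, by omega,
            Or.inr (Or.inr (Or.inr (Or.inr (Or.inr (Or.inr (Or.inr (Or.inr (Or.inl ⟨by omega, c4, rfl, rfl, rfl⟩))))))))⟩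
        · exact ⟨1, 0, 2, by omega, by omega, Or.inr (Or.inr (Or.inr (Or.inr (Or.inr (Or.inr (Or.inr (Or.inr (Or.inr (⟨by omega, rfl, rfl, rfl⟩)))))))))⟩

set_option maxHeartbeats 2000000 in
theorem gp_SpE (n k q r : ℕ) (hk : 4 ≤ k) (hk2 : k % 2 = 0) (hq : 1 ≤ q) (hr : 1 ≤ r)
    (hrk : r ≤ k) (hq2 : q % 2 = 0) (hkn : 2 * k < n) (hn : n = k + q * k + r) :
    HasLIEC (genPetersen n k) 3 := by
  have key : ∀ i : ℕ, ∃ s e f, i < n → (s < 3 ∧ e < 3 ∧ SpE n k q r i (i / k) (i % k) s e f) := by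
    intro i
    by_cases hi : i < n
    · obtain ⟨s, e, f, h⟩ := SpE_ex n k q r i hk hk2 hq hr hrk hq2 hkn hn hi
      exact ⟨s, e, f, fun _ => h⟩
    · exact ⟨0, 0, 0, fun h => absurd h hi⟩
  choose s e f H using key
  have M : ∀ i, i % k < k := fun i => Nat.mod_lt i (by omega)
  have pr : ∀ a b, a < n → b < n → (b = a + 1 ∨ b + n = a + 1) →
      (e a = s b ↔ e b = s b) ∧ (e a ≠ e b → 1 ≤ f b) ∧ (1 ≤ f a → e b = e a) ∧
      (f a ≠ 2 → e b = e a → (s a = e a ↔ s b ≠ e a)) ∧ (f b = 2 → e a ≠ e b) := by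
    intro a b ha hb h
    rcases h with h | h
    · subst h
      rcases dm_step k a (by omega) with P | P
      · exact SpE_in n k q r a _ _ _ _ _ _ _ _ _ _ hk hk2 hq hr hrk hq2 hkn (M a) hb
          (H a ha).2.2 (H (a + 1) hb).2.2 P
      · exact SpE_cr n k q r a _ _ _ _ _ _ _ _ _ _ hk hk2 hq hr hrk hq2 hkn (M a) hb
          (H a ha).2.2 (H (a + 1) hb).2.2 P
    · have h0 : b = 0 := by omega
      subst h0
      have h1 := (H 0 hb).2.2
      rw [Nat.zero_div, Nat.zero_mod] at h1
      exact SpE_wr n k q r a _ _ _ _ _ _ _ _ hk hk2 hq hr hrk hq2 hkn (M a) (by omega)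
          (H a ha).2.2 h1
  have sp : ∀ z, z + k < n → (z + 2 * k < n → s z ≠ s (z + k)) ∧
      (n ≤ z + 2 * k → e (z + k) = s (z + k) → s z ≠ s (z + k)) := by
    intro z hz
    have h1 := (H (z + k) hz).2.2
    have h2 := dm_pos n k q r (z + k) (by omega) hrk hn hz
    rw [Nat.add_div_right z (by omega), Nat.add_mod_right z k] at h1 h2
    refine SpE_sp n k q r z _ _ _ _ _ _ _ _ hk hk2 hq hr hrk hq2 hkn (M z) hz
      (H z (by omega)).2.2 h1 ?_
    clear hn h1
    intros
    omega
  refine gp_of_nat2 n k (by omega) (by omega) hkn s e (fun i hi => (H i hi).1)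
    (fun i hi => (H i hi).2.1) ?_ ?_ ?_ ?_ ?_
  · intro i j hi hj h
    rcases h with h | h
    · subst h
      exact (sp i (by omega)).1 (by omega)
    · have h1 := (H j (by omega)).2.2
      rw [Nat.div_eq_of_lt (show j < k by omega), Nat.mod_eq_of_lt (show j < k by omega)] at h1
      exact SpE_sw n k q r i _ _ _ _ _ j _ _ _ hk hk2 hq hr hrk hq2 hkn (M i) hi (by omega) h
        (H i hi).2.2 h1
  · intro a b ha hb h
    exact (pr a b ha hb h).1
  · intro z b hb hb' h
    subst h
    exact (sp z hb).2 (by omega)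
  · intro a b c ha hb hc h h' h1
    exact (pr b c hb hc h').2.2.1 ((pr a b ha hb h).2.1 h1)
  · intro a b c ha hb hc h h' h1 h2
    exact (pr b c hb hc h').2.2.2.1 (fun h3 => (pr a b ha hb h).2.2.2.2 h3 h1) h2

/-- explicit description of the colouring -/
def SpO (n k q r i x y s e f : ℕ) : Prop :=
    (x < q ∧ i + r + k < n ∧ y = 0 ∧ s = (x + 1) % 2 ∧ e = x % 2 ∧ f = 1) ∨
    (x < q ∧ i + r + k < n ∧ 0 < y ∧ y + 2 < k ∧ s = (x + y + 1) % 2 ∧ e = x % 2 ∧ f = 0) ∨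
    (x < q ∧ i + r + k < n ∧ y + 2 = k ∧ s = (x + 1) % 2 ∧ e = 2 ∧ f = 2) ∨
    (x < q ∧ i + r + k < n ∧ y + 1 = k ∧ s = x % 2 ∧ e = 2 ∧ f = 0) ∨
    (x = q ∧ y = 0 ∧ i + r + k = n ∧ 2 ≤ r ∧ s = 0 ∧ e = 1 ∧ f = 1) ∨
    (x = q ∧ 0 < y ∧ y < r ∧ i + r + k = n + y ∧ s = y % 2 ∧ e = 1 ∧ f = 0) ∨
    (x = q ∧ y = 0 ∧ i + r + k = n ∧ r = 1 ∧ s = 2 ∧ e = 2 ∧ f = 0) ∨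
    (i + k = n ∧ s = 0 ∧ e = 2 ∧ f = 1) ∨
    (n < i + k ∧ i + 1 < n ∧ s = 2 * ((i + k - n) % 2) ∧ e = 2 ∧ f = 0) ∨
    (i + 1 = n ∧ s = 1 ∧ e = 0 ∧ f = 2)

set_option maxHeartbeats 2000000 in
theorem SpO_in (n k q r i x y s e f x' y' s' e' f' : ℕ) (hk : 4 ≤ k) (hk2 : k % 2 = 0) (hq : 1 ≤ q) (hr : 1 ≤ r)
    (hrk : r ≤ k) (hq2 : q % 2 = 1) (hkn : 2 * k < n)
    (hy : y < k) (hi : i + 1 < n) (h : SpO n k q r i x y s e f)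
    (h' : SpO n k q r (i + 1) x' y' s' e' f')
    (P : x' = x ∧ y' = y + 1 ∧ y + 1 < k) :
    (e = s' ↔ e' = s') ∧ (e ≠ e' → 1 ≤ f') ∧ (1 ≤ f → e' = e) ∧
      (f ≠ 2 → e' = e → (s = e ↔ s' ≠ e)) ∧ (f' = 2 → e ≠ e') := by
  obtain ⟨rfl, rfl, P⟩ := P
  unfold SpO at h h'
  rcases h with h | h | h | h | h | h | h | h | h | h <;>
  rcases h' with h' | h' | h' | h' | h' | h' | h' | h' | h' | h' <;>
  omega

set_option maxHeartbeats 2000000 in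
theorem SpO_cr (n k q r i x y s e f x' y' s' e' f' : ℕ) (hk : 4 ≤ k) (hk2 : k % 2 = 0) (hq : 1 ≤ q) (hr : 1 ≤ r)
    (hrk : r ≤ k) (hq2 : q % 2 = 1) (hkn : 2 * k < n)
    (hy : y < k) (hi : i + 1 < n) (h : SpO n k q r i x y s e f)
    (h' : SpO n k q r (i + 1) x' y' s' e' f')
    (P : x' = x + 1 ∧ y' = 0 ∧ y + 1 = k) :
    (e = s' ↔ e' = s') ∧ (e ≠ e' → 1 ≤ f') ∧ (1 ≤ f → e' = e) ∧
      (f ≠ 2 → e' = e → (s = e ↔ s' ≠ e)) ∧ (f' = 2 → e ≠ e') := by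
  obtain ⟨rfl, rfl, P⟩ := P
  unfold SpO at h h'
  rcases h with h | h | h | h | h | h | h | h | h | h <;>
  rcases h' with h' | h' | h' | h' | h' | h' | h' | h' | h' | h' <;>
  omega

set_option maxHeartbeats 2000000 in
theorem SpO_wr (n k q r i x y s e f s' e' f' : ℕ) (hk : 4 ≤ k) (hk2 : k % 2 = 0) (hq : 1 ≤ q) (hr : 1 ≤ r)
    (hrk : r ≤ k) (hq2 : q % 2 = 1) (hkn : 2 * k < n)
    (hy : y < k) (hi : i + 1 = n) (h : SpO n k q r i x y s e f)
    (h' : SpO n k q r 0 0 0 s' e' f') :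
    (e = s' ↔ e' = s') ∧ (e ≠ e' → 1 ≤ f') ∧ (1 ≤ f → e' = e) ∧
      (f ≠ 2 → e' = e → (s = e ↔ s' ≠ e)) ∧ (f' = 2 → e ≠ e') := by
  unfold SpO at h h'
  have h1 : s' = 1 ∧ e' = 0 ∧ f' = 1 := by
    rcases h' with h' | h' | h' | h' | h' | h' | h' | h' | h' | h' <;> omega
  have h2 : s = 1 ∧ e = 0 ∧ f = 2 := by
    rcases h with h | h | h | h | h | h | h | h | h | h <;> omega
  clear h h'
  omega

set_option maxHeartbeats 2000000 in
theorem SpO_sp (n k q r i x y s e f s' e' f' : ℕ) (hk : 4 ≤ k) (hk2 : k % 2 = 0) (hq : 1 ≤ q) (hr : 1 ≤ r)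
    (hrk : r ≤ k) (hq2 : q % 2 = 1) (hkn : 2 * k < n)
    (hy : y < k) (hi : i + k < n) (h : SpO n k q r i x y s e f)
    (h' : SpO n k q r (i + k) (x + 1) y s' e' f')
    (hx : n ≤ i + 2 * k → r % 2 = 1 → i + 2 * k = n → x + 1 = q ∧ y = r) :
    (i + 2 * k < n → s ≠ s') ∧ (n ≤ i + 2 * k → e' = s' → s ≠ s') := by
  unfold SpO at h h'
  rcases h with h | h | h | h | h | h | h | h | h | h <;>
  rcases h' with h' | h' | h' | h' | h' | h' | h' | h' | h' | h' <;>
  omega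

set_option maxHeartbeats 2000000 in
theorem SpO_sw (n k q r i x y s e f j s' e' f' : ℕ) (hk : 4 ≤ k) (hk2 : k % 2 = 0) (hq : 1 ≤ q) (hr : 1 ≤ r)
    (hrk : r ≤ k) (hq2 : q % 2 = 1) (hkn : 2 * k < n)
    (hy : y < k) (hi : i < n) (hj : j < k) (hij : j + n = i + k) (h : SpO n k q r i x y s e f)
    (h' : SpO n k q r j 0 j s' e' f') : s ≠ s' := by
  unfold SpO at h h'
  rcases h with h | h | h | h | h | h | h | h | h | h <;>
  rcases h' with h' | h' | h' | h' | h' | h' | h' | h' | h' | h' <;>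
  omega

set_option maxHeartbeats 2000000 in
theorem SpO_ex (n k q r i : ℕ) (hk : 4 ≤ k) (hk2 : k % 2 = 0) (hq : 1 ≤ q) (hr : 1 ≤ r)
    (hrk : r ≤ k) (hq2 : q % 2 = 1) (hkn : 2 * k < n) (hn : n = k + q * k + r) (hi : i < n) :
    ∃ s e f, s < 3 ∧ e < 3 ∧ SpO n k q r i (i / k) (i % k) s e f := by
  have h := dm_pos n k q r i (by omega) hrk hn hi
  clear hn
  generalize i / k = x at *
  generalize i % k = y at *
  obtain ⟨hy, h⟩ := h
  unfold SpO
  by_cases c1 : i + k < n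
  · by_cases c2 : x < q
    · by_cases c3 : y = 0
      · exact ⟨(x + 1) % 2, x % 2, 1, by omega, by omega, Or.inl
          ⟨c2, by omega, c3, rfl, rfl, rfl⟩⟩
      · by_cases c4 : y + 2 < k
        · exact ⟨(x + y + 1) % 2, x % 2, 0, by omega, by omega, Or.inr (Or.inl
            ⟨c2, by omega, by omega, c4, rfl, rfl, rfl⟩)⟩
        · by_cases c5 : y + 2 = k
          · exact ⟨(x + 1) % 2, 2, 2, by omega, by omega, Or.inr (Or.inr (Or.inl
              ⟨c2, by omega, c5, rfl, rfl, rfl⟩))⟩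
          · exact ⟨x % 2, 2, 0, by omega, by omega, Or.inr (Or.inr (Or.inr (Or.inl
              ⟨c2, by omega, by omega, rfl, rfl, rfl⟩)))⟩
    · have h1 : x = q ∧ y < r ∧ i + r + k = n + y := by omega
      by_cases c3 : y = 0
      · by_cases c4 : 2 ≤ r
        · exact ⟨0, 1, 1, by omega, by omega,
            Or.inr (Or.inr (Or.inr (Or.inr (Or.inl ⟨h1.1, c3, by omega, c4, rfl, rfl, rfl⟩))))⟩
        · exact ⟨2, 2, 0, by omega, by omega,
            Or.inr (Or.inr (Or.inr (Or.inr (Or.inr (Or.inr (Or.inl ⟨h1.1, c3, by omega, by omega, rfl, rfl, rfl⟩))))))⟩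
      · exact ⟨y % 2, 1, 0, by omega, by omega,
          Or.inr (Or.inr (Or.inr (Or.inr (Or.inr (Or.inl ⟨h1.1, by omega, h1.2.1, h1.2.2, rfl, rfl, rfl⟩)))))⟩
  · by_cases c2 : i + k = n
    · exact ⟨0, 2, 1, by omega, by omega, Or.inr (Or.inr (Or.inr (Or.inr (Or.inr (Or.inr (Or.inr (Or.inl ⟨c2, rfl, rfl, rfl⟩)))))))⟩
    · by_cases c4 : i + 1 < n
      · exact ⟨2 * ((i + k - n) % 2), 2, 0, by omega, by omega,
          Or.inr (Or.inr (Or.inr (Or.inr (Or.inr (Or.inr (Or.inr (Or.inr (Or.inl ⟨by omega, c4, rfl, rfl, rfl⟩))))))))⟩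
      · exact ⟨1, 0, 2, by omega, by omega, Or.inr (Or.inr (Or.inr (Or.inr (Or.inr (Or.inr (Or.inr (Or.inr (Or.inr (⟨by omega, rfl, rfl, rfl⟩)))))))))⟩

set_option maxHeartbeats 2000000 in
theorem gp_SpO (n k q r : ℕ) (hk : 4 ≤ k) (hk2 : k % 2 = 0) (hq : 1 ≤ q) (hr : 1 ≤ r)
    (hrk : r ≤ k) (hq2 : q % 2 = 1) (hkn : 2 * k < n) (hn : n = k + q * k + r) :
    HasLIEC (genPetersen n k) 3 := by
  have key : ∀ i : ℕ, ∃ s e f, i < n → (s < 3 ∧ e < 3 ∧ SpO n k q r i (i / k) (i % k) s e f) := by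
    intro i
    by_cases hi : i < n
    · obtain ⟨s, e, f, h⟩ := SpO_ex n k q r i hk hk2 hq hr hrk hq2 hkn hn hi
      exact ⟨s, e, f, fun _ => h⟩
    · exact ⟨0, 0, 0, fun h => absurd h hi⟩
  choose s e f H using key
  have M : ∀ i, i % k < k := fun i => Nat.mod_lt i (by omega)
  have pr : ∀ a b, a < n → b < n → (b = a + 1 ∨ b + n = a + 1) →
      (e a = s b ↔ e b = s b) ∧ (e a ≠ e b → 1 ≤ f b) ∧ (1 ≤ f a → e b = e a) ∧
      (f a ≠ 2 → e b = e a → (s a = e a ↔ s b ≠ e a)) ∧ (f b = 2 → e a ≠ e b) := by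
    intro a b ha hb h
    rcases h with h | h
    · subst h
      rcases dm_step k a (by omega) with P | P
      · exact SpO_in n k q r a _ _ _ _ _ _ _ _ _ _ hk hk2 hq hr hrk hq2 hkn (M a) hb
          (H a ha).2.2 (H (a + 1) hb).2.2 P
      · exact SpO_cr n k q r a _ _ _ _ _ _ _ _ _ _ hk hk2 hq hr hrk hq2 hkn (M a) hb
          (H a ha).2.2 (H (a + 1) hb).2.2 P
    · have h0 : b = 0 := by omega
      subst h0
      have h1 := (H 0 hb).2.2
      rw [Nat.zero_div, Nat.zero_mod] at h1
      exact SpO_wr n k q r a _ _ _ _ _ _ _ _ hk hk2 hq hr hrk hq2 hkn (M a) (by omega)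
          (H a ha).2.2 h1
  have sp : ∀ z, z + k < n → (z + 2 * k < n → s z ≠ s (z + k)) ∧
      (n ≤ z + 2 * k → e (z + k) = s (z + k) → s z ≠ s (z + k)) := by
    intro z hz
    have h1 := (H (z + k) hz).2.2
    have h2 := dm_pos n k q r (z + k) (by omega) hrk hn hz
    rw [Nat.add_div_right z (by omega), Nat.add_mod_right z k] at h1 h2
    refine SpO_sp n k q r z _ _ _ _ _ _ _ _ hk hk2 hq hr hrk hq2 hkn (M z) hz
      (H z (by omega)).2.2 h1 ?_
    clear hn h1
    intros
    omega
  refine gp_of_nat2 n k (by omega) (by omega) hkn s e (fun i hi => (H i hi).1)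
    (fun i hi => (H i hi).2.1) ?_ ?_ ?_ ?_ ?_
  · intro i j hi hj h
    rcases h with h | h
    · subst h
      exact (sp i (by omega)).1 (by omega)
    · have h1 := (H j (by omega)).2.2
      rw [Nat.div_eq_of_lt (show j < k by omega), Nat.mod_eq_of_lt (show j < k by omega)] at h1
      exact SpO_sw n k q r i _ _ _ _ _ j _ _ _ hk hk2 hq hr hrk hq2 hkn (M i) hi (by omega) h
        (H i hi).2.2 h1
  · intro a b ha hb h
    exact (pr a b ha hb h).1
  · intro z b hb hb' h
    subst h
    exact (sp z hb).2 (by omega)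
  · intro a b c ha hb hc h h' h1
    exact (pr b c hb hc h').2.2.1 ((pr a b ha hb h).2.1 h1)
  · intro a b c ha hb hc h h' h1 h2
    exact (pr b c hb hc h').2.2.2.1 (fun h3 => (pr a b ha hb h).2.2.2.2 h3 h1) h2

/-- Every generalized Petersen graph `P(n,k)` (with `n ≥ 3` and `1 ≤ k < n/2`) admits a
locally irregular edge-coloring with at most 3 colors. -/
theorem genPetersen_LIEC (n k : ℕ) (hn : 3 ≤ n) (hk : 1 ≤ k) (hkn : 2 * k < n) :
    HasLIEC (genPetersen n k) 3 := by
  rcases Nat.mod_two_eq_zero_or_one k with h1 | h1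
  · by_cases h4 : 4 ≤ k
    · have hd := Nat.div_add_mod (n - k - 1) k
      have hm := Nat.mod_lt (n - k - 1) (show 0 < k by omega)
      have hq : 1 ≤ (n - k - 1) / k := (Nat.one_le_div_iff (by omega)).2 (by omega)
      rw [Nat.mul_comm] at hd
      have hn' : n = k + (n - k - 1) / k * k + ((n - k - 1) % k + 1) := by omega
      rcases Nat.mod_two_eq_zero_or_one ((n - k - 1) / k) with h2 | h2
      · exact gp_SpE n k _ _ h4 h1 hq (Nat.le_add_left 1 _) hm h2 hkn hn'
      · exact gp_SpO n k _ _ h4 h1 hq (Nat.le_add_left 1 _) hm h2 hkn hn'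
    · have h2 : k = 2 := by omega
      subst h2
      have h3 : n % 3 = 0 ∨ n % 3 = 2 ∨ n % 3 = 1 := by omega
      rcases h3 with h3 | h3 | h3
      · exact gp_two_0 n (by omega) (by omega)
      · exact gp_two_2 n (by omega) (by omega)
      · exact gp_two_4 n (by omega) (by omega)
  · rcases Nat.mod_two_eq_zero_or_one n with h2 | h2
    · exact gp_odd_even n k hn hk hkn h1 h2
    · by_cases h3 : 3 ≤ k
      · exact gp_odd_odd n k hn h3 hkn h1 h2
      · have h4 : k = 1 := by omega
        subst h4
        by_cases h5 : 5 ≤ n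
        · exact gp_one_odd n h5 h2
        · have h6 : n = 3 := by omega
          subst h6
          exact gp_3_1
end
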